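/- There exists ε₀ > 0 such that for every 0 < ε ≤ ε₀ there exists η₀ > 0 such that for every 0 < η ≤ η₀ the restriction of f to the Milnor tube N(ε,η) = {x ∈ B̄(0,ε) : ‖f(x)‖ = η} is a locally trivial fibration N(ε,η) → {w ∈ ℂ : ‖w‖ = η} (the Milnor–Lê fibration). -/

import Mathlib

/-!
The proof lifts the rotation of the circle `|w| = η` to a flow on the tube. For this one needs that,
for small `ε` and `η ≪ ε`, the function `f` has no critical points on the tube and its fibres meet
the spheres of radius close to `ε` transversally. In terms of the condition `df = μ ⟪x, ·⟫` for a
scalar `μ` (criticality of `f` on a sphere), both facts follow from `radial_estimate`: near the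
origin, at a point with `f ≠ 0` where `df = μ ⟪x, ·⟫`, one has `μ ≠ 0` and `|f| ≥ (‖x‖²)^N` for a
fixed `N`. No stratification of `f = 0` and no desingularization is used.

The estimate is a curve selection argument, carried out formally. A counterexample sequence `x_k → 0`
is evaluated along a nonprincipal ultrafilter, which turns the ring of convergent power series in
`(x, y)` (with `y` standing for the conjugate of `x`), extended by finitely many auxiliary bounded
sequences, into a subring of the field of germs. Its kernel is a prime ideal, and the ring is
Noetherian by Weierstrass-type division (`isNoetherianRing_convSeries`). A prime ideal of a
Noetherian `ℂ`-algebra contained in the ideal of a point has a formal arc through that point in its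
zero set, avoiding a given hypersurface (`exists_formal_arc`): cut down to dimension one, take a
dominating valuation ring, show by the Krull–Akizuki argument that it is discrete with residue field
`ℂ`, and complete. So the sequence can be replaced by a formal arc that satisfies the same analytic
equations (`exists_arc_of_seq`). Set `κ = μ ‖x‖² / f`.

* If `κ → 0`, the chain rule gives `t (d/dt) log f = κ · (something regular)` along the arc, so `f` has
  order `0`, contradicting `f(0) = 0` (`no_seq_of_tendsto_zero`). This covers the case `μ = 0`.
* If `a = 1 / κ` stays bounded with limit `a₀`, then `ord ‖x‖² = a₀ ord f + conj a₀ ord (conj f)`,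
  which is impossible when `|f|` is smaller than every power of `‖x‖²` (`no_seq_of_bounded`).

That `f` is the sum of a convergent power series is Osgood's lemma (`osgood`), proved by iterated
division by the coordinates. Given the transversality, `exists_lift_field` writes down a Lipschitz
vector field with `df(V) = i f` on the tube and tangent to the spheres near the boundary;
`curve_in_tube` shows that its flow preserves the tube and rotates `f`, and `isLocTrivFib_of_flow`
reads off local trivializations over arcs of the circle.
-/

/-- `p : Z → B` is a locally trivial fibration (with some fibre `F`). -/
def IsLocTrivFib {Z B : Type} [TopologicalSpace Z] [TopologicalSpace B] (p : Z → B) : Prop :=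
  ∃ (F : Type) (_ : TopologicalSpace F), Continuous p ∧
    ∀ b : B, ∃ W : Set B, IsOpen W ∧ b ∈ W ∧
      ∃ e : (p ⁻¹' W) ≃ₜ (W × F), ∀ z : (p ⁻¹' W), ((e z).1 : B) = p (z : Z)

section auxiliary

open scoped ENNReal NNReal ComplexConjugate
open Filter

/-! ### Formal arcs in Noetherian local rings -/

open PowerSeries in
/-- A discrete valuation ring with coefficient field `ℂ` embeds into `ℂ⟦X⟧`. -/
lemma exists_powerSeries_hom {O : Type*} [CommRing O] [IsDomain O] [IsLocalRing O]
    (ι : ℂ →+* O) (hres : ∀ v : O, ∃ c : ℂ, v - ι c ∈ IsLocalRing.maximalIdeal O)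
    (s : O) (hs0 : s ≠ 0) (hs : IsLocalRing.maximalIdeal O = Ideal.span {s})
    (hinf : ∀ v : O, (∀ k : ℕ, s ^ k ∣ v) → v = 0) :
    ∃ ψ : O →+* ℂ⟦X⟧, Function.Injective ψ ∧ (∀ c, ψ (ι c) = C c) ∧
      ∀ v ∈ IsLocalRing.maximalIdeal O, constantCoeff (ψ v) = 0 := by
  classical
  have hmem : ∀ v : O, v ∈ IsLocalRing.maximalIdeal O ↔ s ∣ v := by
    intro v; rw [hs, Ideal.mem_span_singleton]
  have huniq : ∀ c : ℂ, ι c ∈ IsLocalRing.maximalIdeal O → c = 0 := by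
    intro c hc
    by_contra h
    exact (IsLocalRing.mem_maximalIdeal _).1 hc ((isUnit_iff_ne_zero.2 h).map ι)
  choose res hres using hres
  have hres_eq : ∀ v c, v - ι c ∈ IsLocalRing.maximalIdeal O → res v = c := by
    intro v c h
    have := Ideal.sub_mem _ h (hres v)
    have h2 : ι (res v - c) ∈ IsLocalRing.maximalIdeal O := by
      rw [map_sub]; convert this using 1; ring
    exact sub_eq_zero.1 (huniq _ h2)
  have hres_add : ∀ v w, res (v + w) = res v + res w := by
    intro v w
    apply hres_eq
    have := Ideal.add_mem _ (hres v) (hres w)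
    rw [map_add]; convert this using 1; ring
  have hres_mul : ∀ v w, res (v * w) = res v * res w := by
    intro v w
    apply hres_eq
    have := Ideal.add_mem _ (Ideal.mul_mem_right w _ (hres v)) (Ideal.mul_mem_left _ (ι (res v)) (hres w))
    rw [map_mul]; convert this using 1; ring
  have hres_ι : ∀ c, res (ι c) = c := fun c => hres_eq _ _ (by simp)
  have hdiv : ∀ v, ∃ w, v = ι (res v) + s * w := by
    intro v
    obtain ⟨w, hw⟩ := (hmem _).1 (hres v)
    exact ⟨w, by rw [← hw]; ring⟩
  choose dv hdv using hdiv
  have hdv_eq : ∀ v w, v = ι (res v) + s * w → dv v = w := by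
    intro v w h
    have h1 := hdv v
    have : s * dv v = s * w := by
      have := h1.symm.trans h
      exact add_left_cancel this
    exact mul_left_cancel₀ hs0 this
  have hdv_add : ∀ v w, dv (v + w) = dv v + dv w := by
    intro v w
    apply hdv_eq
    rw [hres_add, map_add]
    conv_lhs => rw [hdv v, hdv w]
    ring
  have hdv_mul : ∀ v w, dv (v * w) = dv v * w + ι (res v) * dv w := by
    intro v w
    apply hdv_eq
    rw [hres_mul, map_mul]
    conv_lhs => rw [hdv v]
    have := hdv w
    linear_combination (ι (res v)) * this
  have hdv_ι : ∀ c, dv (ι c) = 0 := by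
    intro c; apply hdv_eq; simp [hres_ι]
  let ψ : O → ℂ⟦X⟧ := fun v => PowerSeries.mk fun k => res (dv^[k] v)
  have hψ : ∀ v k, coeff k (ψ v) = res (dv^[k] v) := fun v k => by simp [ψ]
  have hψS : ∀ v k, coeff (k+1) (ψ v) = coeff k (ψ (dv v)) := by
    intro v k; rw [hψ, hψ, Function.iterate_succ_apply]
  have hψ0 : ∀ v, coeff 0 (ψ v) = res v := by intro v; rw [hψ]; rfl
  have hψrec : ∀ v, ψ v = C (res v) + X * ψ (dv v) := by
    intro v
    ext k
    cases k with
    | zero => rw [hψ0]; simp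
    | succ k => rw [hψS, map_add, coeff_succ_X_mul]; simp
  have hres0 : res 0 = 0 := hres_eq _ _ (by simp)
  have hψadd : ∀ v w, ψ (v + w) = ψ v + ψ w := by
    intro v w
    ext k
    induction k generalizing v w with
    | zero => rw [map_add, hψ0, hψ0, hψ0, hres_add]
    | succ k ih => rw [map_add, hψS, hψS, hψS, hdv_add, ih, map_add]
  have hψι : ∀ c, ψ (ι c) = C c := by
    intro c
    rw [hψrec, hres_ι, hdv_ι]
    have : ψ 0 = 0 := by
      have := hψadd 0 0
      simpa using this
    rw [this]; simp
  have hψmul : ∀ v w, ψ (v * w) = ψ v * ψ w := by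
    have key : ∀ k, ∀ v w, coeff k (ψ (v * w)) = coeff k (ψ v * ψ w) := by
      intro k
      induction k with
      | zero => intro v w; rw [hψ0, hres_mul, ← hψ0, ← hψ0]; simp
      | succ k ih =>
        intro v w
        rw [hψS, hdv_mul, hψadd, map_add, ih, ih, hψι]
        conv_rhs => rw [hψrec v, add_mul, map_add, mul_assoc, coeff_succ_X_mul, coeff_C_mul, hψS]
        rw [coeff_C_mul]; ring
    intro v w; ext k; exact key k v w
  refine ⟨{ toFun := ψ, map_one' := ?_, map_mul' := hψmul, map_zero' := ?_, map_add' := hψadd },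
    ?_, hψι, ?_⟩
  · have := hψι 1; simpa using this
  · have := hψι 0; simpa using this
  · rw [injective_iff_map_eq_zero]
    intro v hv
    change ψ v = 0 at hv
    apply hinf
    intro k
    have : ∀ k, ∀ v, ψ v = 0 → s ^ k ∣ v := by
      intro k
      induction k with
      | zero => intro v _; simp
      | succ k ih =>
        intro v hv
        have h0 : res v = 0 := by rw [← hψ0, hv]; simp
        have h1 : ψ (dv v) = 0 := by
          ext k; rw [← hψS, hv]; simp
        have h2 := hdv v
        rw [h0, map_zero, zero_add] at h2
        rw [h2, pow_succ']
        exact mul_dvd_mul_left _ (ih _ h1)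
    exact this k v hv
  · intro v hv
    change constantCoeff (ψ v) = 0
    rw [← coeff_zero_eq_constantCoeff_apply, hψ0]
    exact hres_eq _ _ (by simpa using hv)

/-- Krull–Akizuki estimate: for a nonzero `h` and an ideal `I` such that the quotients are finite
dimensional, `dim (I / h I) = dim (A / h A)`; hence `d + 1` elements of `I` satisfy a linear
relation modulo `h I`. -/
lemma exists_relation_ideal {A : Type*} [CommRing A] [IsDomain A] [Algebra ℂ A]
    (h : A) (h0 : h ≠ 0) (I : Ideal A)
    [FiniteDimensional ℂ (A ⧸ (Ideal.span {h} * I))]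
    (b : Fin (Module.finrank ℂ (A ⧸ Ideal.span {h}) + 1) → A) (hb : ∀ i, b i ∈ I) :
    ∃ c : Fin (Module.finrank ℂ (A ⧸ Ideal.span {h}) + 1) → ℂ, c ≠ 0 ∧
      ∑ i, c i • b i ∈ Ideal.span {h} * I := by
  set hI := Ideal.span {h} * I with hhI
  have le1 : hI ≤ I := Ideal.mul_le_right
  have le2 : hI ≤ Ideal.span {h} := Ideal.mul_le_left
  let p1 : (A ⧸ hI) →ₐ[ℂ] (A ⧸ I) := Ideal.Quotient.factorₐ ℂ le1
  let p2 : (A ⧸ hI) →ₐ[ℂ] (A ⧸ Ideal.span {h}) := Ideal.Quotient.factorₐ ℂ le2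
  have s1 : Function.Surjective p1 := Ideal.Quotient.factor_surjective le1
  have s2 : Function.Surjective p2 := Ideal.Quotient.factor_surjective le2
  let m0 : A →ₗ[ℂ] (A ⧸ hI) := (Ideal.Quotient.mkₐ ℂ hI).toLinearMap ∘ₗ LinearMap.mulLeft ℂ h
  let m : (A ⧸ I) →ₗ[ℂ] (A ⧸ hI) := (I.restrictScalars ℂ).liftQ m0 (by
    intro x hx
    have hx' : x ∈ I := hx
    change Ideal.Quotient.mk hI (h * x) = 0
    rw [Ideal.Quotient.eq_zero_iff_mem]
    exact Ideal.mul_mem_mul (Ideal.mem_span_singleton_self h) hx')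
  have hm : ∀ x : A, m (Ideal.Quotient.mk I x) = Ideal.Quotient.mk hI (h * x) := fun x => rfl
  have minj : Function.Injective m := by
    rw [← LinearMap.ker_eq_bot, LinearMap.ker_eq_bot']
    intro x hx
    obtain ⟨x, rfl⟩ := Ideal.Quotient.mk_surjective x
    rw [hm, Ideal.Quotient.eq_zero_iff_mem, hhI, Ideal.mem_span_singleton_mul] at hx
    obtain ⟨z, hz, hz2⟩ := hx
    rw [Ideal.Quotient.eq_zero_iff_mem, ← mul_left_cancel₀ h0 hz2]
    exact hz
  have hrange : LinearMap.range m = LinearMap.ker p2.toLinearMap := by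
    ext y
    obtain ⟨y, rfl⟩ := Ideal.Quotient.mk_surjective y
    rw [LinearMap.mem_ker]
    change _ ↔ Ideal.Quotient.mk _ y = 0
    rw [Ideal.Quotient.eq_zero_iff_mem, Ideal.mem_span_singleton]
    constructor
    · rintro ⟨x, hx⟩
      obtain ⟨x, rfl⟩ := Ideal.Quotient.mk_surjective x
      rw [hm, Ideal.Quotient.eq] at hx
      have := le2 hx
      rw [Ideal.mem_span_singleton] at this
      have h3 := dvd_sub (dvd_mul_right h x) this
      simpa using h3
    · rintro ⟨x, rfl⟩
      exact ⟨Ideal.Quotient.mk I x, hm x⟩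
  have e1 := LinearMap.finrank_range_add_finrank_ker p1.toLinearMap
  have e2 := LinearMap.finrank_range_add_finrank_ker p2.toLinearMap
  have e3 := LinearMap.finrank_range_of_inj minj
  rw [hrange] at e3
  rw [LinearMap.range_eq_top.2 s1, finrank_top] at e1
  rw [LinearMap.range_eq_top.2 s2, finrank_top] at e2
  have hker : Module.finrank ℂ (LinearMap.ker p1.toLinearMap) =
      Module.finrank ℂ (A ⧸ Ideal.span {h}) := by omega
  let b' : Fin (Module.finrank ℂ (A ⧸ Ideal.span {h}) + 1) → LinearMap.ker p1.toLinearMap :=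
    fun i => ⟨Ideal.Quotient.mk hI (b i), by
      rw [LinearMap.mem_ker]
      change Ideal.Quotient.mk I (b i) = 0
      rw [Ideal.Quotient.eq_zero_iff_mem]; exact hb i⟩
  have hdep : ¬ LinearIndependent ℂ b' := by
    intro hli
    have := hli.fintype_card_le_finrank
    rw [hker] at this
    simp at this
  rw [Fintype.not_linearIndependent_iff] at hdep
  obtain ⟨c, hc, i, hi⟩ := hdep
  refine ⟨c, fun h => hi (by rw [h]; rfl), ?_⟩
  have := congrArg Subtype.val hc
  rw [← Ideal.Quotient.eq_zero_iff_mem]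
  rw [map_sum]
  simp only [AddSubmonoidClass.coe_finsetSum, Submodule.coe_smul, ZeroMemClass.coe_zero, b'] at this
  rw [← this]
  rfl

/-- In a Noetherian local ring with residue field `ℂ`, every quotient by an ideal containing a
power of the maximal ideal is finite dimensional. -/
lemma finiteDimensional_quotient_of_pow_le {A : Type*} [CommRing A] [IsLocalRing A]
    [IsNoetherianRing A] [Algebra ℂ A]
    (hres : ∀ v : A, ∃ c : ℂ, v - algebraMap ℂ A c ∈ IsLocalRing.maximalIdeal A)
    (k : ℕ) (I : Ideal A) (hI : IsLocalRing.maximalIdeal A ^ k ≤ I) :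
    FiniteDimensional ℂ (A ⧸ I) := by
  have key : ∀ k : ℕ, ∃ W : Submodule ℂ A, W.FG ∧
      ∀ x : A, ∃ w ∈ W, x - w ∈ IsLocalRing.maximalIdeal A ^ k := by
    intro k
    induction k with
    | zero => exact ⟨⊥, Submodule.fg_bot, fun x => ⟨0, by simp, by simp⟩⟩
    | succ k ih =>
      obtain ⟨W, hW, hx⟩ := ih
      obtain ⟨S, hS⟩ := (isNoetherianRing_iff_ideal_fg A).1 inferInstance
        (IsLocalRing.maximalIdeal A ^ k)
      refine ⟨W ⊔ Submodule.span ℂ (S : Set A), hW.sup ⟨S, rfl⟩, fun x => ?_⟩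
      obtain ⟨w, hw, hxw⟩ := hx x
      have key2 : ∀ y ∈ IsLocalRing.maximalIdeal A ^ k, ∃ z ∈ Submodule.span ℂ (S : Set A),
          y - z ∈ IsLocalRing.maximalIdeal A ^ (k + 1) := by
        intro y hy
        rw [← hS] at hy
        induction hy using Submodule.span_induction with
        | mem y hy => exact ⟨y, Submodule.subset_span hy, by simp⟩
        | zero => exact ⟨0, by simp, by simp⟩
        | add a b _ _ ha hb =>
          obtain ⟨z, hz, h1⟩ := ha
          obtain ⟨z', hz', h2⟩ := hb
          refine ⟨z + z', add_mem hz hz', ?_⟩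
          convert add_mem h1 h2 using 1; ring
        | smul a y hy ih =>
          obtain ⟨z, hz, h1⟩ := ih
          obtain ⟨c, hc⟩ := hres a
          refine ⟨c • z, Submodule.smul_mem _ _ hz, ?_⟩
          have hy' : y ∈ IsLocalRing.maximalIdeal A ^ k := by rw [← hS]; exact hy
          have h2 : (a - algebraMap ℂ A c) * y ∈ IsLocalRing.maximalIdeal A ^ (k + 1) := by
            rw [pow_succ']; exact Ideal.mul_mem_mul hc hy'
          have h3 := add_mem h2 (Ideal.mul_mem_left _ (algebraMap ℂ A c) h1)
          convert h3 using 1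
          rw [Algebra.smul_def c z, smul_eq_mul]; ring
      obtain ⟨z, hz, h1⟩ := key2 _ hxw
      refine ⟨w + z, add_mem (Submodule.mem_sup_left hw) (Submodule.mem_sup_right hz), ?_⟩
      convert h1 using 1; ring
  obtain ⟨W, hW, hx⟩ := key k
  have hmap := hW.map (Ideal.Quotient.mkₐ ℂ I).toLinearMap
  suffices hs : (⊤ : Submodule ℂ (A ⧸ I)) = Submodule.map (Ideal.Quotient.mkₐ ℂ I).toLinearMap W from
    ⟨hs ▸ hmap⟩
  refine le_antisymm ?_ le_top
  intro y _
  obtain ⟨y, rfl⟩ := Ideal.Quotient.mk_surjective y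
  obtain ⟨w, hw, h1⟩ := hx y
  refine ⟨w, hw, ?_⟩
  change Ideal.Quotient.mk I w = _
  rw [eq_comm, Ideal.Quotient.eq]
  exact hI h1

/-- If all nonzero primes of a Noetherian local domain contain a common nonzero element of the
maximal ideal, then the maximal ideal is the only nonzero prime. -/
lemma prime_eq_maximalIdeal {A : Type*} [CommRing A] [IsDomain A] [IsLocalRing A]
    [IsNoetherianRing A] (h : A) (h0 : h ≠ 0) (hm : h ∈ IsLocalRing.maximalIdeal A)
    (hP : ∀ P : Ideal A, P.IsPrime → P ≠ ⊥ → h ∈ P) (P : Ideal A) [P.IsPrime] (hP0 : P ≠ ⊥) :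
    P = IsLocalRing.maximalIdeal A := by
  have hfin := Ideal.finite_minimalPrimes_of_isNoetherianRing A (Ideal.span {h})
  have hsub : ((IsLocalRing.maximalIdeal A : Ideal A) : Set A) ⊆
      ⋃ q ∈ (hfin.toFinset : Set (Ideal A)), (q : Set A) := by
    intro x hx
    have hne : Ideal.span {x} ≠ ⊤ := by
      intro h
      rw [Ideal.span_singleton_eq_top] at h
      exact (IsLocalRing.mem_maximalIdeal _).1 hx h
    obtain ⟨p', hp'⟩ := Ideal.nonempty_minimalPrimes hne
    have hpr : p'.IsPrime := hp'.1.1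
    have hxp : x ∈ p' := hp'.1.2 (Ideal.mem_span_singleton_self x)
    have hht := Ideal.height_le_one_of_isPrincipal_of_mem_minimalPrimes (Ideal.span {x}) p' hp'
    by_cases hpb : p' = ⊥
    · subst hpb
      have hx0 : x = 0 := by simpa using hxp
      have hne' : Ideal.span {h} ≠ ⊤ := by
        intro h'
        rw [Ideal.span_singleton_eq_top] at h'
        exact (IsLocalRing.mem_maximalIdeal _).1 hm h'
      obtain ⟨q, hq⟩ := Ideal.nonempty_minimalPrimes hne'
      simp only [Set.mem_iUnion]
      exact ⟨q, by simpa using hq, by rw [hx0]; exact q.zero_mem⟩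
    · have hh := hP p' hpr hpb
      obtain ⟨q, hq, hqp⟩ := Ideal.exists_minimalPrimes_le
        (I := Ideal.span {h}) (J := p') (by rwa [Ideal.span_singleton_le_iff_mem])
      have hqpr : q.IsPrime := hq.1.1
      have hhq : h ∈ q := hq.1.2 (Ideal.mem_span_singleton_self h)
      have : q = p' := by
        by_contra hne
        have hlt : q < p' := lt_of_le_of_ne hqp hne
        have hbq : (⊥ : Ideal A) < q := by
          rw [bot_lt_iff_ne_bot]; rintro rfl; exact h0 (by simpa using hhq)
        have h1 := Ideal.height_add_one_le_of_lt_of_isPrime hbq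
        have h2 := Ideal.height_add_one_le_of_lt_of_isPrime hlt
        rw [Ideal.height_bot, zero_add] at h1
        have h3 : (1 : ℕ∞) + 1 ≤ 1 := (add_le_add_left h1 1).trans (h2.trans hht)
        exact absurd h3 (by decide)
      subst this
      simp only [Set.mem_iUnion]
      exact ⟨q, by simpa using hq, hxp⟩
  rw [Ideal.subset_union_prime ⊤ ⊤ (by
    intro i hi _ _
    have : i ∈ (Ideal.span {h}).minimalPrimes := by simpa using hi
    exact this.1.1)] at hsub
  obtain ⟨q, hq, hmq⟩ := hsub
  have hq' : q ∈ (Ideal.span {h}).minimalPrimes := by simpa using hq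
  have : h ∈ P := hP P inferInstance hP0
  have hPm : P ≤ IsLocalRing.maximalIdeal A := IsLocalRing.le_maximalIdeal (Ideal.IsPrime.ne_top inferInstance)
  have := hq'.2 ⟨inferInstance, by rwa [Ideal.span_singleton_le_iff_mem]⟩ (hPm.trans hmq)
  exact le_antisymm hPm (hmq.trans this)

/-- Krull–Akizuki: a valuation ring `V` dominating a one-dimensional Noetherian local domain `A`
with residue field `ℂ` and contained in its fraction field `A[1/h]` embeds into `ℂ⟦X⟧`. -/
lemma arc_valuationRing {A V : Type*} [CommRing A] [IsDomain A] [IsLocalRing A]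
    [IsNoetherianRing A] [Algebra ℂ A] [CommRing V] [IsDomain V] [ValuationRing V] [Algebra A V]
    [Algebra ℂ V] [IsScalarTower ℂ A V] [IsLocalHom (algebraMap A V)]
    (hinj : Function.Injective (algebraMap A V))
    (hres : ∀ v : A, ∃ c : ℂ, v - algebraMap ℂ A c ∈ IsLocalRing.maximalIdeal A)
    (h : A) (h0 : h ≠ 0) (hm : h ∈ IsLocalRing.maximalIdeal A)
    (hpow : ∀ x : A, x ≠ 0 → ∃ e : ℕ, h ^ e ∈ Ideal.span {x})
    (k : ℕ) (hk : IsLocalRing.maximalIdeal A ^ k ≤ Ideal.span {h})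
    (hV : ∀ v : V, ∃ (e : ℕ) (a : A), algebraMap A V (h ^ e) * v = algebraMap A V a) :
    ∃ ψ : V →+* PowerSeries ℂ, Function.Injective ψ ∧
      (∀ c, ψ (algebraMap ℂ V c) = PowerSeries.C c) ∧
      ∀ v ∈ IsLocalRing.maximalIdeal V, PowerSeries.constantCoeff (ψ v) = 0 := by
  classical
  set g := algebraMap A V h with hg
  have g0 : g ≠ 0 := by rw [hg, Ne, map_eq_zero_iff _ hinj]; exact h0
  have hgm : g ∈ IsLocalRing.maximalIdeal V := by
    rw [IsLocalRing.mem_maximalIdeal, mem_nonunits_iff] at hm ⊢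
    exact fun hu => hm (IsUnit.of_map (algebraMap A V) h hu)
  have hkj : ∀ j, IsLocalRing.maximalIdeal A ^ (k * j) ≤ Ideal.span {h ^ j} := by
    intro j
    rw [pow_mul, ← Ideal.span_singleton_pow]
    exact Ideal.pow_right_mono hk j
  -- Any `dim A/h^j + 1` elements of `V` are linearly dependent over `ℂ` modulo `g^j`: clear
  -- denominators and use the corresponding fact for ideals of `A`.
  have hrel : ∀ j : ℕ, ∀ v : Fin (Module.finrank ℂ (A ⧸ Ideal.span {h ^ j}) + 1) → V,
      ∃ c : Fin (Module.finrank ℂ (A ⧸ Ideal.span {h ^ j}) + 1) → ℂ, c ≠ 0 ∧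
        g ^ j ∣ ∑ i, c i • v i := by
    intro j v
    choose e0 a0 he0 using fun i => hV (v i)
    set e := ∑ i, e0 i
    have he : ∀ i, ∃ a, g ^ e * v i = algebraMap A V a := by
      intro i
      obtain ⟨r, hr⟩ := Nat.exists_eq_add_of_le
        (Finset.single_le_sum (f := e0) (fun _ _ => Nat.zero_le _) (Finset.mem_univ i))
      refine ⟨h ^ r * a0 i, ?_⟩
      rw [map_mul, ← he0 i, map_pow, map_pow, ← hg]
      rw [show e = e0 i + r from hr, pow_add]; ring
    choose a ha using he
    by_cases hz : ∀ i, v i = 0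
    · refine ⟨fun _ => 1, fun h => one_ne_zero (congrFun h 0), ?_⟩
      simp [hz]
    push Not at hz
    obtain ⟨i0, hi0⟩ := hz
    set I : Ideal A := Ideal.span (Set.range a) with hI
    have ha0 : a i0 ≠ 0 := by
      intro h'
      have := ha i0
      rw [h', map_zero] at this
      exact (mul_ne_zero (pow_ne_zero _ g0) hi0) this
    obtain ⟨E, hE⟩ := hpow _ ha0
    have haI : ∀ i, a i ∈ I := fun i => Ideal.subset_span ⟨i, rfl⟩
    have hEI : h ^ E ∈ I := (Ideal.span_singleton_le_iff_mem _ |>.2 (haI i0)) hE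
    have : FiniteDimensional ℂ (A ⧸ (Ideal.span {h ^ j} * I)) := by
      refine finiteDimensional_quotient_of_pow_le hres (k * (j + E)) _ ((hkj _).trans ?_)
      rw [Ideal.span_singleton_le_iff_mem, pow_add]
      exact Ideal.mul_mem_mul (Ideal.mem_span_singleton_self _) hEI
    obtain ⟨c, hc, hmem⟩ := exists_relation_ideal (h ^ j) (pow_ne_zero _ h0) I a haI
    refine ⟨c, hc, ?_⟩
    rw [Ideal.mem_span_singleton_mul] at hmem
    obtain ⟨z, hz, hz2⟩ := hmem
    have hzV : g ^ e ∣ algebraMap A V z := by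
      rw [hI] at hz
      clear hz2
      induction hz using Submodule.span_induction with
      | mem y hy => obtain ⟨i, rfl⟩ := hy; exact ⟨v i, (ha i).symm⟩
      | zero => simp
      | add x y _ _ hx hy => rw [map_add]; exact dvd_add hx hy
      | smul x y _ hy => rw [smul_eq_mul, map_mul]; exact Dvd.dvd.mul_left hy _
    obtain ⟨z', hz'⟩ := hzV
    have h3 : g ^ e * ∑ i, c i • v i = g ^ e * (g ^ j * z') := by
      have := congrArg (algebraMap A V) hz2
      rw [map_mul, hz', map_sum, map_pow, ← hg] at this
      rw [Finset.mul_sum]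
      trans ∑ i, algebraMap A V (c i • a i)
      · refine Finset.sum_congr rfl fun i _ => ?_
        rw [Algebra.smul_def (c i) (a i), map_mul, ← ha i, ← IsScalarTower.algebraMap_apply,
          Algebra.smul_def]; ring
      · rw [← this]; ring
    exact ⟨z', mul_left_cancel₀ (pow_ne_zero _ g0) h3⟩
  have hfd : ∀ j, FiniteDimensional ℂ (V ⧸ Ideal.span {g ^ j}) := by
    intro j
    have : Module.rank ℂ (V ⧸ Ideal.span {g ^ j}) ≤
        (Module.finrank ℂ (A ⧸ Ideal.span {h ^ j}) : ℕ) := by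
      apply rank_le
      intro s hs
      by_contra hcard
      push Not at hcard
      obtain ⟨t, hts, htc⟩ := Finset.exists_subset_card_eq (Nat.succ_le_of_lt hcard)
      let u := (Finset.equivFinOfCardEq htc).symm
      choose lift hlift using Ideal.Quotient.mk_surjective (I := Ideal.span {g ^ j})
      obtain ⟨c, hc, hd⟩ := hrel j fun i => lift (u i : V ⧸ _)
      apply hc
      have hli : LinearIndependent ℂ fun i => ((u i : t) : V ⧸ Ideal.span {g ^ j}) := by
        have := hs.comp (fun i => (⟨(u i : t), hts (u i).2⟩ : s)) (by
          intro x y hxy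
          have hxy' := congrArg Subtype.val hxy
          exact u.injective (Subtype.ext hxy'))
        exact this
      rw [Fintype.linearIndependent_iff] at hli
      funext i
      refine hli c ?_ i
      rw [← Ideal.mem_span_singleton, ← Ideal.Quotient.eq_zero_iff_mem, map_sum] at hd
      rw [← hd]
      refine Finset.sum_congr rfl fun i _ => ?_
      conv_lhs => rw [← hlift (u i)]
      rfl
    exact Module.rank_lt_aleph0_iff.1 (this.trans_lt (Cardinal.natCast_lt_aleph0))
  -- The residue field of `V` is algebraic over `ℂ`, hence equal to it.
  have hresV : ∀ v : V, ∃ c : ℂ, v - algebraMap ℂ V c ∈ IsLocalRing.maximalIdeal V := by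
    intro v
    obtain ⟨c, hc, hd⟩ := hrel 1 fun i => v ^ (i : ℕ)
    rw [pow_one] at hd
    let p : Polynomial ℂ := ∑ i, Polynomial.monomial (Fin.val i) (c i)
    have hp0 : p ≠ 0 := by
      intro hp
      apply hc
      funext i
      have := congrArg (fun q => Polynomial.coeff q (i : ℕ)) hp
      simp only [p, Polynomial.finsetSum_coeff, Polynomial.coeff_monomial, Fin.val_inj] at this
      simpa using this
    have hpv : Polynomial.aeval v p ∈ IsLocalRing.maximalIdeal V := by
      have : Polynomial.aeval v p = ∑ i, c i • v ^ (i : ℕ) := by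
        simp only [p, map_sum, Polynomial.aeval_monomial, Algebra.smul_def]
      rw [this]
      exact Ideal.mem_of_dvd _ hd hgm
    rw [(IsAlgClosed.splits p).eq_prod_roots] at hpv
    rw [map_mul, Polynomial.aeval_C] at hpv
    rcases (Ideal.IsPrime.mem_or_mem inferInstance hpv) with h1 | h1
    · exfalso
      exact (IsLocalRing.mem_maximalIdeal _).1 h1
        ((isUnit_iff_ne_zero.2 (Polynomial.leadingCoeff_ne_zero.2 hp0)).map _)
    · rw [map_multiset_prod, Multiset.map_map] at h1
      obtain ⟨r, hr, hr2⟩ := (Ideal.IsPrime.multiset_prod_mem_iff_exists_mem inferInstance _).1 h1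
      obtain ⟨r', _, rfl⟩ := Multiset.mem_map.1 hr
      exact ⟨r', by simpa using hr2⟩
  -- Every nonzero ideal contains some `g^E`, modulo which it is finite dimensional.
  have hNoeth : IsNoetherianRing V := by
    rw [isNoetherianRing_iff_ideal_fg]
    intro J
    by_cases hJ : J = ⊥
    · rw [hJ]; exact Submodule.fg_bot
    obtain ⟨v, hvJ, hv0⟩ := Submodule.exists_mem_ne_zero_of_ne_bot hJ
    obtain ⟨e, a, hea⟩ := hV v
    have ha0 : a ≠ 0 := by
      rintro rfl
      rw [map_zero, map_pow] at hea
      exact mul_ne_zero (pow_ne_zero e g0) hv0 hea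
    obtain ⟨E, hE⟩ := hpow a ha0
    have hgE : g ^ E ∈ J := by
      obtain ⟨b, hb⟩ := Ideal.mem_span_singleton'.1 hE
      rw [hg, ← map_pow, ← hb, map_mul, ← hea]
      exact J.mul_mem_left _ (J.mul_mem_left _ hvJ)
    have := hfd E
    obtain ⟨S, hS⟩ := (IsNoetherian.noetherian
      ((J.restrictScalars ℂ).map (Ideal.Quotient.mkₐ ℂ (Ideal.span {g ^ E})).toLinearMap))
    choose lift hlift using Ideal.Quotient.mk_surjective (I := Ideal.span {g ^ E})
    have hgJ : Ideal.span {g ^ E} ≤ J := by rwa [Ideal.span_singleton_le_iff_mem]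
    refine ⟨S.image lift ∪ {g ^ E}, le_antisymm ?_ ?_⟩
    · rw [Submodule.span_le]
      intro x hx
      simp only [Finset.coe_union, Finset.coe_image, Finset.coe_singleton, Set.union_singleton,
        Set.mem_insert_iff, Set.mem_image, SetLike.mem_coe] at hx
      rcases hx with rfl | ⟨y, hy, rfl⟩
      · exact hgE
      · have : y ∈ Submodule.span ℂ (S : Set (V ⧸ Ideal.span {g ^ E})) := Submodule.subset_span hy
        rw [hS] at this
        obtain ⟨w, hw, hw2⟩ := this
        have hw' : w ∈ J := hw
        have h4 : Ideal.Quotient.mk (Ideal.span {g ^ E}) (lift y) = Ideal.Quotient.mk _ w := by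
          rw [hlift, ← hw2]; rfl
        rw [Ideal.Quotient.eq] at h4
        have := J.add_mem (hgJ h4) hw'
        simpa using this
    · intro x hx
      have hx' : Ideal.Quotient.mk (Ideal.span {g ^ E}) x ∈ Submodule.span ℂ (S : Set (V ⧸ Ideal.span {g ^ E})) := by
        rw [hS]; exact ⟨x, hx, rfl⟩
      have key : ∀ y ∈ Submodule.span ℂ (S : Set (V ⧸ Ideal.span {g ^ E})),
          lift y ∈ Submodule.span V ((S.image lift ∪ {g ^ E} : Finset V) : Set V) := by
        have hg' : Ideal.span {g ^ E} ≤ Submodule.span V ((S.image lift ∪ {g ^ E} : Finset V) : Set V) := by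
          rw [Ideal.span_singleton_le_iff_mem]
          exact Submodule.subset_span (by simp)
        intro y hy
        induction hy using Submodule.span_induction with
        | mem y hy => exact Submodule.subset_span (by
            simp only [Finset.coe_union, Finset.coe_image]; exact Or.inl ⟨y, hy, rfl⟩)
        | zero =>
          apply hg'
          rw [← Ideal.Quotient.eq_zero_iff_mem, hlift]
        | add x y _ _ hx hy =>
          have : lift (x + y) - (lift x + lift y) ∈ Ideal.span {g ^ E} := by
            rw [← Ideal.Quotient.eq, map_add, hlift, hlift, hlift]
          have := add_mem (hg' this) (add_mem hx hy)
          simpa using this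
        | smul c y _ hy =>
          have : lift (c • y) - algebraMap ℂ V c * lift y ∈ Ideal.span {g ^ E} := by
            rw [← Ideal.Quotient.eq, map_mul, hlift, hlift, Algebra.smul_def]
            rfl
          have := add_mem (hg' this) (Submodule.smul_mem _ (algebraMap ℂ V c) hy)
          simpa using this
      have h5 := key _ hx'
      have : x - lift (Ideal.Quotient.mk (Ideal.span {g ^ E}) x) ∈ Ideal.span {g ^ E} := by
        rw [← Ideal.Quotient.eq, hlift]
      have hg' : Ideal.span {g ^ E} ≤ Submodule.span V ((S.image lift ∪ {g ^ E} : Finset V) : Set V) := by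
        rw [Ideal.span_singleton_le_iff_mem]
        exact Submodule.subset_span (by simp)
      have := add_mem (hg' this) h5
      simpa using this
  have hPID : IsPrincipalIdealRing V := ((IsBezout.TFAE (R := V)).out 0 1).mp hNoeth
  obtain ⟨s, hs⟩ := (IsPrincipalIdealRing.principal (IsLocalRing.maximalIdeal V)).principal
  have hs' : IsLocalRing.maximalIdeal V = Ideal.span {s} := hs
  have hs0 : s ≠ 0 := by
    rintro rfl
    rw [hs'] at hgm
    exact g0 (zero_dvd_iff.1 (Ideal.mem_span_singleton.1 hgm))
  refine exists_powerSeries_hom (algebraMap ℂ V) hresV s hs0 hs' ?_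
  intro v hv
  have hbot := Ideal.iInf_pow_eq_bot_of_isLocalRing (IsLocalRing.maximalIdeal V)
    (Ideal.IsPrime.ne_top inferInstance)
  have : v ∈ ⨅ i : ℕ, IsLocalRing.maximalIdeal V ^ i := by
    rw [Ideal.mem_iInf]
    intro i
    rw [hs', Ideal.span_singleton_pow, Ideal.mem_span_singleton]
    exact hv i
  rw [hbot] at this
  exact (Submodule.mem_bot V).1 this

/-- A Noetherian local domain with residue field `ℂ` all of whose nonzero primes contain a common
nonzero element of the maximal ideal embeds into `ℂ⟦X⟧` by a local homomorphism. -/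
lemma arc_local {A : Type*} [CommRing A] [IsDomain A] [IsLocalRing A]
    [IsNoetherianRing A] [Algebra ℂ A]
    (hres : ∀ v : A, ∃ c : ℂ, v - algebraMap ℂ A c ∈ IsLocalRing.maximalIdeal A)
    (h : A) (h0 : h ≠ 0) (hm : h ∈ IsLocalRing.maximalIdeal A)
    (hP : ∀ P : Ideal A, P.IsPrime → P ≠ ⊥ → h ∈ P) :
    ∃ ψ : A →+* PowerSeries ℂ, Function.Injective ψ ∧
      (∀ c, ψ (algebraMap ℂ A c) = PowerSeries.C c) ∧
      ∀ v ∈ IsLocalRing.maximalIdeal A, PowerSeries.constantCoeff (ψ v) = 0 := by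
  have hrad : ∀ x : A, x ≠ 0 → h ∈ (Ideal.span {x}).radical := by
    intro x hx
    rw [Ideal.radical_eq_sInf, Ideal.mem_sInf]
    rintro J ⟨hJ, hJp⟩
    refine hP J hJp ?_
    rintro rfl
    exact hx (by simpa using hJ)
  have hpow : ∀ x : A, x ≠ 0 → ∃ e : ℕ, h ^ e ∈ Ideal.span {x} := fun x hx => hrad x hx
  have hmrad : IsLocalRing.maximalIdeal A ≤ (Ideal.span {h}).radical := by
    rw [Ideal.radical_eq_sInf]
    refine le_sInf ?_
    rintro J ⟨hJ, hJp⟩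
    refine (prime_eq_maximalIdeal h h0 hm hP J ?_).ge
    rintro rfl
    exact h0 (by simpa using hJ)
  obtain ⟨k, hk⟩ := Ideal.exists_radical_pow_le_of_fg (Ideal.span {h})
    ((isNoetherianRing_iff_ideal_fg A).1 inferInstance _)
  have hk' : IsLocalRing.maximalIdeal A ^ k ≤ Ideal.span {h} := (Ideal.pow_right_mono hmrad k).trans hk
  let K := FractionRing A
  obtain ⟨V, hV, hloc⟩ := IsLocalRing.exists_factor_valuationRing (algebraMap A K)
  let j : A →+* V := (algebraMap A K).codRestrict V.toSubring hV
  have hj : ∀ a, ((j a : V) : K) = algebraMap A K a := fun a => rfl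
  have hjinj : Function.Injective j := by
    intro a b hab
    have := congrArg (fun v : V => (v : K)) hab
    exact IsFractionRing.injective A K this
  let _ : Algebra A V := j.toAlgebra
  let _ : Algebra ℂ V := (j.comp (algebraMap ℂ A)).toAlgebra
  have : IsScalarTower ℂ A V := IsScalarTower.of_algebraMap_eq fun _ => rfl
  have : IsLocalHom (algebraMap A V) := hloc
  have hVfrac : ∀ v : V, ∃ (e : ℕ) (a : A), algebraMap A V (h ^ e) * v = algebraMap A V a := by
    intro v
    obtain ⟨a, s, hs, has⟩ := IsFractionRing.div_surjective A (v : K)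
    have hs0 : s ≠ 0 := nonZeroDivisors.ne_zero hs
    obtain ⟨e, he⟩ := hpow s hs0
    obtain ⟨b, hb⟩ := Ideal.mem_span_singleton'.1 he
    refine ⟨e, b * a, ?_⟩
    apply Subtype.ext
    change algebraMap A K (h ^ e) * (v : K) = algebraMap A K (b * a)
    have hsK : algebraMap A K s ≠ 0 := by
      rw [Ne, map_eq_zero_iff _ (IsFractionRing.injective A K)]; exact hs0
    rw [← has, ← hb, map_mul, map_mul, mul_assoc, mul_div_cancel₀ _ hsK]
  obtain ⟨ψ, hψi, hψc, hψ0⟩ := arc_valuationRing (A := A) (V := V) hjinj hres h h0 hm hpow k hk' hVfrac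
  refine ⟨ψ.comp j, hψi.comp hjinj, fun c => hψc c, fun v hv => hψ0 _ ?_⟩
  rw [IsLocalRing.mem_maximalIdeal, mem_nonunits_iff] at hv ⊢
  exact fun hu => hv (IsUnit.of_map (algebraMap A V) v hu)

/-- **Formal curve selection**: a point `st` of a Noetherian `ℂ`-algebra which lies on the
irreducible closed subset defined by `P₀` is the centre of a formal arc in that subset along which
a given `h ∉ P₀` does not vanish identically. -/
lemma exists_formal_arc {T : Type*} [CommRing T] [IsNoetherianRing T] (ι : ℂ →+* T) (st : T →+* ℂ)
    (hst : ∀ c, st (ι c) = c) (P₀ : Ideal T) [P₀.IsPrime] (hP₀ : ∀ t ∈ P₀, st t = 0)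
    (h : T) (hh : h ∉ P₀) :
    ∃ φ : T →+* PowerSeries ℂ, (∀ c, φ (ι c) = PowerSeries.C c) ∧
      (∀ t, PowerSeries.constantCoeff (φ t) = st t) ∧ (∀ t ∈ P₀, φ t = 0) ∧ φ h ≠ 0 := by
  classical
  let M : Ideal T := RingHom.ker st
  have hMp : M.IsPrime := RingHom.ker_isPrime st
  -- A prime `p` maximal among those avoiding `h`: the local ring of `T/p` at the point is then a
  -- domain whose nonzero primes all contain the image of `h`.
  let S : Set (Ideal T) := {p | p.IsPrime ∧ P₀ ≤ p ∧ p ≤ M ∧ h ∉ p}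
  obtain ⟨p, hpS, hpmax⟩ := set_has_maximal_iff_noetherian.2 (inferInstance : IsNoetherian T T) S
    ⟨P₀, inferInstance, le_rfl, hP₀, hh⟩
  obtain ⟨hpp, hPp, hpM, hhp⟩ := hpS
  by_cases hpe : p = M
  · refine ⟨(PowerSeries.C).comp st, fun c => by simp [hst], fun t => by simp, fun t ht => ?_, ?_⟩
    · simp [hP₀ t ht]
    · intro h'
      apply hhp
      rw [hpe]
      change st h = 0
      have := congrArg PowerSeries.constantCoeff h'
      simpa using this
  have hlt : ¬ M ≤ p := fun h' => hpe (le_antisymm hpM h')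
  obtain ⟨m, hmM, hmp⟩ := Set.not_subset.1 hlt
  let D := T ⧸ p
  let st' : D →+* ℂ := Ideal.Quotient.lift p st (fun t ht => hpM ht)
  have hst' : ∀ t, st' (Ideal.Quotient.mk p t) = st t := fun t => rfl
  let M' : Ideal D := RingHom.ker st'
  have : M'.IsPrime := RingHom.ker_isPrime st'
  let A := Localization.AtPrime M'
  have hunit : ∀ y : M'.primeCompl, IsUnit (st' y) := fun y => isUnit_iff_ne_zero.2 y.2
  let stA : A →+* ℂ := IsLocalization.lift hunit
  have hstA : ∀ d, stA (algebraMap D A d) = st' d := fun d => IsLocalization.lift_eq hunit d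
  let q : T →+* A := (algebraMap D A).comp (Ideal.Quotient.mk p)
  have hq : ∀ t, stA (q t) = st t := fun t => hstA _
  let _ : Algebra ℂ A := (q.comp ι).toAlgebra
  have hker : RingHom.ker stA = IsLocalRing.maximalIdeal A := by
    apply IsLocalRing.eq_maximalIdeal
    apply RingHom.ker_isMaximal_of_surjective
    intro c
    exact ⟨q (ι c), by rw [hq, hst]⟩
  have hle : M'.primeCompl ≤ nonZeroDivisors D := Ideal.primeCompl_le_nonZeroDivisors M'
  have : IsDomain A := IsLocalization.isDomain_localization hle
  have hDinj : Function.Injective (algebraMap D A) := IsLocalization.injective A hle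
  have : IsNoetherianRing A := IsLocalization.isNoetherianRing M'.primeCompl A inferInstance
  have hq0 : ∀ t, q t = 0 ↔ t ∈ p := by
    intro t
    change algebraMap D A (Ideal.Quotient.mk p t) = 0 ↔ _
    rw [map_eq_zero_iff _ hDinj, Ideal.Quotient.eq_zero_iff_mem]
  have hmem : ∀ t, t ∈ M → q t ∈ IsLocalRing.maximalIdeal A := by
    intro t ht
    rw [← hker, RingHom.mem_ker, hq]; exact ht
  obtain ⟨ψ, hψi, hψc, hψ0⟩ := arc_local (A := A) (fun v => ⟨stA v, by
      rw [← hker, RingHom.mem_ker, map_sub, sub_eq_zero]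
      change _ = stA (q (ι _))
      rw [hq, hst]⟩) (q (h * m)) (by
      rw [Ne, hq0]
      exact fun h' => (hpp.mem_or_mem h').elim hhp hmp) (hmem _ (M.mul_mem_left _ hmM)) (by
      intro P hPpr hPb
      have hcne : p < P.comap q := by
        refine lt_of_le_of_ne ?_ ?_
        · intro t ht
          rw [Ideal.mem_comap, (hq0 t).2 ht]; exact P.zero_mem
        · intro heq
          apply hPb
          rw [eq_bot_iff]
          intro a ha
          obtain ⟨⟨d, y⟩, hdy⟩ := IsLocalization.surj M'.primeCompl a
          obtain ⟨t, rfl⟩ := Ideal.Quotient.mk_surjective d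
          have h1 : q t ∈ P := by
            have := P.mul_mem_right (algebraMap D A y) ha
            rw [hdy] at this
            exact this
          have h2 : t ∈ p := by rw [heq]; exact h1
          have h3 : a * algebraMap D A y = 0 := by rw [hdy]; exact (hq0 t).2 h2
          have h4 : IsUnit (algebraMap D A y) := IsLocalization.map_units A y
          exact (Submodule.mem_bot A).2 ((h4.mul_left_eq_zero).1 h3)
      by_contra hcon
      have hh' : h ∉ P.comap q := fun h' => hcon (by rw [map_mul]; exact P.mul_mem_right _ h')
      refine hpmax (P.comap q) ⟨Ideal.comap_isPrime q P, hPp.trans hcne.le, ?_, hh'⟩ hcne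
      intro t ht
      have := IsLocalRing.le_maximalIdeal hPpr.ne_top ht
      rw [← hker, RingHom.mem_ker, hq] at this
      exact this)
  refine ⟨ψ.comp q, fun c => hψc c, fun t => ?_, fun t ht => ?_, ?_⟩
  · have h1 : t - ι (st t) ∈ M := by
      change st _ = 0
      rw [map_sub, hst, sub_self]
    have h2 := hψ0 _ (hmem _ h1)
    rw [map_sub, map_sub, map_sub, sub_eq_zero] at h2
    rw [RingHom.comp_apply, h2]
    have := hψc (st t)
    change ψ (q (ι (st t))) = _ at this
    rw [this]; simp
  · rw [RingHom.comp_apply, (hq0 t).2 (hPp ht), map_zero]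
  · rw [RingHom.comp_apply, Ne, map_eq_zero_iff _ hψi, hq0]; exact hhp

/-! ### Convergent power series form a Noetherian ring -/

/-- The weighted `ℓ¹` norm `∑ ‖c_α‖ w(α)` of a formal power series, with values in `[0, ∞]`. -/
noncomputable def wnorm {σ : Type*} (w : (σ →₀ ℕ) → ℝ≥0) (P : MvPowerSeries σ ℂ) : ℝ≥0∞ :=
  ∑' α, ‖MvPowerSeries.coeff α P‖ₑ * w α

section wnorm
variable {σ : Type*} {w : (σ →₀ ℕ) → ℝ≥0}

lemma wnorm_add (P Q : MvPowerSeries σ ℂ) : wnorm w (P + Q) ≤ wnorm w P + wnorm w Q := by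
  unfold wnorm
  rw [← ENNReal.tsum_add]
  refine ENNReal.tsum_le_tsum fun α => ?_
  rw [map_add, ← add_mul]
  gcongr
  exact enorm_add_le _ _

lemma wnorm_zero : wnorm w (0 : MvPowerSeries σ ℂ) = 0 := by simp [wnorm]

lemma wnorm_neg (P : MvPowerSeries σ ℂ) : wnorm w (-P) = wnorm w P := by
  simp [wnorm]

lemma wnorm_sum {ι : Type*} (s : Finset ι) (P : ι → MvPowerSeries σ ℂ) :
    wnorm w (∑ i ∈ s, P i) ≤ ∑ i ∈ s, wnorm w (P i) := by
  classical
  induction s using Finset.induction_on with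
  | empty => simp [wnorm_zero]
  | insert a s ha ih =>
    rw [Finset.sum_insert ha, Finset.sum_insert ha]
    exact (wnorm_add _ _).trans (by gcongr)

lemma wnorm_mul (hw : ∀ α β, w (α + β) = w α * w β) (P Q : MvPowerSeries σ ℂ) :
    wnorm w (P * Q) ≤ wnorm w P * wnorm w Q := by
  classical
  unfold wnorm
  calc ∑' α, ‖MvPowerSeries.coeff α (P * Q)‖ₑ * w α
      ≤ ∑' α, ∑' p : Finset.HasAntidiagonal.antidiagonal α, (‖MvPowerSeries.coeff p.1.1 P‖ₑ * w p.1.1) *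
          (‖MvPowerSeries.coeff p.1.2 Q‖ₑ * w p.1.2) := by
        refine ENNReal.tsum_le_tsum fun α => ?_
        rw [MvPowerSeries.coeff_mul, Finset.tsum_subtype (Finset.HasAntidiagonal.antidiagonal α)
          (fun p : (σ →₀ ℕ) × (σ →₀ ℕ) => (‖MvPowerSeries.coeff p.1 P‖ₑ * w p.1) *
          (‖MvPowerSeries.coeff p.2 Q‖ₑ * w p.2))]
        refine (mul_le_mul_left (enorm_sum_le _ _) _).trans ?_
        rw [Finset.sum_mul]
        refine Finset.sum_le_sum fun p hp => le_of_eq ?_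
        rw [← Finset.HasAntidiagonal.mem_antidiagonal.1 hp, hw, enorm_mul]
        push_cast
        ring
    _ = ∑' p : (σ →₀ ℕ) × (σ →₀ ℕ), (‖MvPowerSeries.coeff p.1 P‖ₑ * w p.1) *
          (‖MvPowerSeries.coeff p.2 Q‖ₑ * w p.2) := by
        rw [← ENNReal.tsum_sigma (fun α (p : Finset.HasAntidiagonal.antidiagonal α) => (‖MvPowerSeries.coeff p.1.1 P‖ₑ * w p.1.1) *
          (‖MvPowerSeries.coeff p.1.2 Q‖ₑ * w p.1.2))]
        exact (Finset.HasAntidiagonal.sigmaAntidiagonalEquivProd (A := σ →₀ ℕ)).tsum_eq (fun p => (‖MvPowerSeries.coeff p.1 P‖ₑ * w p.1) *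
          (‖MvPowerSeries.coeff p.2 Q‖ₑ * w p.2))
    _ = _ := by
        rw [ENNReal.tsum_prod (f := fun a b => (‖MvPowerSeries.coeff a P‖ₑ * w a) *
          (‖MvPowerSeries.coeff b Q‖ₑ * w b))]
        simp_rw [ENNReal.tsum_mul_left, ENNReal.tsum_mul_right]

lemma wnorm_mono {w' : (σ →₀ ℕ) → ℝ≥0} (h : ∀ α, w α ≤ w' α) (P : MvPowerSeries σ ℂ) :
    wnorm w P ≤ wnorm w' P := by
  refine ENNReal.tsum_le_tsum fun α => ?_
  gcongr
  exact h α

lemma wnorm_monomial (α : σ →₀ ℕ) (c : ℂ) :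
    wnorm w (MvPowerSeries.monomial α c) = ‖c‖ₑ * w α := by
  classical
  unfold wnorm
  rw [tsum_eq_single α]
  · simp
  · intro β hβ
    rw [MvPowerSeries.coeff_monomial, if_neg hβ]; simp

/-- The part of `P` supported on exponents `β + s` with `D (β + s)`, divided by `x ^ s`. -/
noncomputable def shiftPart (s : σ →₀ ℕ) (D : (σ →₀ ℕ) → Prop) (P : MvPowerSeries σ ℂ) :
    MvPowerSeries σ ℂ := open Classical in
  fun β => if D (β + s) then MvPowerSeries.coeff (β + s) P else 0

open Classical in
lemma coeff_shiftPart (s : σ →₀ ℕ) (D : (σ →₀ ℕ) → Prop) (P : MvPowerSeries σ ℂ) (β : σ →₀ ℕ) :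
    MvPowerSeries.coeff β (shiftPart s D P) =
      if D (β + s) then MvPowerSeries.coeff (β + s) P else 0 := rfl

open Classical in
lemma coeff_monomial_mul_shiftPart (s : σ →₀ ℕ) (D : (σ →₀ ℕ) → Prop) (hD : ∀ α, D α → s ≤ α)
    (P : MvPowerSeries σ ℂ) (α : σ →₀ ℕ) :
    MvPowerSeries.coeff α (MvPowerSeries.monomial s 1 * shiftPart s D P) =
      if D α then MvPowerSeries.coeff α P else 0 := by
  rw [MvPowerSeries.coeff_monomial_mul]
  by_cases h : s ≤ α
  · rw [if_pos h, coeff_shiftPart, tsub_add_cancel_of_le h, one_mul]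
  · rw [if_neg h, if_neg (fun h' => h (hD _ h'))]

lemma sum_wnorm_shiftPart (hw : ∀ α β, w (α + β) = w α * w β) (S : Finset (σ →₀ ℕ))
    (D : (σ →₀ ℕ) → (σ →₀ ℕ) → Prop) (hD : ∀ α s t, D s α → D t α → s = t)
    (P : MvPowerSeries σ ℂ) :
    ∑ s ∈ S, wnorm w (shiftPart s (D s) P) * w s ≤ wnorm w P := by
  classical
  calc ∑ s ∈ S, wnorm w (shiftPart s (D s) P) * w s
      ≤ ∑ s ∈ S, ∑' α, (if D s α then ‖MvPowerSeries.coeff α P‖ₑ * w α else 0) := by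
        refine Finset.sum_le_sum fun s _ => ?_
        have := ENNReal.tsum_comp_le_tsum_of_injective (f := fun β : σ →₀ ℕ => β + s)
          (add_left_injective s)
          (fun α => (if D s α then ‖MvPowerSeries.coeff α P‖ₑ * (w α : ℝ≥0∞) else 0))
        refine le_trans (le_of_eq ?_) this
        rw [wnorm, ← ENNReal.tsum_mul_right]
        refine tsum_congr fun β => ?_
        rw [coeff_shiftPart, hw]
        split_ifs
        · push_cast; ring
        · simp
    _ = ∑' α, ∑ s ∈ S, (if D s α then ‖MvPowerSeries.coeff α P‖ₑ * (w α : ℝ≥0∞) else 0) :=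
        (Summable.tsum_finsetSum fun _ _ => ENNReal.summable).symm
    _ ≤ wnorm w P := by
        refine ENNReal.tsum_le_tsum fun α => ?_
        by_cases h : ∃ s ∈ S, D s α
        · obtain ⟨s, hs, hs2⟩ := h
          rw [Finset.sum_eq_single_of_mem s hs (fun t _ hts => if_neg fun h' => hts (hD _ _ _ h' hs2))]
          rw [if_pos hs2]
        · push Not at h
          rw [Finset.sum_eq_zero fun s hs => if_neg (h s hs)]
          exact zero_le

end wnorm

/-- The power series converging absolutely on some polydisc. -/
noncomputable def convSeries (σ : Type*) : Subring (MvPowerSeries σ ℂ) where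
  carrier := {P | ∃ r : ℝ≥0, 0 < r ∧ wnorm (fun α => r ^ α.degree) P ≠ ⊤}
  zero_mem' := ⟨1, one_pos, by rw [wnorm_zero]; simp⟩
  one_mem' := ⟨1, one_pos, by
    rw [show (1 : MvPowerSeries σ ℂ) = MvPowerSeries.monomial 0 1 from rfl, wnorm_monomial]; simp⟩
  neg_mem' := by rintro P ⟨r, h0, h⟩; exact ⟨r, h0, by rwa [wnorm_neg]⟩
  add_mem' := by
    rintro P Q ⟨r, h0, h⟩ ⟨r', h0', h'⟩
    refine ⟨min r r', lt_min h0 h0', ne_top_of_le_ne_top ?_ (wnorm_add P Q)⟩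
    refine ENNReal.add_ne_top.2 ⟨ne_top_of_le_ne_top h (wnorm_mono (fun α => ?_) P),
      ne_top_of_le_ne_top h' (wnorm_mono (fun α => ?_) Q)⟩
    · exact pow_le_pow_left₀ zero_le (min_le_left _ _) _
    · exact pow_le_pow_left₀ zero_le (min_le_right _ _) _
  mul_mem' := by
    rintro P Q ⟨r, h0, h⟩ ⟨r', h0', h'⟩
    refine ⟨min r r', lt_min h0 h0', ne_top_of_le_ne_top ?_ (wnorm_mul (fun α β => ?_) P Q)⟩
    · refine ENNReal.mul_ne_top (ne_top_of_le_ne_top h (wnorm_mono (fun α => ?_) P))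
        (ne_top_of_le_ne_top h' (wnorm_mono (fun α => ?_) Q))
      · exact pow_le_pow_left₀ zero_le (min_le_left _ _) _
      · exact pow_le_pow_left₀ zero_le (min_le_right _ _) _
    · rw [map_add, pow_add]

lemma mem_convSeries {σ : Type*} {P : MvPowerSeries σ ℂ} :
    P ∈ convSeries σ ↔ ∃ r : ℝ≥0, 0 < r ∧ wnorm (fun α => r ^ α.degree) P ≠ ⊤ := Iff.rfl

/-- Fixed-point lemma for division: a contraction `A` of the weighted norm whose `α`-th coefficient
depends only on coefficients of smaller `M`-order has a solution of `P' = P + A P'`. -/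
lemma exists_series_fixed {σ : Type*} {w : (σ →₀ ℕ) → ℝ≥0} (M : (σ →₀ ℕ) → ℕ)
    (A : MvPowerSeries σ ℂ →+ MvPowerSeries σ ℂ)
    (hA : ∀ Q α, (∀ β, M β < M α → MvPowerSeries.coeff β Q = 0) → MvPowerSeries.coeff α (A Q) = 0)
    (hN : ∀ Q, wnorm w (A Q) ≤ 2⁻¹ * wnorm w Q) (P : MvPowerSeries σ ℂ) :
    ∃ P', P' = P + A P' ∧ wnorm w P' ≤ 2 * wnorm w P := by
  have hit : ∀ k Q α, M α < k → MvPowerSeries.coeff α (A^[k] Q) = 0 := by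
    intro k
    induction k with
    | zero => intro Q α h; omega
    | succ k ih =>
      intro Q α h
      rw [Function.iterate_succ_apply']
      refine hA _ _ fun β hβ => ih _ _ (by omega)
  let P' : MvPowerSeries σ ℂ :=
    fun α => ∑ k ∈ Finset.range (M α + 1), MvPowerSeries.coeff α (A^[k] P)
  have hP' : ∀ α, MvPowerSeries.coeff α P' =
    ∑ k ∈ Finset.range (M α + 1), MvPowerSeries.coeff α (A^[k] P) := fun α => rfl
  have hP'K : ∀ K α, M α < K → MvPowerSeries.coeff α P' =
      MvPowerSeries.coeff α (∑ k ∈ Finset.range K, A^[k] P) := by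
    intro K α h
    rw [hP', map_sum]
    refine Finset.sum_subset (Finset.range_subset_range.2 (by omega)) fun k _ hk => hit _ _ _ ?_
    simpa using hk
  refine ⟨P', ?_, ?_⟩
  · ext α
    set K := M α + 1
    set PK := ∑ k ∈ Finset.range K, A^[k] P with hPK
    have h1 : MvPowerSeries.coeff α (A (P' - PK)) = 0 := hA _ _ fun β hβ => by
      rw [map_sub, hP'K K β (by omega), sub_self]
    rw [map_sub, map_sub, sub_eq_zero] at h1
    rw [map_add, h1, hP'K K α (by omega), ← map_add]
    have h2 : P + A PK = PK + A^[K] P := by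
      have h3 : A PK = ∑ k ∈ Finset.range K, A^[k + 1] P := by
        rw [hPK, map_sum]
        refine Finset.sum_congr rfl fun k _ => ?_
        rw [Function.iterate_succ_apply']
      rw [h3, hPK, ← Finset.sum_range_succ (fun k => A^[k] P),
        Finset.sum_range_succ' (fun k => A^[k] P), add_comm]
      rfl
    rw [h2, map_add, hit K P α (by omega), add_zero]
  · have hNk : ∀ k, wnorm w (A^[k] P) ≤ 2⁻¹ ^ k * wnorm w P := by
      intro k
      induction k with
      | zero => simp
      | succ k ih =>
        rw [Function.iterate_succ_apply', pow_succ', mul_assoc]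
        exact (hN _).trans (by gcongr)
    calc wnorm w P' ≤ ∑' α, ∑' k, ‖MvPowerSeries.coeff α (A^[k] P)‖ₑ * w α := by
          refine ENNReal.tsum_le_tsum fun α => ?_
          rw [hP', ENNReal.tsum_mul_right]
          gcongr
          exact (enorm_sum_le _ _).trans
            (ENNReal.sum_le_tsum (f := fun k => ‖MvPowerSeries.coeff α (A^[k] P)‖ₑ) _)
      _ = ∑' k, wnorm w (A^[k] P) := ENNReal.tsum_comm
      _ ≤ ∑' k : ℕ, 2⁻¹ ^ k * wnorm w P := ENNReal.tsum_le_tsum hNk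
      _ = 2 * wnorm w P := by
          rw [ENNReal.tsum_mul_right, ENNReal.tsum_geometric, ENNReal.one_sub_inv_two, inv_inv]

/-- A multiplicative injective ordering function on exponents: `M α = ∏ pᵢ ^ αᵢ` with distinct
primes `pᵢ`. -/
lemma exists_monomial_order (σ : Type*) [Fintype σ] : ∃ (M : (σ →₀ ℕ) → ℕ) (B : ℕ),
    Function.Injective M ∧ (∀ α β, M (α + β) = M α * M β) ∧ 1 ≤ B ∧
    (∀ α, 2 ^ α.degree ≤ M α) ∧ ∀ α, M α ≤ B ^ α.degree := by
  classical
  let p : σ → ℕ := fun i => Nat.nth Nat.Prime (Fintype.equivFin σ i)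
  have hp : ∀ i, (p i).Prime := fun i => Nat.prime_nth_prime _
  have hpi : Function.Injective p := (Nat.nth_injective Nat.infinite_setOfPred_prime).comp
    (Fin.val_injective.comp (Fintype.equivFin σ).injective)
  refine ⟨fun α => ∏ i, p i ^ α i, ∏ i, p i, ?_, ?_, ?_, ?_, ?_⟩
  · intro α β h
    ext j
    have key : ∀ γ : σ →₀ ℕ, (∏ i, p i ^ γ i).factorization (p j) = γ j := by
      intro γ
      rw [Nat.factorization_prod fun i _ => pow_ne_zero _ (hp i).ne_zero, Finset.sum_apply']
      rw [Finset.sum_eq_single j]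
      · rw [(hp j).factorization_pow]; simp
      · intro i _ hij
        rw [(hp i).factorization_pow, Finsupp.single_apply, if_neg fun h => hij (hpi h)]
      · simp
    rw [← key α, ← key β]
    exact congrArg (fun n => Nat.factorization n (p j)) h
  · intro α β
    rw [← Finset.prod_mul_distrib]
    exact Finset.prod_congr rfl fun i _ => by rw [Finsupp.add_apply, pow_add]
  · exact Finset.prod_pos fun i _ => (hp i).pos
  · intro α
    rw [Finsupp.degree_eq_sum, ← Finset.prod_pow_eq_pow_sum]
    exact Finset.prod_le_prod' fun i _ => Nat.pow_le_pow_left (hp i).two_le _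
  · intro α
    rw [Finsupp.degree_eq_sum, ← Finset.prod_pow_eq_pow_sum]
    refine Finset.prod_le_prod' fun i _ => Nat.pow_le_pow_left ?_ _
    exact Nat.le_of_dvd (Finset.prod_pos fun i _ => (hp i).pos) (Finset.dvd_prod_of_mem p (Finset.mem_univ i))

section Noeth
variable {σ : Type*} {M : (σ →₀ ℕ) → ℕ} {B : ℕ}

lemma eventually_wnorm_lt_top (h2 : ∀ α, 2 ^ α.degree ≤ M α) {P : MvPowerSeries σ ℂ}
    (hP : P ∈ convSeries σ) :
    ∀ᶠ u in Filter.atTop, wnorm (fun α => ((M α : ℝ≥0)⁻¹) ^ u) P ≠ ⊤ := by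
  obtain ⟨r, hr, h⟩ := hP
  have h1 : Filter.Tendsto (fun u : ℕ => ((2 : ℝ≥0)⁻¹) ^ u) Filter.atTop (nhds 0) :=
    tendsto_pow_atTop_nhds_zero_of_lt_one (by simp) (by rw [inv_lt_one₀ (by simp)]; exact one_lt_two)
  filter_upwards [h1.eventually_le_const hr] with u hu
  refine ne_top_of_le_ne_top h (wnorm_mono (fun α => ?_) P)
  calc ((M α : ℝ≥0)⁻¹) ^ u ≤ (((2 : ℝ≥0) ^ α.degree)⁻¹) ^ u := by
        gcongr
        exact_mod_cast h2 α
    _ = ((2⁻¹) ^ u) ^ α.degree := by rw [← inv_pow, ← pow_mul, ← pow_mul, mul_comm]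
    _ ≤ r ^ α.degree := by gcongr

lemma mem_convSeries_of_wnorm (hB1 : 1 ≤ B) (hB : ∀ α, M α ≤ B ^ α.degree) (h1 : ∀ α, 1 ≤ M α)
    {P : MvPowerSeries σ ℂ}
    {u : ℕ} (hP : wnorm (fun α => ((M α : ℝ≥0)⁻¹) ^ u) P ≠ ⊤) : P ∈ convSeries σ := by
  have hB0 : (0 : ℝ≥0) < B := by exact_mod_cast hB1
  refine ⟨((B : ℝ≥0)⁻¹) ^ u, by positivity, ne_top_of_le_ne_top hP (wnorm_mono (fun α => ?_) P)⟩
  rw [← pow_mul, mul_comm, pow_mul, inv_pow]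
  have : (0 : ℝ≥0) < M α := by exact_mod_cast h1 α
  gcongr
  exact_mod_cast hB α

lemma eventually_wnorm_le (h2 : ∀ α, 2 ^ α.degree ≤ M α) (s : σ →₀ ℕ) {H : MvPowerSeries σ ℂ}
    (hH : H ∈ convSeries σ) (hs : ∀ γ, M γ ≤ M s → MvPowerSeries.coeff γ H = 0) :
    ∀ᶠ u in Filter.atTop, wnorm (fun α => ((M α : ℝ≥0)⁻¹) ^ u) H ≤
      2⁻¹ * ((((M s : ℝ≥0)⁻¹) ^ u : ℝ≥0) : ℝ≥0∞) := by
  have h1 : ∀ α, 1 ≤ M α := fun α => Nat.one_le_two_pow.trans (h2 α)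
  obtain ⟨u₀, hu₀⟩ := (eventually_wnorm_lt_top h2 hH).exists
  set C := wnorm (fun α => ((M α : ℝ≥0)⁻¹) ^ u₀) H with hC
  set θ : ℝ≥0 := (M s : ℝ≥0) / (M s + 1) with hθ
  have hMs : (0 : ℝ≥0) < M s := by exact_mod_cast h1 s
  have hθ1 : θ < 1 := by
    rw [hθ, div_lt_one (by positivity)]; exact lt_add_one _
  -- the bound `wnorm ≤ C θ ^ t / M s ^ t` at `u = u₀ + t`
  have hbd : ∀ t : ℕ, wnorm (fun α => ((M α : ℝ≥0)⁻¹) ^ (u₀ + t)) H ≤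
      C * ((((M s : ℝ≥0) + 1)⁻¹ ^ t : ℝ≥0) : ℝ≥0∞) := by
    intro t
    rw [hC, wnorm, wnorm, ← ENNReal.tsum_mul_right]
    refine ENNReal.tsum_le_tsum fun α => ?_
    by_cases hα : M α ≤ M s
    · rw [hs α hα]; simp
    · rw [mul_assoc]
      gcongr
      rw [pow_add]
      norm_cast
      push Not at hα
      gcongr
      exact_mod_cast hα
  have hlim : Filter.Tendsto (fun t : ℕ => C * ((θ ^ t * (M s) ^ u₀ : ℝ≥0) : ℝ≥0∞)) Filter.atTop (nhds 0) := by
    have h3 : Filter.Tendsto (fun t : ℕ => ((θ ^ t * (M s) ^ u₀ : ℝ≥0) : ℝ≥0∞)) Filter.atTop (nhds 0) := by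
      have := (tendsto_pow_atTop_nhds_zero_of_lt_one (zero_le (a := θ)) hθ1).mul_const ((M s : ℝ≥0) ^ u₀)
      rw [zero_mul] at this
      exact ENNReal.tendsto_coe.2 this
    have := ENNReal.Tendsto.const_mul (a := C) h3 (Or.inr hu₀)
    simpa using this
  have hev : ∀ᶠ t : ℕ in Filter.atTop, C * ((θ ^ t * (M s) ^ u₀ : ℝ≥0) : ℝ≥0∞) ≤ 2⁻¹ :=
    hlim.eventually_le_const (by simp)
  have hev2 : ∀ᶠ t : ℕ in Filter.atTop, wnorm (fun α => ((M α : ℝ≥0)⁻¹) ^ (u₀ + t)) H ≤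
      2⁻¹ * ((((M s : ℝ≥0)⁻¹) ^ (u₀ + t) : ℝ≥0) : ℝ≥0∞) := by
    filter_upwards [hev] with t ht
    refine (hbd t).trans ?_
    calc C * ((((M s : ℝ≥0) + 1)⁻¹ ^ t : ℝ≥0) : ℝ≥0∞)
        = C * ((θ ^ t * (M s) ^ u₀ : ℝ≥0) : ℝ≥0∞) * ((((M s : ℝ≥0)⁻¹) ^ (u₀ + t) : ℝ≥0) : ℝ≥0∞) := by
          rw [mul_assoc, ← ENNReal.coe_mul]
          congr 2
          rw [hθ, pow_add, div_pow, inv_pow, inv_pow, inv_pow]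
          field_simp
      _ ≤ _ := by gcongr
  rw [Filter.eventually_atTop] at hev2 ⊢
  obtain ⟨t₀, ht₀⟩ := hev2
  refine ⟨u₀ + t₀, fun u hu => ?_⟩
  obtain ⟨t, rfl⟩ := Nat.exists_eq_add_of_le (show u₀ ≤ u by omega)
  exact ht₀ t (by omega)

end Noeth

/-- The ring of convergent power series is Noetherian: an ideal is generated by elements whose
initial exponents generate all initial exponents, by division with convergent quotients. -/
instance isNoetherianRing_convSeries (σ : Type*) [Fintype σ] : IsNoetherianRing (convSeries σ) := by
  classical
  obtain ⟨M, B, hMi, hMm, hB1, h2, hB⟩ := exists_monomial_order σ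
  have h1 : ∀ α, 1 ≤ M α := fun α => Nat.one_le_two_pow.trans (h2 α)
  rw [isNoetherianRing_iff_ideal_fg]
  intro I
  -- `E` is the set of initial exponents of elements of `I`; by Dickson's lemma it has finitely many
  -- minimal elements `S`.
  let E : Set (σ →₀ ℕ) := {α | ∃ P ∈ I, MvPowerSeries.coeff α (P : MvPowerSeries σ ℂ) = 1 ∧
    ∀ β, M β < M α → MvPowerSeries.coeff β (P : MvPowerSeries σ ℂ) = 0}
  have hfin : {α | Minimal (· ∈ E) α}.Finite :=
    WellQuasiOrderedLE.finite_of_isAntichain (setOfPred_minimal_antichain (· ∈ E))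
  let S : Finset (σ →₀ ℕ) := hfin.toFinset
  have hSE : ∀ s ∈ S, s ∈ E := fun s hs => ((Set.Finite.mem_toFinset hfin).1 hs).1
  have hES : ∀ α ∈ E, ∃ s ∈ S, s ≤ α := by
    intro α hα
    obtain ⟨s, hs, hs2⟩ := (Set.isPWO_of_wellQuasiOrderedLE E).exists_le_minimal hα
    exact ⟨s, (Set.Finite.mem_toFinset hfin).2 hs2, hs⟩
  have hex : ∀ s : σ →₀ ℕ, ∃ P : convSeries σ, s ∈ S → (P ∈ I ∧ MvPowerSeries.coeff s (P : MvPowerSeries σ ℂ) = 1 ∧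
    ∀ β, M β < M s → MvPowerSeries.coeff β (P : MvPowerSeries σ ℂ) = 0) := by
    intro s
    by_cases hs : s ∈ S
    · obtain ⟨P, hP⟩ := hSE s hs
      exact ⟨P, fun _ => hP⟩
    · exact ⟨0, fun h => absurd h hs⟩
  choose h hh using hex
  refine ⟨S.image h, le_antisymm ?_ ?_⟩
  · rw [Submodule.span_le]
    intro x hx
    obtain ⟨s, hs, rfl⟩ := Finset.mem_image.1 hx
    exact (hh s hs).1
  intro P hP
  have hmon : ∀ (s : σ →₀ ℕ), MvPowerSeries.monomial s (1 : ℂ) ∈ convSeries σ := fun s =>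
    ⟨1, one_pos, by rw [wnorm_monomial]; simp⟩
  let T : (σ →₀ ℕ) → MvPowerSeries σ ℂ := fun s =>
    MvPowerSeries.monomial s (1 : ℂ) - (h s : MvPowerSeries σ ℂ)
  have hT : ∀ s ∈ S, ∀ γ, M γ ≤ M s → MvPowerSeries.coeff γ (T s) = 0 := by
    intro s hs γ hγ
    rcases hγ.lt_or_eq with hlt | heq
    · have hne : γ ≠ s := by rintro rfl; exact lt_irrefl _ hlt
      simp only [T]
      rw [map_sub, (hh s hs).2.2 _ hlt, MvPowerSeries.coeff_monomial, if_neg hne, sub_zero]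
    · have := hMi heq
      subst this
      simp only [T]
      rw [map_sub, (hh γ hs).2.1]; simp
  have hev : ∀ᶠ u in Filter.atTop, ∀ s ∈ S, wnorm (fun α => ((M α : ℝ≥0)⁻¹) ^ u) (T s) ≤
      2⁻¹ * ((((M s : ℝ≥0)⁻¹) ^ u : ℝ≥0) : ℝ≥0∞) := by
    rw [Filter.eventually_all_finset]
    intro s hs
    exact eventually_wnorm_le h2 s ((convSeries σ).sub_mem (hmon s) (h s).2) (hT s hs)
  -- For weights `M^{-u}` with `u` large, each generator is a small perturbation of its initial
  -- monomial, so that division by the monomials can be corrected by a Neumann series.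
  obtain ⟨u, hu, hPu⟩ := (hev.and (eventually_wnorm_lt_top h2 P.2)).exists
  set w : (σ →₀ ℕ) → ℝ≥0 := fun α => ((M α : ℝ≥0)⁻¹) ^ u with hw
  have hwm : ∀ α β, w (α + β) = w α * w β := by
    intro α β
    simp only [hw, hMm]
    push_cast
    rw [mul_inv, mul_pow]
  have hw0 : ∀ α, w α ≠ 0 := by
    intro α
    have : M α ≠ 0 := by have := h1 α; omega
    simp only [hw]
    exact pow_ne_zero _ (inv_ne_zero (by exact_mod_cast this))
  have hidx : ∀ α : σ →₀ ℕ, ∃ s, (∃ t ∈ S, t ≤ α) → s ∈ S ∧ s ≤ α := by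
    intro α
    by_cases hα : ∃ t ∈ S, t ≤ α
    · obtain ⟨t, ht⟩ := hα
      exact ⟨t, fun _ => ht⟩
    · exact ⟨0, fun h => absurd h hα⟩
  choose idx hidx using hidx
  let D : (σ →₀ ℕ) → (σ →₀ ℕ) → Prop := fun s α => (∃ t ∈ S, t ≤ α) ∧ idx α = s
  have hD1 : ∀ α s t, D s α → D t α → s = t := fun α s t hs ht => hs.2.symm.trans ht.2
  have hD2 : ∀ s α, D s α → s ≤ α := by
    rintro s α ⟨h', rfl⟩; exact (hidx α h').2
  let A : MvPowerSeries σ ℂ →+ MvPowerSeries σ ℂ :=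
    { toFun := fun Q => ∑ s ∈ S, shiftPart s (D s) Q * T s
      map_zero' := by
        refine Finset.sum_eq_zero fun s _ => ?_
        have : shiftPart s (D s) 0 = 0 := by ext; simp [coeff_shiftPart]
        rw [this, zero_mul]
      map_add' := by
        intro Q Q'
        rw [← Finset.sum_add_distrib]
        refine Finset.sum_congr rfl fun s _ => ?_
        rw [← add_mul]
        congr 1
        ext β
        simp only [coeff_shiftPart, map_add]
        split_ifs <;> simp }
  have hAdef : ∀ Q, A Q = ∑ s ∈ S, shiftPart s (D s) Q * T s := fun Q => rfl
  obtain ⟨P', hP', hP'N⟩ := exists_series_fixed (w := w) M A (by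
      intro Q α hQ
      rw [hAdef, map_sum]
      refine Finset.sum_eq_zero fun s hs => ?_
      rw [MvPowerSeries.coeff_mul]
      refine Finset.sum_eq_zero fun x hx => ?_
      by_cases hx2 : M x.2 ≤ M s
      · rw [hT s hs _ hx2, mul_zero]
      · push Not at hx2
        rw [coeff_shiftPart, hQ, ite_self, zero_mul]
        rw [← Finset.HasAntidiagonal.mem_antidiagonal.1 hx, hMm, hMm]
        exact Nat.mul_lt_mul_of_pos_left hx2 (h1 _)) (by
      intro Q
      calc wnorm w (A Q) ≤ ∑ s ∈ S, wnorm w (shiftPart s (D s) Q * T s) := wnorm_sum _ _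
        _ ≤ ∑ s ∈ S, 2⁻¹ * (wnorm w (shiftPart s (D s) Q) * w s) := by
            refine Finset.sum_le_sum fun s hs => (wnorm_mul hwm _ _).trans ?_
            calc wnorm w (shiftPart s (D s) Q) * wnorm w (T s)
                ≤ wnorm w (shiftPart s (D s) Q) * (2⁻¹ * w s) := by gcongr; exact hu s hs
              _ = _ := by ring
        _ ≤ 2⁻¹ * wnorm w Q := by
            rw [← Finset.mul_sum]; gcongr; exact sum_wnorm_shiftPart hwm S D hD1 Q)
    (P : MvPowerSeries σ ℂ)
  have hP'fin : wnorm w P' ≠ ⊤ := ne_top_of_le_ne_top (ENNReal.mul_ne_top (by simp) hPu) hP'N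
  have hq : ∀ s ∈ S, shiftPart s (D s) P' ∈ convSeries σ := by
    intro s hs
    refine mem_convSeries_of_wnorm hB1 hB h1 (u := u) ?_
    have h3 : wnorm w (shiftPart s (D s) P') * w s ≤ wnorm w P' :=
      (Finset.single_le_sum (f := fun s => wnorm w (shiftPart s (D s) P') * w s)
        (fun _ _ => zero_le) hs).trans (sum_wnorm_shiftPart hwm S D hD1 P')
    intro htop
    change wnorm w _ = ⊤ at htop
    rw [htop, ENNReal.top_mul (by exact_mod_cast hw0 s)] at h3
    exact hP'fin (top_le_iff.1 h3)
  let q : (σ →₀ ℕ) → convSeries σ := fun s =>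
    if hs : s ∈ S then ⟨shiftPart s (D s) P', hq s hs⟩ else 0
  have hqv : ∀ s ∈ S, (q s : MvPowerSeries σ ℂ) = shiftPart s (D s) P' := by
    intro s hs
    simp only [q, dif_pos hs]
  have hspan : ∑ s ∈ S, q s * h s ∈ Submodule.span (convSeries σ) ((S.image h : Finset _) : Set (convSeries σ)) := by
    refine Submodule.sum_mem _ fun s hs => ?_
    exact Submodule.smul_mem _ (q s) (Submodule.subset_span (by
      rw [Finset.coe_image]; exact ⟨s, hs, rfl⟩))
  have hspanI : ∑ s ∈ S, q s * h s ∈ I :=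
    I.sum_mem fun s hs => I.mul_mem_left _ (hh s hs).1
  suffices hr : P - ∑ s ∈ S, q s * h s = 0 by
    rw [sub_eq_zero.1 hr]; exact hspan
  set r : convSeries σ := P - ∑ s ∈ S, q s * h s with hr
  have hrI : r ∈ I := I.sub_mem hP hspanI
  have hrv : (r : MvPowerSeries σ ℂ) = P' - ∑ s ∈ S, MvPowerSeries.monomial s 1 * shiftPart s (D s) P' := by
    have e1 : (P : MvPowerSeries σ ℂ) = P' - A P' := by
      rw [eq_sub_iff_add_eq]; exact hP'.symm
    rw [hr, AddSubgroupClass.coe_sub, e1, hAdef, AddSubmonoidClass.coe_finsetSum, sub_sub,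
      ← Finset.sum_add_distrib]
    congr 1
    refine Finset.sum_congr rfl fun s hs => ?_
    rw [MulMemClass.coe_mul, hqv s hs]
    simp only [T]; ring
  have hrc : ∀ α, (∃ s ∈ S, s ≤ α) → MvPowerSeries.coeff α (r : MvPowerSeries σ ℂ) = 0 := by
    intro α hα
    rw [hrv, map_sub, map_sum]
    have : ∀ s ∈ S, MvPowerSeries.coeff α (MvPowerSeries.monomial s 1 * shiftPart s (D s) P') =
        if D s α then MvPowerSeries.coeff α P' else 0 := by
      intro s _
      rw [coeff_monomial_mul_shiftPart s (D s) (hD2 s) P' α]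
      congr
    rw [Finset.sum_congr rfl this, Finset.sum_eq_single_of_mem (idx α) (hidx α hα).1
      (fun t _ ht => if_neg fun h' => ht h'.2.symm), if_pos ⟨hα, rfl⟩, sub_self]
  -- The remainder has no exponent above `S`, but its initial exponent would lie in `E`.
  by_contra hr0
  have hr0' : (r : MvPowerSeries σ ℂ) ≠ 0 := fun h' => hr0 (Subtype.ext h')
  have hne : ∃ m, ∃ α, M α = m ∧ MvPowerSeries.coeff α (r : MvPowerSeries σ ℂ) ≠ 0 := by
    by_contra hcon
    push Not at hcon
    exact hr0' (MvPowerSeries.ext fun α => by rw [hcon _ α rfl]; simp)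
  obtain ⟨α, hα, hα0⟩ := Nat.find_spec hne
  have hαE : α ∈ E := by
    have hC : MvPowerSeries.C (MvPowerSeries.coeff α (r : MvPowerSeries σ ℂ))⁻¹ ∈ convSeries σ := by
      refine ⟨1, one_pos, ?_⟩
      rw [show (MvPowerSeries.C (MvPowerSeries.coeff α (r : MvPowerSeries σ ℂ))⁻¹ :
        MvPowerSeries σ ℂ) = MvPowerSeries.monomial 0 _ from rfl, wnorm_monomial]
      simp
    refine ⟨⟨_, hC⟩ * r, I.mul_mem_left _ hrI, ?_, ?_⟩
    · rw [MulMemClass.coe_mul, MvPowerSeries.coeff_C_mul, inv_mul_cancel₀ hα0]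
    · intro β hβ
      rw [MulMemClass.coe_mul, MvPowerSeries.coeff_C_mul]
      have := Nat.find_min hne (m := M β) (by rw [← hα]; exact hβ)
      push Not at this
      rw [this β rfl, mul_zero]
  exact hα0 (hrc α (hES α hαE))

/-! ### Osgood's lemma -/

/-- `f` is holomorphic in each variable separately on the open polydisc of radius `R`. -/
def SepHolo {m : ℕ} (R : ℝ) (f : (Fin m → ℂ) → ℂ) : Prop :=
  ∀ x : Fin m → ℂ, (∀ j, ‖x j‖ < R) → ∀ i,
    DifferentiableOn ℂ (fun w => f (Function.update x i w)) (Metric.ball 0 R)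

lemma norm_dslope_le_of_bound {R M : ℝ} {g : ℂ → ℂ} (hR : 0 < R)
    (hd : DifferentiableOn ℂ g (Metric.ball 0 R)) (hb : ∀ z ∈ Metric.ball (0 : ℂ) R, ‖g z‖ ≤ M)
    {z : ℂ} (hz : z ∈ Metric.ball (0 : ℂ) R) : ‖dslope g 0 z‖ ≤ 2 / R * M := by
  have := Complex.norm_dslope_le_div_of_mapsTo_ball (R₂ := 2 * M) hd (fun w hw => by
    rw [mem_closedBall_iff_norm]
    refine (norm_sub_le _ _).trans ?_
    have h1 := hb w hw
    have h2 := hb 0 (Metric.mem_ball_self hR)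
    linarith) hz
  refine this.trans (le_of_eq (by ring))

lemma update_lt {m : ℕ} {R : ℝ} {x : Fin m → ℂ} (hx : ∀ j, ‖x j‖ < R) (i : Fin m) {w : ℂ}
    (hw : ‖w‖ < R) (j : Fin m) : ‖Function.update x i w j‖ < R := by
  by_cases h : j = i
  · subst h; simpa using hw
  · simpa [h] using hx j

/-- Dividing out the first variable preserves separate holomorphy. The value at `z = 0` is a
uniform limit of difference quotients. -/
lemma dslope_step {m : ℕ} {R M : ℝ} (hR : 0 < R) (F : ℂ → (Fin m → ℂ) → ℂ)
    (ha : ∀ x : Fin m → ℂ, (∀ j, ‖x j‖ < R) →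
      DifferentiableOn ℂ (fun z => F z x) (Metric.ball 0 R))
    (hb : ∀ z, ‖z‖ < R → SepHolo R (F z))
    (hc : ∀ z, ‖z‖ < R → ∀ x : Fin m → ℂ, (∀ j, ‖x j‖ < R) → ‖F z x‖ ≤ M) :
    (∀ x : Fin m → ℂ, (∀ j, ‖x j‖ < R) →
      DifferentiableOn ℂ (fun z => dslope (fun z => F z x) 0 z) (Metric.ball 0 R)) ∧
    (∀ z, ‖z‖ < R → SepHolo R (fun x => dslope (fun z => F z x) 0 z)) ∧
    (∀ z, ‖z‖ < R → ∀ x : Fin m → ℂ, (∀ j, ‖x j‖ < R) →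
      ‖dslope (fun z => F z x) 0 z‖ ≤ 2 / R * M) := by
  have h1 : ∀ x : Fin m → ℂ, (∀ j, ‖x j‖ < R) →
      DifferentiableOn ℂ (fun z => dslope (fun z => F z x) 0 z) (Metric.ball 0 R) := fun x hx =>
    (Complex.differentiableOn_dslope (Metric.ball_mem_nhds 0 hR)).2 (ha x hx)
  have h3 : ∀ z, ‖z‖ < R → ∀ x : Fin m → ℂ, (∀ j, ‖x j‖ < R) →
      ‖dslope (fun z => F z x) 0 z‖ ≤ 2 / R * M := fun z hz x hx =>
    norm_dslope_le_of_bound hR (ha x hx) (fun w hw => hc w (by simpa using hw) x hx)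
      (by simpa using hz)
  refine ⟨h1, ?_, h3⟩
  have hne : ∀ z, z ≠ 0 → ‖z‖ < R → SepHolo R (fun x => dslope (fun z => F z x) 0 z) := by
    intro z hz0 hz x hx i
    simp only [dslope_of_ne _ hz0, slope_def_module]
    exact ((hb z hz x hx i).sub (hb 0 (by simpa using hR) x hx i)).const_smul (z - 0)⁻¹
  intro z hz
  rcases eq_or_ne z 0 with rfl | hz0
  swap
  · exact hne z hz0 hz
  intro x hx i
  have hlim : TendstoLocallyUniformlyOn
      (fun (z : ℂ) (w : ℂ) => dslope (fun z => F z (Function.update x i w)) 0 z)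
      (fun w => dslope (fun z => F z (Function.update x i w)) 0 0) (nhdsWithin 0 {0}ᶜ)
      (Metric.ball 0 R) := by
    refine TendstoUniformlyOn.tendstoLocallyUniformlyOn ?_
    rw [Metric.tendstoUniformlyOn_iff]
    intro ε hε
    have hK : Filter.Tendsto (fun z : ℂ => ‖z‖ * (2 / R * (2 / R * M))) (nhdsWithin 0 {0}ᶜ)
        (nhds 0) := by
      have : Filter.Tendsto (fun z : ℂ => ‖z‖ * (2 / R * (2 / R * M))) (nhds 0)
          (nhds (‖(0 : ℂ)‖ * (2 / R * (2 / R * M)))) := by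
        apply Continuous.tendsto; fun_prop
      rw [norm_zero, zero_mul] at this
      exact this.mono_left nhdsWithin_le_nhds
    filter_upwards [hK.eventually_lt_const hε,
      nhdsWithin_le_nhds (Metric.ball_mem_nhds (0 : ℂ) hR)] with z hz1 hz2 w hw
    have hw' : ‖w‖ < R := by simpa using hw
    have hxw := update_lt hx i hw'
    have hB := norm_dslope_le_of_bound hR (h1 _ hxw)
      (fun z hz => h3 z (by simpa using hz) _ hxw) hz2
    have e := sub_smul_dslope (fun z => dslope (fun z => F z (Function.update x i w)) 0 z) 0 z
    rw [dist_comm, dist_eq_norm, ← e, sub_zero, norm_smul]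
    exact (mul_le_mul_of_nonneg_left hB (norm_nonneg _)).trans_lt hz1
  refine hlim.differentiableOn ?_ Metric.isOpen_ball
  filter_upwards [self_mem_nhdsWithin, nhdsWithin_le_nhds (Metric.ball_mem_nhds (0 : ℂ) hR)]
    with z hz1 hz2
  exact hne z hz1 (by simpa using hz2) x hx i

/-- Exponents in `m + 1` variables split off the first exponent. -/
noncomputable def finsuppConsEquiv (m : ℕ) : ℕ × (Fin m →₀ ℕ) ≃ (Fin (m + 1) →₀ ℕ) where
  toFun p := Finsupp.cons p.1 p.2
  invFun α := (α 0, Finsupp.tail α)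
  left_inv p := by simp
  right_inv α := by simp

lemma degree_cons {m : ℕ} (k : ℕ) (α : Fin m →₀ ℕ) :
    (Finsupp.cons k α).degree = k + α.degree := by
  rw [Finsupp.degree_eq_sum, Finsupp.degree_eq_sum, Fin.sum_univ_succ]
  simp

lemma summable_pow_degree_fin (m : ℕ) {t : ℝ} (h0 : 0 ≤ t) (h1 : t < 1) :
    Summable fun α : Fin m →₀ ℕ => t ^ α.degree := by
  induction m with
  | zero => exact Summable.of_finite
  | succ m ih =>
    rw [← (finsuppConsEquiv m).summable_iff]
    have := (summable_geometric_of_lt_one h0 h1).mul_of_nonneg ih (fun _ => pow_nonneg h0 _)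
      (fun _ => pow_nonneg h0 _)
    refine this.congr fun p => ?_
    simp [finsuppConsEquiv, degree_cons, pow_add]

lemma summable_pow_degree (σ : Type*) [Fintype σ] {t : ℝ} (h0 : 0 ≤ t) (h1 : t < 1) :
    Summable fun α : σ →₀ ℕ => t ^ α.degree := by
  let e := Fintype.equivFin σ
  rw [← (Finsupp.domCongr (M := ℕ) e.symm).toEquiv.summable_iff]
  refine (summable_pow_degree_fin _ h0 h1).congr fun α => ?_
  have : (Finsupp.domCongr (M := ℕ) e.symm α).degree = α.degree := by
    rw [Finsupp.degree_eq_sum, Finsupp.degree_eq_sum]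
    exact e.sum_comp (fun j => α j)
  simpa using congrArg (fun k => t ^ k) this.symm

/-- Osgood's lemma with Cauchy-type bounds: a bounded separately holomorphic function on a polydisc
is the sum of a power series on a smaller polydisc. -/
theorem osgood_fin (m : ℕ) {R M : ℝ} (hR : 0 < R) (f : (Fin m → ℂ) → ℂ) (hs : SepHolo R f)
    (hb : ∀ x : Fin m → ℂ, (∀ j, ‖x j‖ < R) → ‖f x‖ ≤ M) :
    ∃ c : (Fin m →₀ ℕ) → ℂ, (∀ α, ‖c α‖ ≤ M * (2 / R) ^ α.degree) ∧
      ∀ x : Fin m → ℂ, (∀ j, ‖x j‖ < R / 2) → HasSum (fun α => c α * ∏ i, x i ^ α i) (f x) := by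
  induction m generalizing M with
  | zero =>
    refine ⟨fun _ => f 0, fun α => ?_, fun x _ => ?_⟩
    · rw [Subsingleton.elim α 0]; simpa using hb 0 (fun j => j.elim0)
    · rw [Subsingleton.elim x 0]
      simp
  | succ m ih =>
    let G : ℕ → ℂ → (Fin m → ℂ) → ℂ := fun k => Nat.rec (fun z x => f (Fin.cons z x))
      (fun _ F z x => dslope (fun z => F z x) 0 z) k
    have hcons : ∀ z (x : Fin m → ℂ), ‖z‖ < R → (∀ j, ‖x j‖ < R) →
        ∀ j, ‖(Fin.cons z x : Fin (m + 1) → ℂ) j‖ < R := by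
      intro z x hz hx j
      refine Fin.cases ?_ (fun j => ?_) j
      · simpa using hz
      · simpa using hx j
    have hG : ∀ k, (∀ x : Fin m → ℂ, (∀ j, ‖x j‖ < R) →
        DifferentiableOn ℂ (fun z => G k z x) (Metric.ball 0 R)) ∧
        (∀ z, ‖z‖ < R → SepHolo R (G k z)) ∧
        (∀ z, ‖z‖ < R → ∀ x : Fin m → ℂ, (∀ j, ‖x j‖ < R) → ‖G k z x‖ ≤ (2 / R) ^ k * M) := by
      intro k
      induction k with
      | zero =>
        refine ⟨fun x hx => ?_, fun z hz x hx i => ?_, fun z hz x hx => ?_⟩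
        · have := hs (Fin.cons 0 x) (hcons 0 x (by simpa using hR) hx) 0
          simpa [G] using this
        · have := hs (Fin.cons z x) (hcons z x hz hx) i.succ
          simpa [G, ← Fin.cons_update] using this
        · simpa [G] using hb _ (hcons z x hz hx)
      | succ k ihk =>
        obtain ⟨h1, h2, h3⟩ := dslope_step hR (G k) ihk.1 ihk.2.1 ihk.2.2
        refine ⟨h1, h2, fun z hz x hx => (h3 z hz x hx).trans (le_of_eq ?_)⟩
        rw [pow_succ]; ring
    choose c hc1 hc2 using fun k => ih (G k 0) ((hG k).2.1 0 (by simpa using hR))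
      ((hG k).2.2 0 (by simpa using hR))
    have hcb : ∀ α : Fin (m + 1) →₀ ℕ, ‖c (α 0) (Finsupp.tail α)‖ ≤ M * (2 / R) ^ α.degree := by
      intro α
      refine (hc1 _ _).trans (le_of_eq ?_)
      conv_rhs => rw [← Finsupp.cons_tail α, degree_cons, pow_add]
      ring
    refine ⟨fun α => c (α 0) (Finsupp.tail α), hcb, fun x hx => ?_⟩
    have hM : 0 ≤ M := (norm_nonneg _).trans (hb 0 (by simpa using hR))
    have hxn : ‖x‖ < R / 2 := (pi_norm_lt_iff (by positivity)).2 hx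
    set t := 2 / R * ‖x‖ with ht
    have ht0 : 0 ≤ t := by positivity
    have ht1 : t < 1 := by
      calc t < 2 / R * (R / 2) := by rw [ht]; gcongr
        _ = 1 := by field_simp
    have hsum : Summable (fun α : Fin (m + 1) →₀ ℕ =>
        c (α 0) (Finsupp.tail α) * ∏ i, x i ^ α i) := by
      refine Summable.of_norm_bounded ((summable_pow_degree_fin (m + 1) ht0 ht1).mul_left M) ?_
      intro α
      rw [norm_mul, norm_prod]
      have : ∏ i, ‖x i ^ α i‖ ≤ ‖x‖ ^ α.degree := by
        rw [Finsupp.degree_eq_sum, ← Finset.prod_pow_eq_pow_sum]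
        refine Finset.prod_le_prod (fun _ _ => norm_nonneg _) fun i _ => ?_
        rw [norm_pow]; gcongr; exact norm_le_pi_norm x i
      calc _ ≤ M * (2 / R) ^ α.degree * ‖x‖ ^ α.degree := by
            gcongr; exact hcb α
        _ = _ := by rw [ht, mul_pow]; ring
    have hx' : ∀ j, ‖Fin.tail x j‖ < R / 2 := fun j => hx j.succ
    have hlt : ∀ z : ℂ, ‖z‖ < R / 2 → ‖z‖ < R := fun z hz => by linarith
    have h1 := (finsuppConsEquiv m).hasSum_iff.2 hsum.hasSum
    have h2 : HasSum (fun k => G k 0 (Fin.tail x) * x 0 ^ k)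
        (∑' α : Fin (m + 1) →₀ ℕ, c (α 0) (Finsupp.tail α) * ∏ i, x i ^ α i) := by
      refine h1.prod_fiberwise fun k => ?_
      have h := (hc2 k _ hx').mul_right (x 0 ^ k)
      refine (congrArg (fun u => HasSum u _) (funext fun α => ?_)).mp h
      simp [finsuppConsEquiv, Fin.prod_univ_succ, Fin.tail]
      ring
    have hpart : ∀ k, f x = ∑ j ∈ Finset.range k, G j 0 (Fin.tail x) * x 0 ^ j +
        x 0 ^ k * G k (x 0) (Fin.tail x) := by
      intro k
      induction k with
      | zero => simp [G]
      | succ k ihk =>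
        have e := sub_smul_dslope (fun z => G k z (Fin.tail x)) 0 (x 0)
        rw [ihk, Finset.sum_range_succ]
        have : G (k + 1) (x 0) (Fin.tail x) = dslope (fun z => G k z (Fin.tail x)) 0 (x 0) := rfl
        rw [this, pow_succ]
        simp only [sub_zero, smul_eq_mul] at e
        linear_combination -(x 0 ^ k) * e
    have h3 : Filter.Tendsto (fun k => ∑ j ∈ Finset.range k, G j 0 (Fin.tail x) * x 0 ^ j)
        Filter.atTop (nhds (f x)) := by
      rw [tendsto_iff_norm_sub_tendsto_zero]
      have hz : Filter.Tendsto (fun k : ℕ => M * t ^ k) Filter.atTop (nhds 0) := by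
        simpa using (tendsto_pow_atTop_nhds_zero_of_lt_one ht0 ht1).const_mul M
      refine squeeze_zero (fun _ => norm_nonneg _) (fun k => ?_) hz
      have e : ∑ j ∈ Finset.range k, G j 0 (Fin.tail x) * x 0 ^ j - f x =
          -(x 0 ^ k * G k (x 0) (Fin.tail x)) := by rw [hpart k]; ring
      rw [e, norm_neg, norm_mul, norm_pow]
      have := (hG k).2.2 (x 0) (hlt _ (hx 0)) (Fin.tail x) fun j => hlt _ (hx' j)
      calc _ ≤ ‖x‖ ^ k * ((2 / R) ^ k * M) := by gcongr; exact norm_le_pi_norm x 0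
        _ = _ := by rw [ht, mul_pow]; ring
    have := tendsto_nhds_unique h2.tendsto_sum_nat h3
    rw [← this]
    exact hsum.hasSum

theorem osgood {σ : Type*} [Fintype σ] [DecidableEq σ] {R M : ℝ} (hR : 0 < R) (f : (σ → ℂ) → ℂ)
    (hs : ∀ x : σ → ℂ, (∀ j, ‖x j‖ < R) → DifferentiableAt ℂ f x)
    (hb : ∀ x : σ → ℂ, (∀ j, ‖x j‖ < R) → ‖f x‖ ≤ M) :
    ∃ c : (σ →₀ ℕ) → ℂ, (∀ α, ‖c α‖ ≤ M * (2 / R) ^ α.degree) ∧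
      ∀ x : σ → ℂ, (∀ j, ‖x j‖ < R / 2) → HasSum (fun α => c α * ∏ i, x i ^ α i) (f x) := by
  let e := Fintype.equivFin σ
  have key : ∀ x : Fin (Fintype.card σ) → ℂ, (∀ j, ‖x j‖ < R) → ∀ j, ‖(fun i => x (e i)) j‖ < R :=
    fun x hx j => hx _
  obtain ⟨c, hc1, hc2⟩ := osgood_fin (Fintype.card σ) hR (fun x => f fun i => x (e i))
    (by
      intro x hx i w hw
      refine DifferentiableAt.differentiableWithinAt ?_
      have h1 := hs (fun j => Function.update x i w (e j))
        (key _ (update_lt hx i (by simpa using hw)))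
      have h2 : DifferentiableAt ℂ (fun w => (fun j => Function.update x i w (e j))) w := by
        rw [differentiableAt_pi]
        intro j
        by_cases h : e j = i
        · subst h; simp
        · simp [h]
      exact h1.comp w h2)
    (fun x hx => hb _ (key x hx))
  let E := (Finsupp.domCongr (M := ℕ) e).toEquiv
  have hE : ∀ α i, E α (e i) = α i := fun α i => by simp [E]
  refine ⟨fun α => c (E α), fun α => ?_, fun x hx => ?_⟩
  · refine (hc1 _).trans (le_of_eq ?_)
    congr 2
    rw [Finsupp.degree_eq_sum, Finsupp.degree_eq_sum, ← e.sum_comp]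
    simp [hE]
  · have h := hc2 (fun i => x (e.symm i)) (fun j => hx _)
    simp only [Equiv.symm_apply_apply] at h
    rw [← E.hasSum_iff] at h
    convert h using 1
    funext α
    simp only [Function.comp]
    rw [← e.prod_comp]
    simp [hE]

/-! ### Evaluation and differentiation of convergent power series -/

lemma summable_coeff {σ : Type*} {r : ℝ≥0} {P : MvPowerSeries σ ℂ}
    (hP : wnorm (fun α => r ^ α.degree) P ≠ ⊤) :
    Summable fun α => ‖MvPowerSeries.coeff α P‖ * (r : ℝ) ^ α.degree := by
  have : wnorm (fun α => r ^ α.degree) P =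
      ∑' α, ((‖MvPowerSeries.coeff α P‖₊ * r ^ α.degree : ℝ≥0) : ℝ≥0∞) := by
    refine tsum_congr fun α => ?_
    rw [ENNReal.coe_mul]; rfl
  rw [this, ENNReal.tsum_coe_ne_top_iff_summable] at hP
  exact (NNReal.summable_coe.2 hP).congr fun α => by simp

lemma C_mem_convSeries {σ : Type*} (c : ℂ) : MvPowerSeries.C c ∈ convSeries σ := by
  refine ⟨1, one_pos, ?_⟩
  rw [show (MvPowerSeries.C c : MvPowerSeries σ ℂ) = MvPowerSeries.monomial 0 c from rfl,
    wnorm_monomial]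
  simp

lemma X_mem_convSeries {σ : Type*} (i : σ) : MvPowerSeries.X i ∈ convSeries σ := by
  refine ⟨1, one_pos, ?_⟩
  rw [show (MvPowerSeries.X i : MvPowerSeries σ ℂ) = MvPowerSeries.monomial _ 1 from rfl,
    wnorm_monomial]
  simp

/-- Differentiation costs only a halving of the radius, as `k + 1 ≤ 2 ^ k`. -/
lemma wnorm_pderiv {σ : Type*} {r : ℝ≥0} (hr : 0 < r) {P : MvPowerSeries σ ℂ} (i : σ)
    (hP : wnorm (fun α => r ^ α.degree) P ≠ ⊤) :
    wnorm (fun α => (r / 2) ^ α.degree) (MvPowerSeries.pderiv ℂ i P) ≠ ⊤ := by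
  have h1 : wnorm (fun α => (r / 2) ^ α.degree) (MvPowerSeries.pderiv ℂ i P) ≤
      (r⁻¹ : ℝ≥0) * wnorm (fun α => r ^ α.degree) P := by
    unfold wnorm
    have hinj : Function.Injective fun β : σ →₀ ℕ => β + Finsupp.single i 1 :=
      add_left_injective _
    refine le_trans ?_ (mul_le_mul_right (ENNReal.tsum_comp_le_tsum_of_injective hinj _) _)
    rw [← ENNReal.tsum_mul_left]
    refine ENNReal.tsum_le_tsum fun β => ?_
    rw [MvPowerSeries.coeff_pderiv]
    have h2 : ‖MvPowerSeries.coeff (β + Finsupp.single i 1) P * ((β i : ℂ) + 1)‖₊ *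
        (r / 2) ^ β.degree ≤ r⁻¹ * (‖MvPowerSeries.coeff (β + Finsupp.single i 1) P‖₊ *
          r ^ (β + Finsupp.single i 1).degree) := by
      have h3 : ‖((β i : ℂ) + 1)‖₊ ≤ 2 ^ β.degree := by
        have h4 : (β i + 1 : ℕ) ≤ 2 ^ β.degree :=
          (Nat.lt_two_pow_self).trans_le (Nat.pow_le_pow_right (by norm_num)
            (Finsupp.le_degree i β))
        have h5 : ‖((β i : ℂ) + 1)‖₊ = ((β i + 1 : ℕ) : ℝ≥0) := by
          rw [← Nat.cast_add_one, Complex.nnnorm_natCast]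
        rw [h5]; exact_mod_cast h4
      have h6 : r⁻¹ * r ^ (β + Finsupp.single i 1).degree = r ^ β.degree := by
        rw [map_add, Finsupp.degree_single, pow_succ]; field_simp
      rw [nnnorm_mul, div_pow]
      calc _ ≤ ‖MvPowerSeries.coeff (β + Finsupp.single i 1) P‖₊ * 2 ^ β.degree *
            (r ^ β.degree / 2 ^ β.degree) := by gcongr
        _ = ‖MvPowerSeries.coeff (β + Finsupp.single i 1) P‖₊ * r ^ β.degree := by field_simp
        _ = _ := by rw [← h6]; ring
    have := ENNReal.coe_le_coe.2 h2
    simpa [ENNReal.coe_mul, enorm_eq_nnnorm] using this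
  exact ne_top_of_le_ne_top (ENNReal.mul_ne_top ENNReal.coe_ne_top hP) h1

lemma pderiv_mem_convSeries {σ : Type*} {P : MvPowerSeries σ ℂ} (hP : P ∈ convSeries σ) (i : σ) :
    MvPowerSeries.pderiv ℂ i P ∈ convSeries σ := by
  obtain ⟨r, hr, h⟩ := hP
  exact ⟨r / 2, by positivity, wnorm_pderiv hr i h⟩

section evaluation
variable {σ : Type*} [Fintype σ]

/-- The monomial `x ^ α`. -/
noncomputable def mon (x : σ → ℂ) (α : σ →₀ ℕ) : ℂ := ∏ i, x i ^ α i

/-- The sum at `x` of a power series (zero when it does not converge). -/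
noncomputable def mev (x : σ → ℂ) (P : MvPowerSeries σ ℂ) : ℂ :=
  ∑' α, MvPowerSeries.coeff α P * mon x α

lemma mon_add (x : σ → ℂ) (α β : σ →₀ ℕ) : mon x (α + β) = mon x α * mon x β := by
  simp [mon, pow_add, Finset.prod_mul_distrib]

lemma mon_zero (x : σ → ℂ) : mon x 0 = 1 := by simp [mon]

lemma mon_single (x : σ → ℂ) (i : σ) : mon x (Finsupp.single i 1) = x i := by
  classical
  unfold mon
  rw [Finset.prod_eq_single i]
  · simp
  · intro j _ hj; rw [Finsupp.single_eq_of_ne hj, pow_zero]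
  · simp

lemma norm_mon_le {r : ℝ} {x : σ → ℂ} (hx : ∀ i, ‖x i‖ ≤ r) (α : σ →₀ ℕ) :
    ‖mon x α‖ ≤ r ^ α.degree := by
  unfold mon
  rw [norm_prod, Finsupp.degree_eq_sum, ← Finset.prod_pow_eq_pow_sum]
  refine Finset.prod_le_prod (fun _ _ => norm_nonneg _) fun i _ => ?_
  rw [norm_pow]; gcongr; exact hx i

lemma summable_mev {r : ℝ≥0} {P : MvPowerSeries σ ℂ} (hP : wnorm (fun α => r ^ α.degree) P ≠ ⊤)
    {x : σ → ℂ} (hx : ∀ i, ‖x i‖ ≤ r) :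
    Summable fun α => ‖MvPowerSeries.coeff α P * mon x α‖ := by
  refine (summable_coeff hP).of_nonneg_of_le (fun _ => norm_nonneg _) fun α => ?_
  rw [norm_mul]; gcongr; exact norm_mon_le hx α

lemma mev_add {r : ℝ≥0} {P Q : MvPowerSeries σ ℂ} (hP : wnorm (fun α => r ^ α.degree) P ≠ ⊤)
    (hQ : wnorm (fun α => r ^ α.degree) Q ≠ ⊤) {x : σ → ℂ} (hx : ∀ i, ‖x i‖ ≤ r) :
    mev x (P + Q) = mev x P + mev x Q := by
  unfold mev
  rw [← (summable_mev hP hx).of_norm.tsum_add (summable_mev hQ hx).of_norm]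
  simp [add_mul]

lemma tsum_mul_aux {A : Type*} [AddCommMonoid A] [Finset.HasAntidiagonal A] {f g : A → ℂ}
    (hf : Summable fun a => ‖f a‖) (hg : Summable fun a => ‖g a‖) :
    (∑' a, f a) * ∑' a, g a =
      ∑' a, ∑ p ∈ Finset.HasAntidiagonal.antidiagonal a, f p.1 * g p.2 :=
  hf.of_norm.tsum_mul_tsum_eq_tsum_sum_antidiagonal hg.of_norm
    (summable_mul_of_summable_norm hf hg)

lemma mev_mul {r : ℝ≥0} {P Q : MvPowerSeries σ ℂ} (hP : wnorm (fun α => r ^ α.degree) P ≠ ⊤)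
    (hQ : wnorm (fun α => r ^ α.degree) Q ≠ ⊤) {x : σ → ℂ} (hx : ∀ i, ‖x i‖ ≤ r) :
    mev x (P * Q) = mev x P * mev x Q := by
  classical
  have h1 := summable_mev hP hx
  have h2 := summable_mev hQ hx
  have h := tsum_mul_aux h1 h2
  refine Eq.trans ?_ h.symm
  refine tsum_congr fun α => ?_
  rw [MvPowerSeries.coeff_mul, Finset.sum_mul]
  refine Finset.sum_congr rfl fun p hp => ?_
  have hp' : p.1 + p.2 = α := Finset.HasAntidiagonal.mem_antidiagonal.1 hp
  rw [← hp', mon_add]; ring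

lemma mev_monomial (x : σ → ℂ) (α : σ →₀ ℕ) (c : ℂ) :
    mev x (MvPowerSeries.monomial α c) = c * mon x α := by
  classical
  unfold mev
  rw [tsum_eq_single α]
  · simp
  · intro β hβ; rw [MvPowerSeries.coeff_monomial, if_neg hβ, zero_mul]

lemma mev_C (x : σ → ℂ) (c : ℂ) : mev x (MvPowerSeries.C c) = c := by
  have := mev_monomial x 0 c
  rwa [mon_zero, mul_one] at this

lemma mev_X (x : σ → ℂ) (i : σ) : mev x (MvPowerSeries.X i) = x i := by
  have := mev_monomial x (Finsupp.single i 1) 1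
  rwa [mon_single, one_mul] at this

end evaluation

section evaluation_deriv
variable {σ : Type*} [Fintype σ]

lemma hasFDerivAt_mon (α : σ →₀ ℕ) (x : σ → ℂ) : HasFDerivAt (fun y => mon y α)
    (∑ i, ((α i : ℂ) * mon x (α - Finsupp.single i 1)) •
      (ContinuousLinearMap.proj i : (σ → ℂ) →L[ℂ] ℂ)) x := by
  classical
  have h := HasFDerivAt.finsetProd (u := Finset.univ) (x := x)
    (g := fun (i : σ) (y : σ → ℂ) => y i ^ α i)
    (g' := fun i => ((α i : ℂ) * x i ^ (α i - 1)) •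
      (ContinuousLinearMap.proj i : (σ → ℂ) →L[ℂ] ℂ)) (fun i _ => by
      have h1 : HasFDerivAt (fun y : σ → ℂ => y i)
        (ContinuousLinearMap.proj i : (σ → ℂ) →L[ℂ] ℂ) x := hasFDerivAt_apply i x
      simpa [Function.comp_def] using (hasDerivAt_pow (α i) (x i)).comp_hasFDerivAt x h1)
  refine h.congr_fderiv (Finset.sum_congr rfl fun i _ => ?_)
  rw [smul_smul]
  congr 1
  rw [mon, ← Finset.mul_prod_erase _ _ (Finset.mem_univ i)]
  have : ∏ j ∈ Finset.univ.erase i, x j ^ (α - Finsupp.single i 1 : σ →₀ ℕ) j =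
      ∏ j ∈ Finset.univ.erase i, x j ^ α j := by
    refine Finset.prod_congr rfl fun j hj => ?_
    rw [Finsupp.tsub_apply, Finsupp.single_eq_of_ne (Finset.ne_of_mem_erase hj), tsub_zero]
  rw [this, Finsupp.tsub_apply, Finsupp.single_eq_same]
  ring

lemma norm_deriv_coeff_le {r : ℝ} (hr : 0 < r) {x : σ → ℂ} (hx : ∀ i, ‖x i‖ ≤ r / 2)
    (α : σ →₀ ℕ) (i : σ) :
    ‖(α i : ℂ) * mon x (α - Finsupp.single i 1)‖ ≤ r⁻¹ * r ^ α.degree := by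
  by_cases h : α i = 0
  · rw [h]; simp; positivity
  have hle : Finsupp.single i 1 ≤ α := by
    rw [Finsupp.single_le_iff]; omega
  obtain ⟨β, rfl⟩ := exists_add_of_le hle
  rw [add_tsub_cancel_left, map_add, Finsupp.degree_single, Finsupp.add_apply,
    Finsupp.single_eq_same, norm_mul]
  have h4 : (1 + β i : ℕ) ≤ 2 ^ β.degree := by
    rw [add_comm]
    exact (Nat.lt_two_pow_self).trans_le (Nat.pow_le_pow_right (by norm_num)
      (Finsupp.le_degree i β))
  have h5 : ‖((1 + β i : ℕ) : ℂ)‖ ≤ 2 ^ β.degree := by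
    rw [Complex.norm_natCast]; exact_mod_cast h4
  calc _ ≤ 2 ^ β.degree * (r / 2) ^ β.degree := by
        gcongr; exact norm_mon_le hx β
    _ = r ^ β.degree := by rw [← mul_pow]; congr 1; ring
    _ = _ := by rw [pow_add]; field_simp

/-- Termwise differentiation of a convergent power series. -/
lemma hasFDerivAt_mev {r : ℝ≥0} (hr : 0 < r) {P : MvPowerSeries σ ℂ}
    (hP : wnorm (fun α => r ^ α.degree) P ≠ ⊤) {x : σ → ℂ} (hx : ‖x‖ < r / 2) :
    HasFDerivAt (fun y => mev y P)
      (∑ i, mev x (MvPowerSeries.pderiv ℂ i P) •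
        (ContinuousLinearMap.proj i : (σ → ℂ) →L[ℂ] ℂ)) x := by
  classical
  have hr' : (0 : ℝ) < r := hr
  let a : (σ →₀ ℕ) → (σ → ℂ) → σ → ℂ := fun α y i =>
    MvPowerSeries.coeff α P * ((α i : ℂ) * mon y (α - Finsupp.single i 1))
  have hab : ∀ α y i, ‖y‖ < r / 2 →
      ‖a α y i‖ ≤ (r : ℝ)⁻¹ * (‖MvPowerSeries.coeff α P‖ * (r : ℝ) ^ α.degree) := by
    intro α y i hy
    rw [norm_mul]
    calc _ ≤ ‖MvPowerSeries.coeff α P‖ * ((r : ℝ)⁻¹ * (r : ℝ) ^ α.degree) := by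
          gcongr
          exact norm_deriv_coeff_le hr' (fun j => (norm_le_pi_norm y j).trans hy.le) α i
      _ = _ := by ring
  have hcs := (summable_coeff hP).mul_left (r : ℝ)⁻¹
  have hsa : ∀ i, Summable fun α => a α x i := fun i =>
    Summable.of_norm_bounded hcs fun α => hab α x i hx
  have hproj : ∀ i, ‖(ContinuousLinearMap.proj i : (σ → ℂ) →L[ℂ] ℂ)‖ ≤ 1 := fun i =>
    ContinuousLinearMap.opNorm_le_bound _ zero_le_one fun y => by
      simpa using norm_le_pi_norm y i
  have h := hasFDerivAt_tsum_of_isPreconnected (𝕜 := ℂ) (s := Metric.ball (0 : σ → ℂ) (r / 2))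
    (f := fun α y => MvPowerSeries.coeff α P * mon y α)
    (f' := fun α y => ∑ i, a α y i • (ContinuousLinearMap.proj i : (σ → ℂ) →L[ℂ] ℂ))
    (u := fun α => ∑ _i : σ, (r : ℝ)⁻¹ * (‖MvPowerSeries.coeff α P‖ * (r : ℝ) ^ α.degree))
    (x₀ := 0) (x := x) (summable_sum fun i _ => hcs) Metric.isOpen_ball
    (convex_ball _ _).isPreconnected
    (fun α y _ => by
      have := (hasFDerivAt_mon α y).const_mul (MvPowerSeries.coeff α P)
      refine this.congr_fderiv ?_
      rw [Finset.smul_sum]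
      exact Finset.sum_congr rfl fun i _ => by rw [smul_smul])
    (fun α y hy => by
      refine (norm_sum_le _ _).trans (Finset.sum_le_sum fun i _ => ?_)
      rw [norm_smul]
      refine (mul_le_of_le_one_right (norm_nonneg _) (hproj i)).trans (hab α y i ?_)
      simpa using hy)
    (Metric.mem_ball_self (by positivity))
    (summable_mev (x := 0) hP (by simp)).of_norm
    (by simpa using hx)
  refine h.congr_fderiv ?_
  rw [Summable.tsum_finsetSum (fun i _ => (hsa i).smul_const _)]
  refine Finset.sum_congr rfl fun i _ => ?_
  rw [(hsa i).tsum_smul_const]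
  congr 1
  have hinj : Function.Injective fun β : σ →₀ ℕ => β + Finsupp.single i 1 :=
    add_left_injective _
  rw [← hinj.tsum_eq, mev]
  · refine tsum_congr fun β => ?_
    simp only [a]
    rw [MvPowerSeries.coeff_pderiv, add_tsub_cancel_right, Finsupp.add_apply,
      Finsupp.single_eq_same]
    push_cast; ring
  · intro α hα
    have h0 : α i ≠ 0 := fun h0 => hα (by simp [a, h0])
    have hle : Finsupp.single i 1 ≤ α := by
      rw [Finsupp.single_le_iff]; omega
    exact ⟨α - Finsupp.single i 1, tsub_add_cancel_of_le hle⟩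

/-- Hadamard's lemma for convergent power series. -/
lemma hadamard_convSeries (P : convSeries σ) :
    ∃ Q : σ → convSeries σ, P = ⟨_, C_mem_convSeries (MvPowerSeries.constantCoeff P.1)⟩ +
      ∑ i, ⟨_, X_mem_convSeries i⟩ * Q i := by
  classical
  obtain ⟨r, hr, hP⟩ := P.2
  rcases isEmpty_or_nonempty σ with hσ | hσ
  · refine ⟨fun i => (hσ.false i).elim, ?_⟩
    apply Subtype.ext
    rw [Finset.univ_eq_empty, Finset.sum_empty, add_zero]
    ext α
    rw [Subsingleton.elim α 0]; simp
  let idx : (σ →₀ ℕ) → σ := fun α => if h : ∃ i, α i ≠ 0 then h.choose else Classical.arbitrary σ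
  have hidx : ∀ α : σ →₀ ℕ, α ≠ 0 → α (idx α) ≠ 0 := by
    intro α hα
    have h : ∃ i, α i ≠ 0 := by
      by_contra hc; push Not at hc; exact hα (Finsupp.ext hc)
    simp only [idx, dif_pos h]; exact h.choose_spec
  let D : σ → (σ →₀ ℕ) → Prop := fun i α => α ≠ 0 ∧ idx α = i
  have hQ : ∀ i, shiftPart (Finsupp.single i 1) (D i) P.1 ∈ convSeries σ := by
    intro i
    refine ⟨r, hr, ?_⟩
    have h1 := sum_wnorm_shiftPart (w := fun α => r ^ α.degree)
      (fun α β => by rw [map_add, pow_add]) {Finsupp.single i 1} 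
      (fun s α => s = Finsupp.single i 1 ∧ D i α) (fun α s t h h' => h.1.trans h'.1.symm) P.1
    have h2 : (fun α => Finsupp.single i 1 = Finsupp.single i 1 ∧ D i α) = D i := by
      funext α; simp
    rw [Finset.sum_singleton, h2] at h1
    intro h3
    rw [h3, ENNReal.top_mul (by simpa using hr.ne')] at h1
    exact hP (top_le_iff.1 h1)
  refine ⟨fun i => ⟨_, hQ i⟩, ?_⟩
  apply Subtype.ext
  simp only [AddMemClass.coe_add, AddSubmonoidClass.coe_finsetSum, MulMemClass.coe_mul]
  ext α
  rw [map_add, map_sum]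
  have : ∀ i ∈ Finset.univ, MvPowerSeries.coeff α ((MvPowerSeries.X i : MvPowerSeries σ ℂ) *
      shiftPart (Finsupp.single i 1) (D i) P.1) =
      if D i α then MvPowerSeries.coeff α P.1 else 0 := by
    intro i _
    have := coeff_monomial_mul_shiftPart (Finsupp.single i 1) (D i) (fun α hα => by
      rw [Finsupp.single_le_iff]
      have := hidx α hα.1; rw [hα.2] at this; omega) P.1 α
    refine Eq.trans this ?_
    congr
  rw [Finset.sum_congr rfl this]
  by_cases hα : α = 0
  · subst hα; simp [D]
  · rw [Finset.sum_eq_single_of_mem (idx α) (Finset.mem_univ _)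
      (fun j _ hj => if_neg fun h' => hj h'.2.symm), if_pos ⟨hα, rfl⟩, MvPowerSeries.coeff_C,
      if_neg hα, zero_add]

end evaluation_deriv

/-! ### Formal arcs in the ring of convergent power series -/

/-- Constants as convergent power series. -/
noncomputable def cvC (σ : Type*) : ℂ →+* convSeries σ :=
  (MvPowerSeries.C : ℂ →+* MvPowerSeries σ ℂ).codRestrict (convSeries σ) C_mem_convSeries

/-- The coordinate functions as convergent power series. -/
noncomputable def cvX {σ : Type*} (i : σ) : convSeries σ := ⟨_, X_mem_convSeries i⟩

/-- Partial derivatives of convergent power series. -/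
noncomputable def cvD {σ : Type*} (i : σ) (P : convSeries σ) : convSeries σ :=
  ⟨_, pderiv_mem_convSeries P.2 i⟩

lemma cvD_add {σ : Type*} (i : σ) (P Q : convSeries σ) : cvD i (P + Q) = cvD i P + cvD i Q :=
  Subtype.ext (map_add (MvPowerSeries.pderiv ℂ i) P.1 Q.1)

lemma cvD_mul {σ : Type*} (i : σ) (P Q : convSeries σ) :
    cvD i (P * Q) = P * cvD i Q + Q * cvD i P :=
  Subtype.ext (by
    have := (MvPowerSeries.pderiv ℂ i).leibniz P.1 Q.1
    simpa [cvD] using this)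

lemma cvD_C {σ : Type*} (i : σ) (c : ℂ) : cvD i (cvC σ c) = 0 :=
  Subtype.ext (MvPowerSeries.pderiv_C ..)

lemma cvD_X {σ : Type*} [DecidableEq σ] (i j : σ) : cvD i (cvX j) = if j = i then 1 else 0 := by
  apply Subtype.ext
  by_cases h : j = i
  · subst h
    rw [if_pos rfl]; exact MvPowerSeries.pderiv_X_self ..
  · rw [if_neg h]
    change MvPowerSeries.pderiv ℂ i (MvPowerSeries.X j) = 0
    rw [MvPowerSeries.pderiv_X]
    simp [Pi.single_apply, h]

/-- Chain rule for a formal arc, i.e. a ring homomorphism from convergent to formal power series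
sending the coordinates into the maximal ideal. No continuity is assumed; by Hadamard's lemma the
defect is divisible by every power of the parameter. -/
lemma arc_chain_rule {σ : Type*} [Fintype σ] (φ : convSeries σ →+* PowerSeries ℂ)
    (hC : ∀ c, φ (cvC σ c) = PowerSeries.C c)
    (hX : ∀ i, PowerSeries.constantCoeff (φ (cvX i)) = 0) (P : convSeries σ) :
    PowerSeries.derivative ℂ (φ P) =
      ∑ i, φ (cvD i P) * PowerSeries.derivative ℂ (φ (cvX i)) := by
  classical
  let E : convSeries σ → PowerSeries ℂ := fun P => PowerSeries.derivative ℂ (φ P) -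
    ∑ i, φ (cvD i P) * PowerSeries.derivative ℂ (φ (cvX i))
  have hadd : ∀ P Q, E (P + Q) = E P + E Q := by
    intro P Q
    simp only [E, map_add, cvD_add, add_mul, Finset.sum_add_distrib]
    ring
  have hmul : ∀ P Q, E (P * Q) = φ P * E Q + φ Q * E P := by
    intro P Q
    simp only [E, map_mul, map_add, cvD_mul, add_mul, Finset.sum_add_distrib, Derivation.leibniz,
      smul_eq_mul, mul_assoc, ← Finset.mul_sum]
    ring
  have hEC : ∀ c, E (cvC σ c) = 0 := by
    intro c
    simp only [E, hC, cvD_C, map_zero, zero_mul, Finset.sum_const_zero, sub_zero]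
    exact PowerSeries.derivative_C ..
  have hEX : ∀ i, E (cvX i) = 0 := by
    intro i
    simp [E, cvD_X, apply_ite φ]
  have hE0 : E 0 = 0 := by simpa using hEC 0
  have hsum : ∀ (s : Finset σ) (Q : σ → convSeries σ),
      E (∑ i ∈ s, cvX i * Q i) = ∑ i ∈ s, φ (cvX i) * E (Q i) := by
    intro s Q
    induction s using Finset.induction_on with
    | empty => simpa using hE0
    | insert a s ha ih =>
      rw [Finset.sum_insert ha, Finset.sum_insert ha, hadd, ih, hmul, hEX, mul_zero, add_zero]
  have hdvd : ∀ N : ℕ, ∀ P, (PowerSeries.X : PowerSeries ℂ) ^ N ∣ E P := by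
    intro N
    induction N with
    | zero => intro P; simp
    | succ N ih =>
      intro P
      obtain ⟨Q, hQ⟩ := hadamard_convSeries P
      have hQ' : P = cvC σ (MvPowerSeries.constantCoeff P.1) + ∑ i, cvX i * Q i := hQ
      rw [hQ', hadd, hEC, hsum, zero_add]
      refine Finset.dvd_sum fun i _ => ?_
      rw [pow_succ']
      exact mul_dvd_mul (PowerSeries.X_dvd_iff.2 (hX i)) (ih _)
  have : E P = 0 := by
    ext m
    exact (PowerSeries.X_pow_dvd_iff.1 (hdvd (m + 1) P)) m (Nat.lt_succ_self m)
  exact sub_eq_zero.1 this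

/-! ### From sequences to formal arcs -/

lemma mev_zero_point {σ : Type*} [Fintype σ] (P : MvPowerSeries σ ℂ) :
    mev 0 P = MvPowerSeries.constantCoeff P := by
  classical
  unfold mev
  rw [tsum_eq_single 0]
  · simp [mon_zero]
  · intro α hα
    obtain ⟨i, hi⟩ : ∃ i, α i ≠ 0 := by
      by_contra hc; push Not at hc; exact hα (Finsupp.ext hc)
    have : mon (0 : σ → ℂ) α = 0 := Finset.prod_eq_zero (Finset.mem_univ i) (by simp [hi])
    rw [this, mul_zero]

lemma wnorm_radius_mono {σ : Type*} {P : MvPowerSeries σ ℂ} {r s : ℝ≥0} (h : r ≤ s)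
    (hP : wnorm (fun α => s ^ α.degree) P ≠ ⊤) : wnorm (fun α => r ^ α.degree) P ≠ ⊤ :=
  ne_top_of_le_ne_top hP (wnorm_mono (fun α => by gcongr) P)

lemma exists_common_radius {σ : Type*} (P Q : convSeries σ) : ∃ r : ℝ≥0, 0 < r ∧
    wnorm (fun α => r ^ α.degree) P.1 ≠ ⊤ ∧ wnorm (fun α => r ^ α.degree) Q.1 ≠ ⊤ := by
  obtain ⟨r, hr, hP⟩ := P.2
  obtain ⟨s, hs, hQ⟩ := Q.2
  exact ⟨min r s, lt_min hr hs, wnorm_radius_mono (min_le_left _ _) hP,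
    wnorm_radius_mono (min_le_right _ _) hQ⟩

lemma eventually_norm_le {σ : Type*} [Fintype σ] {l : Filter ℕ} {x : ℕ → σ → ℂ}
    (hx : Tendsto x l (nhds 0)) {r : ℝ≥0} (hr : 0 < r) : ∀ᶠ k in l, ∀ i, ‖x k i‖ ≤ r := by
  have h : ∀ᶠ k in l, ‖x k‖ < r := by
    have := (tendsto_norm_zero.comp hx).eventually_lt_const (show (0 : ℝ) < r from hr)
    simpa using this
  filter_upwards [h] with k hk i using (norm_le_pi_norm (x k) i).trans hk.le

/-- Evaluation of convergent power series along a sequence tending to `0`, as germs at a filter. -/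
noncomputable def germEv {σ : Type*} [Fintype σ] {l : Filter ℕ} {x : ℕ → σ → ℂ}
    (hx : Tendsto x l (nhds 0)) : convSeries σ →+* Germ l ℂ where
  toFun P := ((fun k => mev (x k) P.1 : ℕ → ℂ) : Germ l ℂ)
  map_one' := by
    refine Germ.coe_eq.2 (Eventually.of_forall fun k => ?_)
    simpa using mev_C (x k) 1
  map_zero' := by
    refine Germ.coe_eq.2 (Eventually.of_forall fun k => ?_)
    simpa using mev_C (x k) 0
  map_add' P Q := by
    obtain ⟨r, hr, hP, hQ⟩ := exists_common_radius P Q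
    refine Germ.coe_eq.2 ?_
    filter_upwards [eventually_norm_le hx hr] with k hk using mev_add hP hQ hk
  map_mul' P Q := by
    obtain ⟨r, hr, hP, hQ⟩ := exists_common_radius P Q
    refine Germ.coe_eq.2 ?_
    filter_upwards [eventually_norm_le hx hr] with k hk using mev_mul hP hQ hk

lemma tendsto_mev {σ : Type*} [Fintype σ] {l : Filter ℕ} {x : ℕ → σ → ℂ}
    (hx : Tendsto x l (nhds 0)) (P : convSeries σ) :
    Tendsto (fun k => mev (x k) P.1) l (nhds (MvPowerSeries.constantCoeff P.1)) := by
  obtain ⟨r, hr, hP⟩ := P.2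
  have h := (hasFDerivAt_mev hr hP (x := 0) (by simpa using hr)).continuousAt
  have hcomp := h.tendsto.comp hx
  rwa [mev_zero_point] at hcomp

/-- A sequence tending to `0`, together with finitely many auxiliary convergent sequences, can be
replaced by a formal arc satisfying all the analytic relations that hold along an ultrafilter. -/
theorem exists_arc_of_seq {σ J : Type} [Fintype σ] [Finite J] (l : Ultrafilter ℕ)
    {x : ℕ → σ → ℂ} (hx : Tendsto x l (nhds 0)) (a : J → ℕ → ℂ) (lim : J → ℂ)
    (ha : ∀ j, Tendsto (a j) l (nhds (lim j))) (h : convSeries σ)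
    (hh : ∀ᶠ k in l, mev (x k) h.1 ≠ 0) :
    ∃ (φ : convSeries σ →+* PowerSeries ℂ) (b : J → PowerSeries ℂ),
      (∀ c, φ (cvC σ c) = PowerSeries.C c) ∧
      (∀ P, PowerSeries.constantCoeff (φ P) = MvPowerSeries.constantCoeff P.1) ∧
      (∀ j, PowerSeries.constantCoeff (b j) = lim j) ∧ φ h ≠ 0 ∧
      ∀ p : MvPolynomial J (convSeries σ),
        MvPolynomial.eval₂ (germEv hx) (fun j => ((a j : ℕ → ℂ) : Germ (l : Filter ℕ) ℂ)) p = 0 →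
        MvPolynomial.eval₂ φ b p = 0 := by
  let A : J → Germ (l : Filter ℕ) ℂ := fun j => ((a j : ℕ → ℂ) : Germ (l : Filter ℕ) ℂ)
  let Ψ : MvPolynomial J (convSeries σ) →+* Germ (l : Filter ℕ) ℂ :=
    MvPolynomial.eval₂Hom (germEv hx) A
  let cc : convSeries σ →+* ℂ :=
    (MvPowerSeries.constantCoeff (σ := σ) (R := ℂ)).comp (convSeries σ).subtype
  let st : MvPolynomial J (convSeries σ) →+* ℂ := MvPolynomial.eval₂Hom cc lim
  have hlim : ∀ t, ∃ u : ℕ → ℂ, Ψ t = (u : Germ (l : Filter ℕ) ℂ) ∧ Tendsto u l (nhds (st t)) := by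
    intro t
    induction t using MvPolynomial.induction_on with
    | C P =>
      refine ⟨fun k => mev (x k) P.1, ?_, ?_⟩
      · simp only [Ψ, MvPolynomial.eval₂Hom_C]; rfl
      · simp only [st, MvPolynomial.eval₂Hom_C]
        exact tendsto_mev hx P
    | add p q hp hq =>
      obtain ⟨u, hu, hu'⟩ := hp
      obtain ⟨v, hv, hv'⟩ := hq
      exact ⟨u + v, by rw [map_add, hu, hv]; rfl, by rw [map_add]; exact hu'.add hv'⟩
    | mul_X p j hp =>
      obtain ⟨u, hu, hu'⟩ := hp
      refine ⟨u * a j, ?_, ?_⟩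
      · rw [map_mul, hu]; simp only [Ψ, MvPolynomial.eval₂Hom_X']; rfl
      · rw [map_mul]; simp only [st, MvPolynomial.eval₂Hom_X']; exact hu'.mul (ha j)
  have hprime : (RingHom.ker Ψ).IsPrime := RingHom.ker_isPrime Ψ
  obtain ⟨φ, h1, h2, h3, h4⟩ := exists_formal_arc
    ((MvPolynomial.C : convSeries σ →+* MvPolynomial J (convSeries σ)).comp (cvC σ)) st
    (by
      intro c
      simp only [st, RingHom.comp_apply, MvPolynomial.eval₂Hom_C]
      change MvPowerSeries.constantCoeff (MvPowerSeries.C c : MvPowerSeries σ ℂ) = c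
      exact MvPowerSeries.constantCoeff_C c)
    (RingHom.ker Ψ)
    (by
      intro t ht
      obtain ⟨u, hu, hu'⟩ := hlim t
      rw [RingHom.mem_ker, hu] at ht
      have h0 : u =ᶠ[(l : Filter ℕ)] fun _ => 0 := Germ.coe_eq.1 ht
      exact tendsto_nhds_unique hu' ((tendsto_congr' h0).2 tendsto_const_nhds))
    (MvPolynomial.C h)
    (by
      rw [RingHom.mem_ker]
      simp only [Ψ, MvPolynomial.eval₂Hom_C]
      intro h0
      have h0' : ∀ᶠ k in (l : Filter ℕ), mev (x k) h.1 = 0 := Germ.coe_eq.1 h0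
      exact (hh.and h0').exists.elim fun k hk => hk.1 hk.2)
  refine ⟨φ.comp MvPolynomial.C, fun j => φ (MvPolynomial.X j), h1, ?_, ?_, h4, ?_⟩
  · intro P
    rw [RingHom.comp_apply, h2]
    simp only [st, MvPolynomial.eval₂Hom_C]
    rfl
  · intro j
    rw [h2]
    simp only [st, MvPolynomial.eval₂Hom_X']
  · intro p hp
    have e : MvPolynomial.eval₂Hom (φ.comp MvPolynomial.C) (fun j => φ (MvPolynomial.X j)) = φ := by
      ext <;> simp
    have := RingHom.congr_fun e p
    rw [MvPolynomial.coe_eval₂Hom] at this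
    rw [this]
    exact h3 p hp

/-! ### Exclusion of degenerate arcs -/

/-- Logarithmic derivative of a nonzero formal power series: `X ρ' = ρ q` with `q(0) = ord ρ`. -/
lemma exists_logDeriv {ρ : PowerSeries ℂ} (hρ : ρ ≠ 0) : ∃ (m : ℕ) (u q : PowerSeries ℂ),
    ρ = PowerSeries.X ^ m * u ∧ PowerSeries.constantCoeff u ≠ 0 ∧
    PowerSeries.X * PowerSeries.derivative ℂ ρ = ρ * q ∧
    PowerSeries.constantCoeff q = m := by
  set m := ρ.order.toNat with hm
  obtain ⟨u, hu⟩ : PowerSeries.X ^ m ∣ ρ := PowerSeries.X_pow_order_dvd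
  have hu0 : PowerSeries.constantCoeff u ≠ 0 := by
    have h1 := PowerSeries.coeff_order hρ
    rw [← hm] at h1
    rw [hu, PowerSeries.coeff_X_pow_mul'] at h1
    simpa using h1
  refine ⟨m, u, (m : PowerSeries ℂ) + PowerSeries.X * PowerSeries.derivative ℂ u * u⁻¹,
    hu, hu0, ?_, by simp⟩
  have huu : u * u⁻¹ = 1 := PowerSeries.mul_inv_cancel u hu0
  rw [hu, Derivation.leibniz, Derivation.leibniz_pow]
  simp only [smul_eq_mul, nsmul_eq_mul, PowerSeries.derivative_X]
  have hX : (m : PowerSeries ℂ) * PowerSeries.X ^ (m - 1) * PowerSeries.X =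
      (m : PowerSeries ℂ) * PowerSeries.X ^ m := by
    rcases Nat.eq_zero_or_pos m with h | h
    · rw [h]; simp
    · rw [mul_assoc, ← pow_succ, Nat.sub_add_cancel h]
  linear_combination u * hX -
    (PowerSeries.X ^ (m + 1) * PowerSeries.derivative ℂ u) * huu

lemma exists_tendsto_of_bounded (l : Ultrafilter ℕ) {u : ℕ → ℂ} {M : ℝ}
    (h : ∀ᶠ k in l, ‖u k‖ ≤ M) : ∃ c, Tendsto u l (nhds c) := by
  have hc := isCompact_closedBall (0 : ℂ) M
  obtain ⟨c, _, hc'⟩ := hc.ultrafilter_le_nhds (l.map u) (by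
    rw [Filter.le_principal_iff]
    exact h.mono fun k hk => by simpa using hk)
  exact ⟨c, hc'⟩

section arcs
variable {n : ℕ}

/-- The point `(x, conj x)` of the complexified space. -/
noncomputable def dbl (x : Fin n → ℂ) : Fin n ⊕ Fin n → ℂ := Sum.elim x fun i => conj (x i)

lemma tendsto_dbl {l : Filter ℕ} {x : ℕ → Fin n → ℂ} (hx : Tendsto x l (nhds 0)) :
    Tendsto (fun k => dbl (x k)) l (nhds 0) := by
  rw [tendsto_pi_nhds] at hx ⊢
  rintro (i | i)
  · exact hx i
  · have := (Complex.continuous_conj.tendsto 0).comp (hx i)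
    simpa [dbl, Function.comp_def] using this

/-- The series `∑ xᵢ yᵢ`, restricting to `‖x‖²` on `y = conj x`. -/
noncomputable def sqSeries (n : ℕ) : convSeries (Fin n ⊕ Fin n) :=
  ∑ i : Fin n, cvX (Sum.inl i) * cvX (Sum.inr i)

lemma germEv_X {l : Filter ℕ} {x : ℕ → Fin n → ℂ} (hx : Tendsto x l (nhds 0)) (i : Fin n) :
    germEv (tendsto_dbl hx) (cvX (Sum.inl i)) = ((fun k => x k i : ℕ → ℂ) : Germ l ℂ) := by
  refine Germ.coe_eq.2 (Eventually.of_forall fun k => ?_)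
  exact mev_X (dbl (x k)) (Sum.inl i)

lemma germEv_Y {l : Filter ℕ} {x : ℕ → Fin n → ℂ} (hx : Tendsto x l (nhds 0)) (i : Fin n) :
    germEv (tendsto_dbl hx) (cvX (Sum.inr i)) = ((fun k => conj (x k i) : ℕ → ℂ) : Germ l ℂ) := by
  refine Germ.coe_eq.2 (Eventually.of_forall fun k => ?_)
  exact mev_X (dbl (x k)) (Sum.inr i)

lemma germEv_sq {l : Filter ℕ} {x : ℕ → Fin n → ℂ} (hx : Tendsto x l (nhds 0)) :
    germEv (tendsto_dbl hx) (sqSeries n) =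
      ((fun k => ((∑ i, ‖x k i‖ ^ 2 : ℝ) : ℂ) : ℕ → ℂ) : Germ l ℂ) := by
  have h1 : germEv (tendsto_dbl hx) (sqSeries n) =
      ∑ i, (((fun k => x k i * conj (x k i)) : ℕ → ℂ) : Germ l ℂ) := by
    rw [sqSeries, map_sum]
    refine Finset.sum_congr rfl fun i _ => ?_
    rw [map_mul, germEv_X hx, germEv_Y hx]; rfl
  have h2 : ∀ s : Finset (Fin n), ∑ i ∈ s, (((fun k => x k i * conj (x k i)) : ℕ → ℂ) : Germ l ℂ) =
      ((fun k => ∑ i ∈ s, x k i * conj (x k i) : ℕ → ℂ) : Germ l ℂ) := by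
    intro s
    induction s using Finset.induction_on with
    | empty => simp; rfl
    | insert a s ha ih =>
      rw [Finset.sum_insert ha, ih]
      simp only [Finset.sum_insert ha]
      rfl
  rw [h1, h2]
  refine Germ.coe_eq.2 (Eventually.of_forall fun k => ?_)
  simp only [Complex.mul_conj, Complex.normSq_eq_norm_sq]
  push_cast; rfl

lemma germEv_eq {l : Filter ℕ} {x : ℕ → Fin n → ℂ} (hx : Tendsto x l (nhds 0))
    {P : convSeries (Fin n ⊕ Fin n)} {u : ℕ → ℂ} (h : ∀ᶠ k in l, mev (dbl (x k)) P.1 = u k) :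
    germEv (tendsto_dbl hx) P = (u : Germ l ℂ) :=
  Germ.coe_eq.2 h

lemma eventually_mev_mul_ne {l : Filter ℕ} {x : ℕ → Fin n → ℂ} (hx : Tendsto x l (nhds 0))
    {P Q : convSeries (Fin n ⊕ Fin n)} {u v : ℕ → ℂ}
    (hP : germEv (tendsto_dbl hx) P = (u : Germ l ℂ))
    (hQ : germEv (tendsto_dbl hx) Q = (v : Germ l ℂ))
    (hu : ∀ᶠ k in l, u k ≠ 0) (hv : ∀ᶠ k in l, v k ≠ 0) :
    ∀ᶠ k in l, mev (dbl (x k)) (P * Q).1 ≠ 0 := by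
  have h : germEv (tendsto_dbl hx) (P * Q) = ((u * v : ℕ → ℂ) : Germ l ℂ) := by
    rw [map_mul, hP, hQ]; rfl
  have h' : ∀ᶠ k in l, mev (dbl (x k)) (P * Q).1 = u k * v k := Germ.coe_eq.1 h
  filter_upwards [h', hu, hv] with k h1 h2 h3
  rw [h1]; exact mul_ne_zero h2 h3

end arcs

section arcs
variable {n : ℕ}

/-- No arc along which `df` is proportional to the radial form with relative size tending to `0`:
here `κ = λ ‖x‖² / f`. Along an associated formal arc, the order of `f` would be `0`. -/
lemma no_seq_of_tendsto_zero (l : Ultrafilter ℕ) {x : ℕ → Fin n → ℂ} (hx : Tendsto x l (nhds 0))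
    (P : convSeries (Fin n ⊕ Fin n)) {f κ : ℕ → ℂ}
    (hP0 : MvPowerSeries.constantCoeff P.1 = 0)
    (hP : ∀ᶠ k in l, mev (dbl (x k)) P.1 = f k) (hf : ∀ᶠ k in l, f k ≠ 0)
    (hx0 : ∀ᶠ k in l, (∑ i, ‖x k i‖ ^ 2 : ℝ) ≠ 0)
    (hκ : Tendsto κ l (nhds 0))
    (hl : ∀ i, ∀ᶠ k in l, ((∑ i, ‖x k i‖ ^ 2 : ℝ) : ℂ) * mev (dbl (x k)) (cvD (Sum.inl i) P).1 =
      κ k * f k * conj (x k i))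
    (hr : ∀ i, ∀ᶠ k in l, mev (dbl (x k)) (cvD (Sum.inr i) P).1 = 0) : False := by
  set g : ℕ → ℝ := fun k => ∑ i, ‖x k i‖ ^ 2 with hg
  have hgnn : ∀ k, 0 ≤ g k := fun k => Finset.sum_nonneg fun i _ => by positivity
  let ρ : ℕ → ℂ := fun k => (Real.sqrt (g k) : ℂ)
  have hle : ∀ k i, ‖x k i‖ ≤ Real.sqrt (g k) := by
    intro k i
    apply Real.le_sqrt_of_sq_le
    exact Finset.single_le_sum (f := fun i => ‖x k i‖ ^ 2) (fun i _ => by positivity)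
      (Finset.mem_univ i)
  have hρ2 : ∀ k, ρ k * ρ k = (g k : ℂ) := by
    intro k
    simp only [ρ]
    rw [← Complex.ofReal_mul, Real.mul_self_sqrt (hgnn k)]
  have hρ0 : ∀ᶠ k in l, ρ k ≠ 0 := by
    filter_upwards [hx0] with k hk h
    apply hk
    have := hρ2 k
    rw [h, zero_mul] at this
    exact_mod_cast this.symm
  have hnρ : ∀ k, ‖ρ k‖ = Real.sqrt (g k) := fun k => by
    simp only [ρ, Complex.norm_real, Real.norm_eq_abs, abs_of_nonneg (Real.sqrt_nonneg _)]
  have hub : ∀ i, ∃ c, Tendsto (fun k => x k i / ρ k) l (nhds c) := fun i =>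
    exists_tendsto_of_bounded l (M := 1) (Eventually.of_forall fun k => by
      rw [norm_div, hnρ]; exact div_le_one_of_le₀ (hle k i) (Real.sqrt_nonneg _))
  have hvb : ∀ i, ∃ c, Tendsto (fun k => conj (x k i) / ρ k) l (nhds c) := fun i =>
    exists_tendsto_of_bounded l (M := 1) (Eventually.of_forall fun k => by
      rw [norm_div, hnρ, RCLike.norm_conj]
      exact div_le_one_of_le₀ (hle k i) (Real.sqrt_nonneg _))
  choose cu hcu using hub
  choose cv hcv using hvb
  obtain ⟨cρ, hcρ⟩ : ∃ c, Tendsto ρ l (nhds c) := by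
    have h1 : Tendsto g l (nhds 0) := by
      have : Tendsto g l (nhds (∑ i : Fin n, ‖(0 : ℂ)‖ ^ 2)) :=
        tendsto_finsetSum _ fun i _ => ((tendsto_pi_nhds.1 hx i).norm).pow 2
      simpa using this
    exact ⟨_, (Complex.continuous_ofReal.comp Real.continuous_sqrt).continuousAt.tendsto.comp h1⟩
  have hGP : germEv (tendsto_dbl hx) P = (f : Germ (l : Filter ℕ) ℂ) := germEv_eq hx hP
  have hGG := germEv_sq hx
  let a : Fin 2 ⊕ (Fin n ⊕ Fin n) → ℕ → ℂ := Sum.elim ![κ, ρ]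
    (Sum.elim (fun i k => x k i / ρ k) (fun i k => conj (x k i) / ρ k))
  let lim : Fin 2 ⊕ (Fin n ⊕ Fin n) → ℂ := Sum.elim ![0, cρ] (Sum.elim cu cv)
  have ha : ∀ j, Tendsto (a j) l (nhds (lim j)) := by
    rintro (j | j | j)
    · fin_cases j
      · exact hκ
      · exact hcρ
    · exact hcu j
    · exact hcv j
  obtain ⟨φ, b, hC, hcc, hb, hh, hrel⟩ := exists_arc_of_seq l (tendsto_dbl hx) a lim ha
    (P * sqSeries n) (eventually_mev_mul_ne hx hGP hGG hf
      (hx0.mono fun k hk => by exact_mod_cast hk))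
  have r1 : ∀ i, φ (sqSeries n) * φ (cvD (Sum.inl i) P) =
      b (Sum.inl 0) * φ P * φ (cvX (Sum.inr i)) := by
    intro i
    have := hrel (MvPolynomial.C (sqSeries n) * MvPolynomial.C (cvD (Sum.inl i) P) -
      MvPolynomial.X (Sum.inl 0) * MvPolynomial.C P * MvPolynomial.C (cvX (Sum.inr i))) (by
        rw [MvPolynomial.eval₂_sub]
        simp only [MvPolynomial.eval₂_mul, MvPolynomial.eval₂_C, MvPolynomial.eval₂_X]
        rw [hGG, hGP, germEv_Y hx, sub_eq_zero]
        exact Germ.coe_eq.2 (hl i))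
    rw [MvPolynomial.eval₂_sub] at this
    simpa only [MvPolynomial.eval₂_mul, MvPolynomial.eval₂_C, MvPolynomial.eval₂_X,
      sub_eq_zero] using this
  have r2 : ∀ i, φ (cvD (Sum.inr i) P) = 0 := by
    intro i
    have := hrel (MvPolynomial.C (cvD (Sum.inr i) P)) (by
        rw [MvPolynomial.eval₂_C]
        exact Germ.coe_eq.2 (hr i))
    rwa [MvPolynomial.eval₂_C] at this
  have r3 : ∀ i, φ (cvX (Sum.inl i)) = b (Sum.inl 1) * b (Sum.inr (Sum.inl i)) := by
    intro i
    have := hrel (MvPolynomial.C (cvX (Sum.inl i)) -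
      MvPolynomial.X (Sum.inl 1) * MvPolynomial.X (Sum.inr (Sum.inl i))) (by
        rw [MvPolynomial.eval₂_sub]
        simp only [MvPolynomial.eval₂_mul, MvPolynomial.eval₂_C, MvPolynomial.eval₂_X]
        rw [germEv_X hx, sub_eq_zero]
        refine Germ.coe_eq.2 (hρ0.mono fun k hk => ?_)
        change x k i = ρ k * (x k i / ρ k)
        field_simp)
    rw [MvPolynomial.eval₂_sub] at this
    simpa only [MvPolynomial.eval₂_mul, MvPolynomial.eval₂_C, MvPolynomial.eval₂_X,
      sub_eq_zero] using this
  have r4 : ∀ i, φ (cvX (Sum.inr i)) = b (Sum.inl 1) * b (Sum.inr (Sum.inr i)) := by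
    intro i
    have := hrel (MvPolynomial.C (cvX (Sum.inr i)) -
      MvPolynomial.X (Sum.inl 1) * MvPolynomial.X (Sum.inr (Sum.inr i))) (by
        rw [MvPolynomial.eval₂_sub]
        simp only [MvPolynomial.eval₂_mul, MvPolynomial.eval₂_C, MvPolynomial.eval₂_X]
        rw [germEv_Y hx, sub_eq_zero]
        refine Germ.coe_eq.2 (hρ0.mono fun k hk => ?_)
        change conj (x k i) = ρ k * (conj (x k i) / ρ k)
        field_simp)
    rw [MvPolynomial.eval₂_sub] at this
    simpa only [MvPolynomial.eval₂_mul, MvPolynomial.eval₂_C, MvPolynomial.eval₂_X,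
      sub_eq_zero] using this
  have r5 : φ (sqSeries n) = b (Sum.inl 1) * b (Sum.inl 1) := by
    have := hrel (MvPolynomial.C (sqSeries n) -
      MvPolynomial.X (Sum.inl 1) * MvPolynomial.X (Sum.inl 1)) (by
        rw [MvPolynomial.eval₂_sub]
        simp only [MvPolynomial.eval₂_mul, MvPolynomial.eval₂_C, MvPolynomial.eval₂_X]
        rw [hGG, sub_eq_zero]
        exact Germ.coe_eq.2 (Eventually.of_forall fun k => (hρ2 k).symm))
    rw [MvPolynomial.eval₂_sub] at this
    simpa only [MvPolynomial.eval₂_mul, MvPolynomial.eval₂_C, MvPolynomial.eval₂_X,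
      sub_eq_zero] using this
  -- Now `φ` is a formal arc `(x(t), y(t))` with `‖x‖² = ρ²`, `x = ρ u`, `y = ρ v`, along which the
  -- logarithmic derivative of `f` equals `κ ∑ v_i (s u_i + t u_i')`, and `κ(0) = 0`.
  have hκ0 : PowerSeries.constantCoeff (b (Sum.inl 0)) = 0 := hb (Sum.inl 0)
  rw [map_mul] at hh
  have hF : φ P ≠ 0 := left_ne_zero_of_mul hh
  have hG : φ (sqSeries n) ≠ 0 := right_ne_zero_of_mul hh
  have hR : b (Sum.inl 1) ≠ 0 := fun h => hG (by rw [r5, h, zero_mul])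
  obtain ⟨m, u, q, hmu, hu, hq, hqm⟩ := exists_logDeriv hF
  obtain ⟨-, -, s, -, -, hs, -⟩ := exists_logDeriv hR
  have hX0 : ∀ i, PowerSeries.constantCoeff (φ (cvX i)) = 0 := by
    intro i
    rw [hcc]
    exact MvPowerSeries.constantCoeff_X i
  have hch := arc_chain_rule φ hC hX0 P
  rw [Fintype.sum_sum_type] at hch
  simp only [r2, zero_mul, Finset.sum_const_zero, add_zero] at hch
  have key : φ (sqSeries n) * φ P * q = φ (sqSeries n) * φ P * (b (Sum.inl 0) *
      ∑ i, b (Sum.inr (Sum.inr i)) * (s * b (Sum.inr (Sum.inl i)) +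
        PowerSeries.X * PowerSeries.derivative ℂ (b (Sum.inr (Sum.inl i))))) := by
    rw [mul_assoc, ← hq, hch]
    simp only [Finset.mul_sum]
    refine Finset.sum_congr rfl fun i _ => ?_
    rw [r3 i, Derivation.leibniz]
    simp only [smul_eq_mul]
    have h1 := r1 i
    rw [r4 i] at h1
    linear_combination PowerSeries.X * (b (Sum.inl 1) * PowerSeries.derivative ℂ (b (Sum.inr (Sum.inl i))) +
      b (Sum.inr (Sum.inl i)) * PowerSeries.derivative ℂ (b (Sum.inl 1))) * h1 +
      b (Sum.inl 0) * φ P * b (Sum.inl 1) * b (Sum.inr (Sum.inr i)) * b (Sum.inr (Sum.inl i)) * hs -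
      φ P * b (Sum.inl 0) * b (Sum.inr (Sum.inr i)) * (s * b (Sum.inr (Sum.inl i)) +
        PowerSeries.X * PowerSeries.derivative ℂ (b (Sum.inr (Sum.inl i)))) * r5
  have key' := mul_left_cancel₀ (mul_ne_zero hG hF) key
  have h0 : (m : ℂ) = 0 := by
    rw [← hqm, key', map_mul, hκ0, zero_mul]
  have hm0 : m = 0 := by exact_mod_cast h0
  apply hu
  have := hcc P
  rw [hP0, hmu, hm0, pow_zero, one_mul] at this
  exact this

/-- No arc of critical points of `f` restricted to spheres along which `f` is flat against every
power of `‖x‖` and `a = f / (λ ‖x‖²)` stays bounded. -/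
lemma no_seq_of_bounded (l : Ultrafilter ℕ) {x : ℕ → Fin n → ℂ} (hx : Tendsto x l (nhds 0))
    (P Pt : convSeries (Fin n ⊕ Fin n)) {f a : ℕ → ℂ} {a₀ : ℂ}
    (hP : ∀ᶠ k in l, mev (dbl (x k)) P.1 = f k)
    (hPt : ∀ᶠ k in l, mev (dbl (x k)) Pt.1 = conj (f k)) (hf : ∀ᶠ k in l, f k ≠ 0)
    (hx0 : ∀ᶠ k in l, (∑ i, ‖x k i‖ ^ 2 : ℝ) ≠ 0)
    (hdec : ∀ N : ℕ, ∀ᶠ k in l, ‖f k‖ ≤ (∑ i, ‖x k i‖ ^ 2 : ℝ) ^ N)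
    (ha : Tendsto a l (nhds a₀))
    (hl : ∀ i, ∀ᶠ k in l, a k * ((∑ i, ‖x k i‖ ^ 2 : ℝ) : ℂ) *
      mev (dbl (x k)) (cvD (Sum.inl i) P).1 = f k * conj (x k i))
    (hr : ∀ i, ∀ᶠ k in l, mev (dbl (x k)) (cvD (Sum.inr i) P).1 = 0)
    (hlt : ∀ i, ∀ᶠ k in l, conj (a k) * ((∑ i, ‖x k i‖ ^ 2 : ℝ) : ℂ) *
      mev (dbl (x k)) (cvD (Sum.inr i) Pt).1 = conj (f k) * x k i)
    (hrt : ∀ i, ∀ᶠ k in l, mev (dbl (x k)) (cvD (Sum.inl i) Pt).1 = 0) : False := by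
  set g : ℕ → ℝ := fun k => ∑ i, ‖x k i‖ ^ 2 with hg
  have hgnn : ∀ k, 0 ≤ g k := fun k => Finset.sum_nonneg fun i _ => by positivity
  -- The exponent is large enough to contradict `c = 2 Re a₀ · ord f`, `ord f ≥ N c`.
  obtain ⟨N, hN⟩ : ∃ N : ℕ, 0 < a₀.re → 1 < 2 * N * a₀.re := by
    by_cases h : 0 < a₀.re
    · obtain ⟨N, hN⟩ := exists_nat_gt (1 / (2 * a₀.re))
      refine ⟨N, fun _ => ?_⟩
      rw [div_lt_iff₀ (by positivity)] at hN
      linarith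
    · exact ⟨0, fun h' => absurd h' h⟩
  let w : ℕ → ℂ := fun k => f k / (g k : ℂ) ^ N
  obtain ⟨w₀, hw₀⟩ : ∃ c, Tendsto w l (nhds c) :=
    exists_tendsto_of_bounded l (M := 1) ((hdec N).mono fun k hk => by
      simp only [w, norm_div, norm_pow, Complex.norm_real, Real.norm_eq_abs,
        abs_of_nonneg (hgnn k)]
      exact div_le_one_of_le₀ hk (by have := hgnn k; positivity))
  have hGP : germEv (tendsto_dbl hx) P = (f : Germ (l : Filter ℕ) ℂ) := germEv_eq hx hP
  have hGPt : germEv (tendsto_dbl hx) Pt =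
    ((fun k => conj (f k) : ℕ → ℂ) : Germ (l : Filter ℕ) ℂ) := germEv_eq hx hPt
  have hGG := germEv_sq hx
  have hPPt : germEv (tendsto_dbl hx) (P * Pt) =
      ((fun k => f k * conj (f k) : ℕ → ℂ) : Germ (l : Filter ℕ) ℂ) := by
    rw [map_mul, hGP, hGPt]; rfl
  let A : Fin 4 → ℕ → ℂ := ![a, fun k => conj (a k), w, fun k => conj (w k)]
  let lim : Fin 4 → ℂ := ![a₀, conj a₀, w₀, conj w₀]
  have hA : ∀ j, Tendsto (A j) l (nhds (lim j)) := by
    intro j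
    fin_cases j
    · exact ha
    · exact (Complex.continuous_conj.tendsto a₀).comp ha
    · exact hw₀
    · exact (Complex.continuous_conj.tendsto w₀).comp hw₀
  obtain ⟨φ, b, hC, hcc, hb, hh, hrel⟩ := exists_arc_of_seq l (tendsto_dbl hx) A lim hA
    (P * Pt * sqSeries n) (eventually_mev_mul_ne hx hPPt hGG
      (hf.mono fun k hk => mul_ne_zero hk (by simpa using hk))
      (hx0.mono fun k hk => by exact_mod_cast hk))
  have r1 : ∀ i, b 0 * φ (sqSeries n) * φ (cvD (Sum.inl i) P) = φ P * φ (cvX (Sum.inr i)) := by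
    intro i
    have := hrel (MvPolynomial.X 0 * MvPolynomial.C (sqSeries n) *
      MvPolynomial.C (cvD (Sum.inl i) P) -
      MvPolynomial.C P * MvPolynomial.C (cvX (Sum.inr i))) (by
        rw [MvPolynomial.eval₂_sub]
        simp only [MvPolynomial.eval₂_mul, MvPolynomial.eval₂_C, MvPolynomial.eval₂_X]
        rw [hGG, hGP, germEv_Y hx, sub_eq_zero]
        exact Germ.coe_eq.2 (hl i))
    rw [MvPolynomial.eval₂_sub] at this
    simpa only [MvPolynomial.eval₂_mul, MvPolynomial.eval₂_C, MvPolynomial.eval₂_X,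
      sub_eq_zero] using this
  have r1t : ∀ i, b 1 * φ (sqSeries n) * φ (cvD (Sum.inr i) Pt) =
      φ Pt * φ (cvX (Sum.inl i)) := by
    intro i
    have := hrel (MvPolynomial.X 1 * MvPolynomial.C (sqSeries n) *
      MvPolynomial.C (cvD (Sum.inr i) Pt) -
      MvPolynomial.C Pt * MvPolynomial.C (cvX (Sum.inl i))) (by
        rw [MvPolynomial.eval₂_sub]
        simp only [MvPolynomial.eval₂_mul, MvPolynomial.eval₂_C, MvPolynomial.eval₂_X]
        rw [hGG, hGPt, germEv_X hx, sub_eq_zero]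
        exact Germ.coe_eq.2 (hlt i))
    rw [MvPolynomial.eval₂_sub] at this
    simpa only [MvPolynomial.eval₂_mul, MvPolynomial.eval₂_C, MvPolynomial.eval₂_X,
      sub_eq_zero] using this
  have r2 : ∀ i, φ (cvD (Sum.inr i) P) = 0 := by
    intro i
    have := hrel (MvPolynomial.C (cvD (Sum.inr i) P)) (by
        rw [MvPolynomial.eval₂_C]
        exact Germ.coe_eq.2 (hr i))
    rwa [MvPolynomial.eval₂_C] at this
  have r2t : ∀ i, φ (cvD (Sum.inl i) Pt) = 0 := by
    intro i
    have := hrel (MvPolynomial.C (cvD (Sum.inl i) Pt)) (by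
        rw [MvPolynomial.eval₂_C]
        exact Germ.coe_eq.2 (hrt i))
    rwa [MvPolynomial.eval₂_C] at this
  have hwk : ∀ᶠ k in l, w k * (g k : ℂ) ^ N = f k := by
    filter_upwards [hx0] with k hk
    have : (g k : ℂ) ≠ 0 := by exact_mod_cast hk
    simp only [w]
    field_simp
  have r3 : b 2 * φ (sqSeries n) ^ N = φ P := by
    have := hrel (MvPolynomial.X 2 * MvPolynomial.C (sqSeries n) ^ N - MvPolynomial.C P) (by
        rw [MvPolynomial.eval₂_sub]
        simp only [MvPolynomial.eval₂_mul, MvPolynomial.eval₂_C, MvPolynomial.eval₂_X,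
          MvPolynomial.eval₂_pow]
        rw [hGG, hGP, sub_eq_zero]
        exact Germ.coe_eq.2 hwk)
    rw [MvPolynomial.eval₂_sub] at this
    simpa only [MvPolynomial.eval₂_mul, MvPolynomial.eval₂_C, MvPolynomial.eval₂_X,
      MvPolynomial.eval₂_pow, sub_eq_zero] using this
  have r3t : b 3 * φ (sqSeries n) ^ N = φ Pt := by
    have := hrel (MvPolynomial.X 3 * MvPolynomial.C (sqSeries n) ^ N - MvPolynomial.C Pt) (by
        rw [MvPolynomial.eval₂_sub]
        simp only [MvPolynomial.eval₂_mul, MvPolynomial.eval₂_C, MvPolynomial.eval₂_X,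
          MvPolynomial.eval₂_pow]
        rw [hGG, hGPt, sub_eq_zero]
        refine Germ.coe_eq.2 (hwk.mono fun k hk => ?_)
        change conj (w k) * (g k : ℂ) ^ N = conj (f k)
        rw [← hk]
        simp)
    rw [MvPolynomial.eval₂_sub] at this
    simpa only [MvPolynomial.eval₂_mul, MvPolynomial.eval₂_C, MvPolynomial.eval₂_X,
      MvPolynomial.eval₂_pow, sub_eq_zero] using this
  rw [map_mul, map_mul] at hh
  have hG : φ (sqSeries n) ≠ 0 := right_ne_zero_of_mul hh
  have hF : φ P ≠ 0 := left_ne_zero_of_mul (left_ne_zero_of_mul hh)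
  have hFt : φ Pt ≠ 0 := right_ne_zero_of_mul (left_ne_zero_of_mul hh)
  obtain ⟨m, u, q, hmu, hu, hq, hqm⟩ := exists_logDeriv hF
  obtain ⟨mt, ut, qt, hmut, hut, hqt, hqmt⟩ := exists_logDeriv hFt
  obtain ⟨c, v, s, hcv, hv, hs, hsc⟩ := exists_logDeriv hG
  have hX0 : ∀ i, PowerSeries.constantCoeff (φ (cvX i)) = 0 := by
    intro i
    rw [hcc]
    exact MvPowerSeries.constantCoeff_X i
  have hsq : φ (sqSeries n) = ∑ i, φ (cvX (Sum.inl i)) * φ (cvX (Sum.inr i)) := by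
    rw [sqSeries, map_sum]; simp only [map_mul]
  have hch := arc_chain_rule φ hC hX0 P
  rw [Fintype.sum_sum_type] at hch
  simp only [r2, zero_mul, Finset.sum_const_zero, add_zero] at hch
  have hcht := arc_chain_rule φ hC hX0 Pt
  rw [Fintype.sum_sum_type] at hcht
  simp only [r2t, zero_mul, Finset.sum_const_zero, zero_add] at hcht
  have k1 : b 0 * φ (sqSeries n) * q = PowerSeries.X *
      ∑ i, φ (cvX (Sum.inr i)) * PowerSeries.derivative ℂ (φ (cvX (Sum.inl i))) := by
    apply mul_left_cancel₀ hF
    calc φ P * (b 0 * φ (sqSeries n) * q) = b 0 * φ (sqSeries n) * (φ P * q) := by ring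
      _ = _ := by
        rw [← hq, hch]
        simp only [Finset.mul_sum]
        refine Finset.sum_congr rfl fun i _ => ?_
        linear_combination PowerSeries.X * PowerSeries.derivative ℂ (φ (cvX (Sum.inl i))) * r1 i
  have k1t : b 1 * φ (sqSeries n) * qt = PowerSeries.X *
      ∑ i, φ (cvX (Sum.inl i)) * PowerSeries.derivative ℂ (φ (cvX (Sum.inr i))) := by
    apply mul_left_cancel₀ hFt
    calc φ Pt * (b 1 * φ (sqSeries n) * qt) = b 1 * φ (sqSeries n) * (φ Pt * qt) := by ring
      _ = _ := by
        rw [← hqt, hcht]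
        simp only [Finset.mul_sum]
        refine Finset.sum_congr rfl fun i _ => ?_
        linear_combination PowerSeries.X * PowerSeries.derivative ℂ (φ (cvX (Sum.inr i))) * r1t i
  -- Logarithmic derivatives: `‖x‖² = ∑ x_i y_i` gives `s = a q + conj a · qt`.
  have k2 : s = b 0 * q + b 1 * qt := by
    apply mul_left_cancel₀ hG
    rw [← hs]
    have hd : PowerSeries.derivative ℂ (φ (sqSeries n)) =
        ∑ i, φ (cvX (Sum.inl i)) * PowerSeries.derivative ℂ (φ (cvX (Sum.inr i))) +
        ∑ i, φ (cvX (Sum.inr i)) * PowerSeries.derivative ℂ (φ (cvX (Sum.inl i))) := by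
      rw [hsq, map_sum, ← Finset.sum_add_distrib]
      exact Finset.sum_congr rfl fun i _ => by
        rw [Derivation.leibniz]; simp only [smul_eq_mul]
    rw [hd]
    linear_combination -k1 - k1t
  have hb0 : PowerSeries.constantCoeff (b 0) = a₀ := hb 0
  have hb1 : PowerSeries.constantCoeff (b 1) = conj a₀ := hb 1
  have k3 : (c : ℂ) = a₀ * m + conj a₀ * mt := by
    rw [← hsc, k2, map_add, map_mul, map_mul, hb0, hb1, hqm, hqmt]
  have k4 : (c : ℝ) = a₀.re * (m + mt) := by
    have := congrArg Complex.re k3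
    simp at this
    linarith
  have hc1 : 1 ≤ c := by
    by_contra hlt
    have h0 : c = 0 := by omega
    apply hv
    rw [h0, pow_zero, one_mul] at hcv
    rw [← hcv, hsq, map_sum]
    exact Finset.sum_eq_zero fun i _ => by rw [map_mul, hX0, zero_mul]
  have hord : ∀ (F w u : PowerSeries ℂ) (m : ℕ), w * φ (sqSeries n) ^ N = F →
      F = PowerSeries.X ^ m * u → PowerSeries.constantCoeff u ≠ 0 → c * N ≤ m := by
    intro F w u m h1 h2 h3
    by_contra hlt
    push Not at hlt
    apply h3
    have hdvd : PowerSeries.X ^ (c * N) ∣ F := by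
      rw [← h1, hcv, mul_pow, ← pow_mul]
      exact Dvd.intro_left (w * v ^ N) (by ring)
    have := PowerSeries.X_pow_dvd_iff.1 hdvd m hlt
    rw [h2, PowerSeries.coeff_X_pow_mul'] at this
    simpa using this
  have hm1 := hord _ _ _ _ r3 hmu hu
  have hm2 := hord _ _ _ _ r3t hmut hut
  have hc1' : (1 : ℝ) ≤ c := by exact_mod_cast hc1
  have hm1' : (c : ℝ) * N ≤ m := by exact_mod_cast hm1
  have hm2' : (c : ℝ) * N ≤ mt := by exact_mod_cast hm2
  have hpos : 0 < a₀.re := by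
    by_contra hneg
    push Not at hneg
    have : a₀.re * ((m : ℝ) + mt) ≤ 0 := mul_nonpos_of_nonpos_of_nonneg hneg (by positivity)
    linarith
  have h1 := hN hpos
  have h2 : a₀.re * (2 * (c * N)) ≤ a₀.re * ((m : ℝ) + mt) :=
    mul_le_mul_of_nonneg_left (by linarith) hpos.le
  have h3 : (c : ℝ) * 1 < c * (2 * N * a₀.re) := mul_lt_mul_of_pos_left h1 (by linarith)
  nlinarith

end arcs

/-! ### The radial estimate -/

/-- The sum of a convergent power series is differentiable to all finite orders at the origin, since
its partial derivatives are again sums of convergent power series. -/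
lemma contDiffAt_mev {σ : Type*} [Fintype σ] (m : ℕ) :
    ∀ P : convSeries σ, ContDiffAt ℂ m (fun z => mev z P.1) 0 := by
  have hd : ∀ P : convSeries σ, ∃ u ∈ nhds (0 : σ → ℂ), ∀ z ∈ u, HasFDerivAt (fun z => mev z P.1)
      (∑ i, mev z (cvD i P).1 • (ContinuousLinearMap.proj i : (σ → ℂ) →L[ℂ] ℂ)) z := by
    intro P
    obtain ⟨r, hr, hP⟩ := P.2
    have hr' : (0 : ℝ) < r / 2 := by positivity
    exact ⟨Metric.ball 0 (r / 2), Metric.ball_mem_nhds _ hr', fun z hz =>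
      hasFDerivAt_mev hr hP (by simpa using hz)⟩
  induction m with
  | zero =>
    intro P
    obtain ⟨u, hu, h⟩ := hd P
    exact contDiffAt_zero.2 ⟨u, hu, fun z hz => (h z hz).continuousAt.continuousWithinAt⟩
  | succ m ih =>
    intro P
    have := contDiffAt_succ_iff_hasFDerivAt (𝕜 := ℂ) (n := m) (f := fun z => mev z P.1)
      (x := (0 : σ → ℂ))
    push_cast
    refine this.2 ⟨_, hd P, ContDiffAt.sum fun i _ => ContDiffAt.smul (ih (cvD i P)) contDiffAt_const⟩

section conjugate
variable {n : ℕ}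

/-- The exchange of the two blocks of variables. -/
noncomputable def swapExp : ((Fin n ⊕ Fin n) →₀ ℕ) ≃+ ((Fin n ⊕ Fin n) →₀ ℕ) :=
  Finsupp.domCongr (Equiv.sumComm (Fin n) (Fin n))

lemma swapExp_apply (α : (Fin n ⊕ Fin n) →₀ ℕ) (i : Fin n ⊕ Fin n) :
    swapExp α i = α i.swap := rfl

/-- The series `conj (P (conj y, conj x))`: conjugate the coefficients of `P` and exchange the
two blocks of variables. On points `(x, conj x)` it takes the conjugate values of `P`. -/
noncomputable def conjSeries (P : MvPowerSeries (Fin n ⊕ Fin n) ℂ) :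
    MvPowerSeries (Fin n ⊕ Fin n) ℂ :=
  fun α => conj (MvPowerSeries.coeff (swapExp α) P)

lemma coeff_conjSeries (P : MvPowerSeries (Fin n ⊕ Fin n) ℂ) (α) :
    MvPowerSeries.coeff α (conjSeries P) = conj (MvPowerSeries.coeff (swapExp α) P) := rfl

lemma degree_swapExp (α : (Fin n ⊕ Fin n) →₀ ℕ) : (swapExp α).degree = α.degree := by
  rw [Finsupp.degree_eq_sum, Finsupp.degree_eq_sum]
  exact Fintype.sum_equiv (Equiv.sumComm _ _) _ _ fun i => by simp [swapExp_apply]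

lemma conjSeries_mem {P : MvPowerSeries (Fin n ⊕ Fin n) ℂ} (hP : P ∈ convSeries (Fin n ⊕ Fin n)) :
    conjSeries P ∈ convSeries (Fin n ⊕ Fin n) := by
  obtain ⟨r, hr, h⟩ := hP
  refine ⟨r, hr, ?_⟩
  have : wnorm (fun α => r ^ α.degree) (conjSeries P) = wnorm (fun α => r ^ α.degree) P := by
    unfold wnorm
    rw [← (swapExp (n := n)).toEquiv.tsum_eq
      (fun α => ‖MvPowerSeries.coeff α P‖ₑ * ((r ^ α.degree : ℝ≥0) : ℝ≥0∞))]
    refine tsum_congr fun α => ?_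
    have h1 : ‖MvPowerSeries.coeff α (conjSeries P)‖ₑ = ‖MvPowerSeries.coeff (swapExp α) P‖ₑ := by
      rw [coeff_conjSeries, enorm_eq_nnnorm, enorm_eq_nnnorm]
      congr 1
      exact NNReal.eq (RCLike.norm_conj _)
    rw [h1]
    change _ = _ * (((r ^ (swapExp α).degree : ℝ≥0)) : ℝ≥0∞)
    rw [degree_swapExp]
    rfl
  rwa [this]

lemma mev_conjSeries (x : Fin n → ℂ) (P : MvPowerSeries (Fin n ⊕ Fin n) ℂ) :
    mev (dbl x) (conjSeries P) = conj (mev (dbl x) P) := by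
  unfold mev
  rw [Complex.conj_tsum, ← (swapExp (n := n)).toEquiv.tsum_eq
    (fun α => conj (MvPowerSeries.coeff α P * mon (dbl x) α))]
  refine tsum_congr fun α => ?_
  change _ = conj (MvPowerSeries.coeff (swapExp α) P * mon (dbl x) (swapExp α))
  rw [map_mul, coeff_conjSeries]
  congr 1
  unfold mon
  rw [map_prod]
  refine Fintype.prod_equiv (Equiv.sumComm _ _) _ _ fun i => ?_
  rcases i with i | i <;> simp [swapExp_apply, dbl]

lemma pderiv_conjSeries (i : Fin n ⊕ Fin n) (P : MvPowerSeries (Fin n ⊕ Fin n) ℂ) :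
    MvPowerSeries.pderiv ℂ i (conjSeries P) = conjSeries (MvPowerSeries.pderiv ℂ i.swap P) := by
  refine MvPowerSeries.ext fun α => ?_
  rw [MvPowerSeries.coeff_pderiv, coeff_conjSeries, coeff_conjSeries, MvPowerSeries.coeff_pderiv,
    map_mul, map_add]
  have : swapExp (Finsupp.single i 1) = Finsupp.single i.swap 1 := by
    unfold swapExp
    simp
  rw [this, swapExp_apply]
  simp

end conjugate

/-- A holomorphic function of `x`, seen as a function of `(x, y)`, is the sum of a convergent power
series near the origin, whose partial derivatives sum to those of the function. -/
lemma exists_series {n : ℕ} {R M : ℝ} (hR : 0 < R) (f : (Fin n → ℂ) → ℂ)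
    (hs : ∀ x, (∀ j, ‖x j‖ < R) → DifferentiableAt ℂ f x)
    (hb : ∀ x, (∀ j, ‖x j‖ < R) → ‖f x‖ ≤ M) :
    ∃ P : convSeries (Fin n ⊕ Fin n), ∃ r > 0, ∀ z : Fin n ⊕ Fin n → ℂ, ‖z‖ < r →
      mev z P.1 = f (z ∘ Sum.inl) ∧
      (∀ i, mev z (cvD (Sum.inl i) P).1 = fderiv ℂ f (z ∘ Sum.inl) (Pi.single i 1)) ∧
      ∀ i, mev z (cvD (Sum.inr i) P).1 = 0 := by
  have hM : 0 ≤ M := (norm_nonneg _).trans (hb 0 fun j => by simpa using hR)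
  obtain ⟨c, hc, hsum⟩ := osgood (σ := Fin n ⊕ Fin n) hR (fun z => f (z ∘ Sum.inl))
    (fun z hz => by
      let L : (Fin n ⊕ Fin n → ℂ) →L[ℂ] (Fin n → ℂ) :=
        ContinuousLinearMap.pi fun i => ContinuousLinearMap.proj (Sum.inl i)
      exact DifferentiableAt.comp z (g := f) (f := L) (hs _ fun j => hz _) L.differentiableAt)
    (fun z hz => hb _ fun j => hz _)
  let P : MvPowerSeries (Fin n ⊕ Fin n) ℂ := c
  have hcoe : ∀ α, MvPowerSeries.coeff α P = c α := fun α => rfl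
  let r : ℝ≥0 := ⟨R / 4, by positivity⟩
  have hr : 0 < r := by change (0 : ℝ) < R / 4; positivity
  have hrv : (r : ℝ) = R / 4 := rfl
  have hP : wnorm (fun α => r ^ α.degree) P ≠ ⊤ := by
    have h1 : Summable fun α : (Fin n ⊕ Fin n) →₀ ℕ => ‖c α‖ * (r : ℝ) ^ α.degree := by
      refine Summable.of_nonneg_of_le (fun α => by positivity) (fun α => ?_)
        ((summable_pow_degree (Fin n ⊕ Fin n) (t := 1 / 2) (by norm_num) (by norm_num)).mul_left M)
      calc ‖c α‖ * (r : ℝ) ^ α.degree ≤ M * (2 / R) ^ α.degree * (R / 4) ^ α.degree := by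
            rw [hrv]; gcongr; exact hc α
        _ = M * (1 / 2) ^ α.degree := by
            rw [mul_assoc, ← mul_pow]; congr 2; field_simp; norm_num
    have h2 : wnorm (fun α => r ^ α.degree) P =
        ∑' α, ((‖c α‖₊ * r ^ α.degree : ℝ≥0) : ℝ≥0∞) := by
      refine tsum_congr fun α => ?_
      rw [ENNReal.coe_mul]; rfl
    rw [h2, ENNReal.tsum_coe_ne_top_iff_summable, ← NNReal.summable_coe]
    exact h1.congr fun α => by simp
  have hval : ∀ z : Fin n ⊕ Fin n → ℂ, ‖z‖ < R / 2 → mev z P = f (z ∘ Sum.inl) := fun z hz =>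
    (hsum z fun j => (norm_le_pi_norm z j).trans_lt hz).tsum_eq
  refine ⟨⟨P, r, hr, hP⟩, R / 8, by positivity, fun z hz => ?_⟩
  have hz' : ‖z‖ < (r : ℝ) / 2 := by rw [hrv]; linarith
  have hd := hasFDerivAt_mev hr hP hz'
  let L : (Fin n ⊕ Fin n → ℂ) →L[ℂ] (Fin n → ℂ) :=
    ContinuousLinearMap.pi fun i => ContinuousLinearMap.proj (Sum.inl i)
  have hdf : HasFDerivAt (fun z => f (z ∘ Sum.inl)) ((fderiv ℂ f (z ∘ Sum.inl)).comp L) z := by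
    have h1 : DifferentiableAt ℂ f (L z) :=
      hs _ fun j => (norm_le_pi_norm z _).trans_lt (by linarith)
    exact HasFDerivAt.comp (g := f) (f := L) z h1.hasFDerivAt L.hasFDerivAt
  have heq : (fun z => mev z P) =ᶠ[nhds z] fun z => f (z ∘ Sum.inl) := by
    have : ∀ᶠ y in nhds z, ‖y‖ < R / 2 :=
      continuous_norm.continuousAt.eventually_lt_const (by linarith)
    exact this.mono hval
  have hu := hd.unique (hdf.congr_of_eventuallyEq heq)
  refine ⟨hval z (by linarith), fun i => ?_, fun i => ?_⟩
  · have := DFunLike.congr_fun hu (Pi.single (Sum.inl i) 1)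
    have hL : L (Pi.single (Sum.inl i) 1) = Pi.single i 1 := by
      funext j
      by_cases h : j = i
      · subst h; simp [L]
      · simp [L, h]
    rw [ContinuousLinearMap.comp_apply, hL] at this
    rw [← this]
    simp [cvD, Pi.single_apply]
  · have := DFunLike.congr_fun hu (Pi.single (Sum.inr i) 1)
    have hL : L (Pi.single (Sum.inr i) 1) = 0 := by
      funext j
      simp [L]
    rw [ContinuousLinearMap.comp_apply, hL, map_zero] at this
    rw [← this]
    simp [cvD, Pi.single_apply]

/-- Near the origin, points outside `f = 0` where the differential of `f` is proportional to the
radial form have nonzero differential, and `|f|` is bounded below there by a power of `‖x‖`. -/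
theorem radial_estimate {n : ℕ} {R M : ℝ} (hR : 0 < R) (f : (Fin n → ℂ) → ℂ) (hf0 : f 0 = 0)
    (hs : ∀ x, (∀ j, ‖x j‖ < R) → DifferentiableAt ℂ f x)
    (hb : ∀ x, (∀ j, ‖x j‖ < R) → ‖f x‖ ≤ M) :
    ∃ r > 0, ∃ N : ℕ, ∀ x : Fin n → ℂ, ‖x‖ < r → f x ≠ 0 → ∀ μ : ℂ,
      (∀ i, fderiv ℂ f x (Pi.single i 1) = μ * conj (x i)) →
      (∑ i, ‖x i‖ ^ 2) ^ N ≤ ‖f x‖ ∧ μ ≠ 0 := by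
  by_contra hcon
  push Not at hcon
  have hcon' : ∀ k : ℕ, ∃ x : Fin n → ℂ, ‖x‖ < 1 / ((k : ℝ) + 1) ∧ f x ≠ 0 ∧ ∃ μ : ℂ,
      (∀ i, fderiv ℂ f x (Pi.single i 1) = μ * conj (x i)) ∧
      ((∑ i, ‖x i‖ ^ 2) ^ k ≤ ‖f x‖ → μ = 0) :=
    fun k => hcon (1 / ((k : ℝ) + 1)) (by positivity) k
  -- The exponent is taken to be `k` as well, so that along a counterexample sequence with `μ ≠ 0`
  -- the function `f` is smaller than every power of `‖x‖²`.
  choose x hxk hfx μ hμ hcase using hcon'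
  have hx' : Tendsto x atTop (nhds 0) :=
    squeeze_zero_norm (fun k => (hxk k).le) tendsto_one_div_add_atTop_nhds_zero_nat
  let l : Ultrafilter ℕ := hyperfilter ℕ
  have hlt : (l : Filter ℕ) ≤ atTop := by
    rw [← Nat.cofinite_eq_atTop]; exact hyperfilter_le_cofinite
  have hx : Tendsto x l (nhds 0) := hx'.mono_left hlt
  obtain ⟨P, r, hr, hPr⟩ := exists_series hR f hs hb
  have hdbl : ∀ᶠ k in (l : Filter ℕ), ‖dbl (x k)‖ < r := by
    have h := (tendsto_dbl hx).norm
    rw [norm_zero] at h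
    exact h.eventually_lt_const hr
  have hcomp : ∀ y : Fin n → ℂ, dbl y ∘ Sum.inl = y := fun y => rfl
  have hP0 : MvPowerSeries.constantCoeff P.1 = 0 := by
    have := (hPr 0 (by simpa using hr)).1
    rw [mev_zero_point] at this
    rw [this]
    exact hf0
  have hP : ∀ᶠ k in (l : Filter ℕ), mev (dbl (x k)) P.1 = f (x k) :=
    hdbl.mono fun k hk => (hPr _ hk).1
  have hD : ∀ i, ∀ᶠ k in (l : Filter ℕ), mev (dbl (x k)) (cvD (Sum.inl i) P).1 =
      μ k * conj (x k i) := fun i => hdbl.mono fun k hk => by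
    rw [(hPr _ hk).2.1 i, hcomp, hμ]
  have hD' : ∀ i, ∀ᶠ k in (l : Filter ℕ), mev (dbl (x k)) (cvD (Sum.inr i) P).1 = 0 :=
    fun i => hdbl.mono fun k hk => (hPr _ hk).2.2 i
  let g : ℕ → ℝ := fun k => ∑ i, ‖x k i‖ ^ 2
  have hgnn : ∀ k, 0 ≤ g k := fun k => Finset.sum_nonneg fun i _ => by positivity
  have hg0 : ∀ k, g k ≠ 0 := by
    intro k h
    apply hfx k
    have h1 := (Finset.sum_eq_zero_iff_of_nonneg (fun i _ => by positivity)).1 h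
    have : x k = 0 := by
      funext i
      simpa using h1 i (Finset.mem_univ i)
    rw [this, hf0]
  -- Either `κ = μ ‖x‖² / f` tends to `0` along the ultrafilter, or its inverse stays bounded.
  let κ : ℕ → ℂ := fun k => μ k * (g k : ℂ) / f (x k)
  by_cases hκ : Tendsto κ l (nhds 0)
  · refine no_seq_of_tendsto_zero l hx P (f := fun k => f (x k)) (κ := κ) hP0 hP
      (Eventually.of_forall hfx) (Eventually.of_forall hg0) hκ (fun i => ?_) hD'
    filter_upwards [hD i] with k hk
    rw [hk]
    have := hfx k
    simp only [κ]
    field_simp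
    ring
  · obtain ⟨δ, hδ, hκδ⟩ : ∃ δ > 0, ∀ᶠ k in (l : Filter ℕ), δ ≤ ‖κ k‖ := by
      by_contra hno
      push Not at hno
      apply hκ
      rw [Metric.tendsto_nhds]
      intro δ hδ
      have h1 := hno δ hδ
      exact h1.mono fun k hk => by simpa using hk
    have hμ0 : ∀ᶠ k in (l : Filter ℕ), μ k ≠ 0 := hκδ.mono fun k hk h => by
      simp only [κ, h, zero_mul, zero_div, norm_zero] at hk
      linarith
    obtain ⟨a₀, ha₀⟩ := exists_tendsto_of_bounded l (u := fun k => (κ k)⁻¹) (M := δ⁻¹)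
      (hκδ.mono fun k hk => by rw [norm_inv]; exact inv_anti₀ hδ hk)
    have hg1 : ∀ᶠ k in (l : Filter ℕ), g k ≤ 1 := by
      have : Tendsto g l (nhds (∑ i : Fin n, ‖(0 : ℂ)‖ ^ 2)) :=
        tendsto_finsetSum _ fun i _ => ((tendsto_pi_nhds.1 hx i).norm).pow 2
      have h0 : Tendsto g l (nhds 0) := by simpa using this
      exact (h0.eventually_lt_const one_pos).mono fun k hk => hk.le
    have hak : ∀ᶠ k in (l : Filter ℕ), (κ k)⁻¹ * (g k : ℂ) * μ k = f (x k) := by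
      filter_upwards [hμ0] with k hk
      have h1 := hfx k
      have h2 : (g k : ℂ) ≠ 0 := by exact_mod_cast hg0 k
      simp only [κ]
      field_simp
    refine no_seq_of_bounded l hx P ⟨_, conjSeries_mem P.2⟩ (f := fun k => f (x k))
      (a := fun k => (κ k)⁻¹) hP ?_ (Eventually.of_forall hfx) (Eventually.of_forall hg0) ?_ ha₀
      ?_ hD' ?_ ?_
    · filter_upwards [hP] with k hk
      rw [mev_conjSeries, hk]
    · intro N
      filter_upwards [hμ0, hg1, hlt (eventually_ge_atTop N)] with k h1 h2 h3
      have h4 : ¬ g k ^ k ≤ ‖f (x k)‖ := fun h => h1 (hcase k h)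
      exact (not_le.1 h4).le.trans (pow_le_pow_of_le_one (hgnn k) h2 h3)
    · intro i
      filter_upwards [hD i, hak] with k h1 h2
      rw [h1, ← h2]
      simp only [g]
      ring
    · intro i
      filter_upwards [hD i, hak] with k h1 h2
      change _ * _ * mev (dbl (x k)) (MvPowerSeries.pderiv ℂ (Sum.inr i) (conjSeries P.1)) = _
      rw [pderiv_conjSeries, mev_conjSeries]
      change _ * _ * conj (mev (dbl (x k)) (cvD (Sum.inl i) P).1) = _
      rw [h1, ← h2]
      simp only [map_mul, Complex.conj_conj, Complex.conj_ofReal, g]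
      ring
    · intro i
      filter_upwards [hD' i] with k h1
      change mev (dbl (x k)) (MvPowerSeries.pderiv ℂ (Sum.inl i) (conjSeries P.1)) = _
      rw [pderiv_conjSeries, mev_conjSeries]
      change conj (mev (dbl (x k)) (cvD (Sum.inr i) P).1) = _
      rw [h1, map_zero]

/-! ### Flows and local triviality -/

/-- The flow, for times in `(-T, T)` and starting points in a ball, of a bounded Lipschitz vector
field. -/
lemma exists_flow {E : Type*} [NormedAddCommGroup E] [NormedSpace ℝ E] [CompleteSpace E]
    {V : E → E} {K : ℝ≥0} (hK : LipschitzWith K V) {C : ℝ} (hC : ∀ x, ‖V x‖ ≤ C)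
    {R T : ℝ} (hR : 0 ≤ R) (hT : 0 < T) :
    ∃ Φ : E × ℝ → E, (∀ x ∈ Metric.closedBall 0 R, Φ (x, 0) = x) ∧
      (∀ x ∈ Metric.closedBall 0 R, ∀ t ∈ Set.Ioo (-T) T,
        HasDerivAt (fun s => Φ (x, s)) (V (Φ (x, t))) t) ∧
      ContinuousOn Φ (Metric.closedBall 0 R ×ˢ Set.Icc (-T) T) ∧
      ∀ x ∈ Metric.closedBall 0 R, ∀ t ∈ Set.Ioo (-T) T, Φ (x, t) ∈ Metric.closedBall 0 R →
        Φ (Φ (x, t), -t) = x := by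
  have hC0 : 0 ≤ C := (norm_nonneg _).trans (hC 0)
  let L : ℝ≥0 := ⟨C, hC0⟩
  let r : ℝ≥0 := ⟨R, hR⟩
  let a : ℝ≥0 := ⟨R + C * T, by positivity⟩
  have h0 : (0 : ℝ) ∈ Set.Icc (-T) T := ⟨by linarith, hT.le⟩
  have hPL : IsPicardLindelof (fun _ => V) (⟨0, h0⟩ : Set.Icc (-T) T) (0 : E) a r L K :=
    IsPicardLindelof.of_time_independent (fun x _ => hC x) hK.lipschitzOnWith (by
      simp only [sub_zero, zero_sub, neg_neg, max_self]
      change C * T ≤ R + C * T - R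
      linarith)
  obtain ⟨Φ, hΦ, hcont⟩ := hPL.exists_forall_mem_closedBall_eq_hasDerivWithinAt_continuousOn
  have hder : ∀ x ∈ Metric.closedBall (0 : E) R, ∀ t ∈ Set.Ioo (-T) T,
      HasDerivAt (fun s => Φ (x, s)) (V (Φ (x, t))) t := fun x hx t ht =>
    ((hΦ x hx).2 t (Set.Ioo_subset_Icc_self ht)).hasDerivAt (Icc_mem_nhds ht.1 ht.2)
  refine ⟨Φ, fun x hx => (hΦ x hx).1, hder, hcont, fun x hx t ht hxt => ?_⟩
  have huniq := ODE_solution_unique_of_mem_Ioo (v := fun _ => V) (s := fun _ => Set.univ)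
    (K := K) (f := fun s => Φ (Φ (x, t), s)) (g := fun s => Φ (x, t + s)) (t₀ := 0)
    (a := max (-T) (-T - t)) (b := min T (T - t))
    (fun _ _ => hK.lipschitzOnWith)
    (by
      refine ⟨max_lt (by linarith) (by linarith [ht.1]), lt_min hT (by linarith [ht.2])⟩)
    (fun s hs => ⟨hder _ hxt s ⟨(le_max_left _ _).trans_lt hs.1, hs.2.trans_le (min_le_left _ _)⟩,
      trivial⟩)
    (fun s hs => ⟨by
      have h1 : -T - t < s := (le_max_right _ _).trans_lt hs.1
      have h2 : s < T - t := hs.2.trans_le (min_le_right _ _)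
      exact HasDerivAt.comp_const_add t s (hder x hx (t + s) ⟨by linarith, by linarith⟩), trivial⟩)
    (by simpa using (hΦ _ hxt).1)
  have hmem : -t ∈ Set.Ioo (max (-T) (-T - t)) (min T (T - t)) :=
    ⟨max_lt (by linarith [ht.2]) (by linarith), lt_min (by linarith [ht.1]) (by linarith)⟩
  have := huniq hmem
  simp only [add_neg_cancel] at this
  rw [this]
  exact (hΦ x hx).1

/-- A map to a circle is a locally trivial fibration as soon as its domain carries a flow lifting
the rotation; two full turns of it, here times in `(-7, 7)`, are enough. -/
lemma isLocTrivFib_of_flow {E : Type} [TopologicalSpace E] {N : Set E} {f : E → ℂ} {η : ℝ}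
    (hη : 0 < η) (hf : ContinuousOn f N) {Φ : E × ℝ → E}
    (hmem : ∀ x ∈ N, ∀ t ∈ Set.Ioo (-7 : ℝ) 7, Φ (x, t) ∈ N)
    (hrot : ∀ x ∈ N, ∀ t ∈ Set.Ioo (-7 : ℝ) 7, f (Φ (x, t)) = Complex.exp (t * Complex.I) * f x)
    (hinv : ∀ x ∈ N, ∀ t ∈ Set.Ioo (-7 : ℝ) 7, Φ (Φ (x, t), -t) = x)
    (hcont : ContinuousOn Φ (N ×ˢ Set.Ioo (-7 : ℝ) 7))
    (p : N → ({w : ℂ | ‖w‖ = η} : Set ℂ)) (hp : ∀ x, (p x : ℂ) = f x) : IsLocTrivFib p := by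
  have hfc : Continuous fun x : N => f x := continuousOn_iff_continuous_domRestrict.1 hf
  have hpc : Continuous p := by
    rw [continuous_induced_rng]
    exact hfc.congr fun x => (hp x).symm
  refine ⟨{x : E // x ∈ N ∧ f x = η}, inferInstance, hpc, fun b => ?_⟩
  have hηC : (η : ℂ) ≠ 0 := by exact_mod_cast hη.ne'
  have hbn : ‖(b : ℂ)‖ = η := b.2
  have hb0 : (b : ℂ) ≠ 0 := by rw [← norm_pos_iff, hbn]; exact hη
  let W : Set ({w : ℂ | ‖w‖ = η} : Set ℂ) := {w | (w : ℂ) / b ∈ Complex.slitPlane}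
  let θ : ({w : ℂ | ‖w‖ = η} : Set ℂ) → ℝ := fun w => ((w : ℂ) / b).arg + ((b : ℂ) / η).arg
  have hθ : ∀ w, θ w ∈ Set.Ioo (-7 : ℝ) 7 := by
    intro w
    have h1 := abs_le.1 (Complex.abs_arg_le_pi ((w : ℂ) / b))
    have h2 := abs_le.1 (Complex.abs_arg_le_pi ((b : ℂ) / η))
    have := Real.pi_lt_d2
    constructor <;> simp only [θ] <;> linarith [h1.1, h1.2, h2.1, h2.2]
  have hθ' : ∀ w, -θ w ∈ Set.Ioo (-7 : ℝ) 7 := fun w =>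
    ⟨by linarith [(hθ w).2], by linarith [(hθ w).1]⟩
  have hexp : ∀ w, Complex.exp (θ w * Complex.I) * η = w := by
    intro w
    have hu : ∀ z : ℂ, ‖z‖ = 1 → Complex.exp (z.arg * Complex.I) = z := by
      intro z hz
      have := Complex.norm_mul_exp_arg_mul_I z
      rwa [hz, Complex.ofReal_one, one_mul] at this
    have hw : ‖(w : ℂ)‖ = η := w.2
    simp only [θ]
    rw [Complex.ofReal_add, add_mul, Complex.exp_add, hu _ (by rw [norm_div, hw, hbn, div_self hη.ne']),
      hu _ (by rw [norm_div, hbn, Complex.norm_real, Real.norm_eq_abs, abs_of_pos hη,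
        div_self hη.ne'])]
    field_simp
  have hexp' : ∀ w : ({w : ℂ | ‖w‖ = η} : Set ℂ),
      Complex.exp ((-θ w : ℝ) * Complex.I) * w = η := by
    intro w
    have h := hexp w
    rw [← h, ← mul_assoc, ← Complex.exp_add]
    simp
  have hWc : Continuous fun w : ({w : ℂ | ‖w‖ = η} : Set ℂ) => (w : ℂ) / b :=
    continuous_subtype_val.div_const _
  have hθc : ContinuousOn θ W := fun w hw =>
    ((ContinuousAt.comp (x := w) (g := Complex.arg) (f := fun w : ({w : ℂ | ‖w‖ = η} : Set ℂ) =>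
      (w : ℂ) / b) (Complex.continuousAt_arg hw) hWc.continuousAt).add
      continuousAt_const).continuousWithinAt
  have hθW : Continuous fun w : W => θ w := continuousOn_iff_continuous_domRestrict.1 hθc
  refine ⟨W, Complex.isOpen_slitPlane.preimage hWc, ?_, ?_⟩
  · change (b : ℂ) / b ∈ Complex.slitPlane
    rw [div_self hb0]; exact Complex.one_mem_slitPlane
  let toF : (p ⁻¹' W) → W × {x : E // x ∈ N ∧ f x = η} := fun z =>
    (⟨p z.1, z.2⟩, ⟨Φ (z.1.1, -θ (p z.1)), hmem _ z.1.2 _ (hθ' _), by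
      rw [hrot _ z.1.2 _ (hθ' _), ← hp, hexp']⟩)
  have hinvp : ∀ (w : W) (y : {x : E // x ∈ N ∧ f x = η}),
      p ⟨Φ (y.1, θ w), hmem _ y.2.1 _ (hθ _)⟩ = w := by
    intro w y
    apply Subtype.ext
    rw [hp, hrot _ y.2.1 _ (hθ _), y.2.2, hexp]
  let invF : W × {x : E // x ∈ N ∧ f x = η} → (p ⁻¹' W) := fun q =>
    ⟨⟨Φ (q.2.1, θ q.1), hmem _ q.2.2.1 _ (hθ _)⟩, by
      change p _ ∈ W
      rw [hinvp]; exact q.1.2⟩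
  have hto : Continuous toF := by
    have h1 : Continuous fun z : (p ⁻¹' W) => (⟨p z.1, z.2⟩ : W) :=
      (hpc.comp continuous_subtype_val).subtype_mk _
    refine h1.prodMk (Continuous.subtype_mk ?_ _)
    exact hcont.comp_continuous (f := fun z : (p ⁻¹' W) => (z.1.1, -θ (p z.1)))
      ((continuous_subtype_val.comp continuous_subtype_val).prodMk (hθW.comp h1).neg)
      fun z => ⟨z.1.2, hθ' _⟩
  have hinvc : Continuous invF := by
    refine Continuous.subtype_mk (Continuous.subtype_mk ?_ _) _
    exact hcont.comp_continuous
      (f := fun q : W × {x : E // x ∈ N ∧ f x = η} => (q.2.1, θ q.1))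
      ((continuous_subtype_val.comp continuous_snd).prodMk (hθW.comp continuous_fst))
      fun q => ⟨q.2.2.1, hθ _⟩
  refine ⟨⟨⟨toF, invF, fun z => ?_, fun q => ?_⟩, hto, hinvc⟩, fun z => rfl⟩
  · apply Subtype.ext
    apply Subtype.ext
    change Φ (Φ (z.1.1, -θ (p z.1)), θ (p z.1)) = z.1.1
    simpa using hinv _ z.1.2 _ (hθ' (p z.1))
  · refine Prod.ext (Subtype.ext (hinvp q.1 q.2)) (Subtype.ext ?_)
    change Φ (Φ (q.2.1, θ q.1), -θ (p ⟨Φ (q.2.1, θ q.1), _⟩)) = q.2.1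
    rw [hinvp]
    exact hinv _ q.2.2.1 _ (hθ _)

/-! ### Lifting the rotation to the tube -/

/-- A compactly supported vector field `V` with `df(V) = i f` on the tube `‖x‖ ≤ ε, |f| = η`, tangent
to the spheres near the boundary sphere. With `G` the gradient of `f` and a radial cutoff `ψ`, it is
`(i f / Δ) (‖x‖² G - ψ ⟪x, G⟫ x)`, where `Δ = ‖x‖² ‖G‖² - ψ |⟪x, G⟫|²` is positive on the tube by the
Cauchy-Schwarz inequality, multiplied by a further cutoff `χ` equal to `1` on the tube. -/
lemma exists_lift_field {E : Type*} [NormedAddCommGroup E] [InnerProductSpace ℂ E]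
    [FiniteDimensional ℂ E] {f : E → ℂ} {ε₁ ε η : ℝ} (hε : 0 < ε) (hε₁ : ε < ε₁) (hη : 0 < η)
    (hf0 : f 0 = 0)
    (hC : ∀ x, ‖x‖ < ε₁ → ContDiffAt ℂ 2 f x)
    (hreg : ∀ x, ‖x‖ ≤ ε → ‖f x‖ = η → fderiv ℂ f x ≠ 0)
    (htrans : ∀ x, ‖x‖ ≤ ε → ε ^ 2 / 2 ≤ ‖x‖ ^ 2 → ‖f x‖ = η → ∀ μ : ℂ,
      ¬ ∀ v, fderiv ℂ f x v = μ * inner ℂ x v) :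
    ∃ V : E → E, (∃ K, LipschitzWith K V) ∧ (∃ C, ∀ x, ‖V x‖ ≤ C) ∧ ∃ χ : E → ℝ,
      (∀ x, ‖x‖ ≤ ε → ‖f x‖ = η → χ x = 1) ∧
      (∀ x, ‖x‖ < ε₁ → fderiv ℂ f x (V x) = χ x * Complex.I * f x) ∧
      ∀ x, 5 * ε ^ 2 / 8 ≤ ‖x‖ ^ 2 → inner ℂ x (V x) = 0 := by
  have : CompleteSpace E := FiniteDimensional.complete ℂ E
  have : ProperSpace E := FiniteDimensional.proper ℂ E
  let Lr : StrongDual ℂ E →L[ℝ] E :=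
    AddMonoidHom.toRealLinearMap ((InnerProductSpace.toDual ℂ E).symm : StrongDual ℂ E →+ E)
      (InnerProductSpace.toDual ℂ E).symm.continuous
  let G : E → E := fun x => Lr (fderiv ℂ f x)
  have hG : ∀ x v, inner ℂ (G x) v = fderiv ℂ f x v := fun x v =>
    InnerProductSpace.toDual_symm_apply
  let ψ : E → ℝ := fun x => Real.smoothTransition (‖x‖ ^ 2 * (8 / ε ^ 2) - 4)
  let Δ : E → ℝ := fun x => ‖x‖ ^ 2 * ‖G x‖ ^ 2 - ψ x * ‖inner ℂ x (G x)‖ ^ 2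
  let v : E → E := fun x => (Complex.I * f x / (Δ x : ℂ)) •
    (((‖x‖ ^ 2 : ℝ) : ℂ) • G x - ((ψ x : ℂ) * inner ℂ x (G x)) • x)
  have hψ0 : ∀ x, ‖x‖ ^ 2 ≤ ε ^ 2 / 2 → ψ x = 0 := fun x hx =>
    Real.smoothTransition.zero_of_nonpos (by
      have h1 : ‖x‖ ^ 2 * (8 / ε ^ 2) ≤ ε ^ 2 / 2 * (8 / ε ^ 2) := by gcongr
      have h2 : ε ^ 2 / 2 * (8 / ε ^ 2) = 4 := by field_simp; norm_num
      linarith)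
  have hψ1 : ∀ x, 5 * ε ^ 2 / 8 ≤ ‖x‖ ^ 2 → ψ x = 1 := fun x hx =>
    Real.smoothTransition.one_of_one_le (by
      have h1 : 5 * ε ^ 2 / 8 * (8 / ε ^ 2) ≤ ‖x‖ ^ 2 * (8 / ε ^ 2) := by gcongr
      have h2 : 5 * ε ^ 2 / 8 * (8 / ε ^ 2) = 5 := by field_simp
      linarith)
  have hψle : ∀ x, ψ x ≤ 1 := fun x => Real.smoothTransition.le_one _
  -- Smoothness of the ingredients.
  have cN : ContDiff ℝ 1 fun x : E => ‖x‖ ^ 2 := contDiff_norm_sq ℂ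
  have cψ : ContDiff ℝ 1 ψ :=
    Real.smoothTransition.contDiff.comp ((cN.mul contDiff_const).sub contDiff_const)
  have cG : ∀ x, ‖x‖ < ε₁ → ContDiffAt ℝ 1 G x := by
    intro x hx
    have h1 : ContDiffAt ℂ 1 (fderiv ℂ f) x := (hC x hx).fderiv_right (by norm_num)
    exact Lr.contDiff.contDiffAt.comp x (h1.restrict_scalars ℝ)
  have cI : ∀ x, ‖x‖ < ε₁ → ContDiffAt ℝ 1 (fun x => inner ℂ x (G x)) x := fun x hx =>
    ContDiffAt.inner ℂ contDiffAt_id (cG x hx)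
  have cΔ : ∀ x, ‖x‖ < ε₁ → ContDiffAt ℝ 1 Δ x := fun x hx =>
    (cN.contDiffAt.mul ((cG x hx).norm_sq ℂ)).sub (cψ.contDiffAt.mul ((cI x hx).norm_sq ℂ))
  have cf : ∀ x, ‖x‖ < ε₁ → ContDiffAt ℝ 1 f x := fun x hx =>
    ((hC x hx).of_le (by norm_num)).restrict_scalars ℝ
  have cv : ∀ x, ‖x‖ < ε₁ → Δ x ≠ 0 → ContDiffAt ℝ 1 v x := by
    intro x hx hΔ
    have cofR : ContDiff ℝ 1 (fun t : ℝ => (t : ℂ)) := Complex.ofRealCLM.contDiff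
    have h1 : ContDiffAt ℝ 1 (fun x => Complex.I * f x / (Δ x : ℂ)) x := by
      refine (contDiffAt_const.mul (cf x hx)).mul (ContDiffAt.inv ?_ ?_)
      · exact cofR.contDiffAt.comp x (cΔ x hx)
      · exact_mod_cast hΔ
    have h2 : ContDiffAt ℝ 1 (fun x => ((‖x‖ ^ 2 : ℝ) : ℂ)) x :=
      cofR.contDiffAt.comp x cN.contDiffAt
    have h3 : ContDiffAt ℝ 1 (fun x => (ψ x : ℂ)) x := cofR.contDiffAt.comp x cψ.contDiffAt
    exact h1.smul ((h2.smul (cG x hx)).sub ((h3.mul (cI x hx)).smul contDiffAt_id))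
  -- The open set where the field is defined.
  let O : Set E := {x | ‖x‖ < ε₁ ∧ Δ x ≠ 0}
  have hO : IsOpen O := by
    rw [isOpen_iff_mem_nhds]
    intro x hx
    have h1 : ∀ᶠ y in nhds x, ‖y‖ < ε₁ := continuous_norm.continuousAt.eventually_lt_const hx.1
    have h2 : ∀ᶠ y in nhds x, Δ y ≠ 0 := (cΔ x hx.1).continuousAt.eventually_ne hx.2
    exact h1.and h2
  let N : Set E := {x | ‖x‖ ≤ ε ∧ ‖f x‖ = η}
  have hNc : IsClosed N := by
    have h1 : ContinuousOn (fun x => ‖f x‖) (Metric.closedBall (0 : E) ε) := fun x hx =>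
      (cf x ((mem_closedBall_zero_iff.1 hx).trans_lt hε₁)).continuousAt.norm.continuousWithinAt
    have h2 := h1.preimage_isClosed_of_isClosed Metric.isClosed_closedBall
      (isClosed_singleton (x := η))
    convert h2 using 1
    ext x
    simp [N]
  have hNO : N ⊆ O := by
    rintro x ⟨hx, hfx⟩
    refine ⟨hx.trans_lt hε₁, ?_⟩
    have hx0 : x ≠ 0 := by
      rintro rfl
      rw [hf0, norm_zero] at hfx
      exact hη.ne hfx
    have hG0 : G x ≠ 0 := by
      intro h
      apply hreg x hx hfx
      ext v
      rw [← hG, h]; simp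
    have hp : 0 < ‖x‖ ^ 2 * ‖G x‖ ^ 2 := by
      have := norm_pos_iff.2 hx0
      have := norm_pos_iff.2 hG0
      positivity
    rcases le_total (‖x‖ ^ 2) (ε ^ 2 / 2) with h | h
    · simp only [Δ, hψ0 x h, zero_mul, sub_zero]; exact hp.ne'
    · have hcs : ‖inner ℂ x (G x)‖ < ‖x‖ * ‖G x‖ := by
        refine lt_of_le_of_ne (norm_inner_le_norm _ _) fun heq => ?_
        obtain ⟨c, -, hc⟩ := (norm_inner_eq_norm_iff hx0 hG0).1 heq
        refine htrans x hx h hfx (conj c) fun w => ?_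
        rw [← hG, hc, inner_smul_left]
      have h1 : ‖inner ℂ x (G x)‖ ^ 2 < ‖x‖ ^ 2 * ‖G x‖ ^ 2 := by
        rw [← mul_pow]
        exact pow_lt_pow_left₀ hcs (norm_nonneg _) two_ne_zero
      have h2 : ψ x * ‖inner ℂ x (G x)‖ ^ 2 ≤ 1 * ‖inner ℂ x (G x)‖ ^ 2 := by
        gcongr; exact hψle x
      have : 0 < Δ x := by simp only [Δ]; linarith
      exact this.ne'
  obtain ⟨χ, hχ0, hχ1, -⟩ := exists_contMDiffMap_zero_one_nhds_of_isClosed (n := 1)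
    (modelWithCornersSelf ℝ E) hO.isClosed_compl hNc
    (Set.disjoint_left.2 fun x hx hxN => hx (hNO hxN))
  have cχ : ContDiff ℝ 1 χ := contMDiff_iff_contDiff.1 χ.contMDiff
  have hχO : ∀ x ∉ O, ∀ᶠ y in nhds x, χ y = 0 := fun x hx =>
    hχ0.filter_mono (nhds_le_nhdsSet hx)
  let V : E → E := fun x => χ x • v x
  have cV : ContDiff ℝ 1 V := by
    rw [contDiff_iff_contDiffAt]
    intro x
    by_cases hx : x ∈ O
    · exact cχ.contDiffAt.smul (cv x hx.1 hx.2)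
    · refine (contDiffAt_const (c := (0 : E))).congr_of_eventuallyEq ?_
      filter_upwards [hχO x hx] with y hy
      simp only [V, hy, zero_smul]
  have hcs : HasCompactSupport V := by
    refine HasCompactSupport.intro (isCompact_closedBall (0 : E) ε₁) fun x hx => ?_
    have hxO : x ∉ O := fun h => hx (mem_closedBall_zero_iff.2 h.1.le)
    simp only [V, (hχO x hxO).self_of_nhds, zero_smul]
  refine ⟨V, cV.lipschitzWith_of_hasCompactSupport hcs one_ne_zero,
    hcs.exists_bound_of_continuous cV.continuous, χ, ?_, ?_, ?_⟩
  · intro x hx hfx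
    exact (hχ1.filter_mono (nhds_le_nhdsSet (show x ∈ N from ⟨hx, hfx⟩))).self_of_nhds
  · intro x hx
    by_cases hxO : x ∈ O
    · have hΔ : (Δ x : ℂ) ≠ 0 := by exact_mod_cast hxO.2
      have h1 : fderiv ℂ f x (((‖x‖ ^ 2 : ℝ) : ℂ) • G x - ((ψ x : ℂ) * inner ℂ x (G x)) • x) =
          (Δ x : ℂ) := by
        rw [map_sub, map_smul, map_smul, ← hG, ← hG, inner_self_eq_norm_sq_to_K]
        simp only [smul_eq_mul, Δ]
        rw [mul_assoc, ← inner_conj_symm (G x) x, Complex.mul_conj, Complex.normSq_eq_norm_sq]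
        push_cast
        rfl
      have h2 : fderiv ℂ f x (V x) = (χ x : ℂ) * fderiv ℂ f x (v x) := by
        simp only [V]
        rw [← Complex.coe_smul, map_smul, smul_eq_mul]
      rw [h2]
      simp only [v]
      rw [map_smul, h1, smul_eq_mul]
      field_simp
    · have h0 : χ x = 0 := (hχO x hxO).self_of_nhds
      simp only [V, h0, zero_smul, map_zero, Complex.ofReal_zero, zero_mul]
  · intro x hx
    have h1 : inner ℂ x (((‖x‖ ^ 2 : ℝ) : ℂ) • G x - ((ψ x : ℂ) * inner ℂ x (G x)) • x) = 0 := by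
      rw [inner_sub_right, inner_smul_right, inner_smul_right, inner_self_eq_norm_sq_to_K, hψ1 x hx]
      push_cast
      rw [one_mul, sub_eq_zero]
      exact mul_comm _ _
    simp only [V, v]
    rw [← Complex.coe_smul, inner_smul_right, inner_smul_right, h1, mul_zero, mul_zero]

lemma eq_of_hasDerivAt_zero {F : Type*} [NormedAddCommGroup F] [NormedSpace ℝ F] {g : ℝ → F} {T : ℝ}
    (hT : 0 < T) (h : ∀ t ∈ Set.Ioo (-T) T, HasDerivAt g 0 t) {t : ℝ} (ht : t ∈ Set.Ioo (-T) T) :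
    g t = g 0 :=
  isOpen_Ioo.is_const_of_deriv_eq_zero isPreconnected_Ioo
    (fun s hs => (h s hs).differentiableAt.differentiableWithinAt) (fun s hs => (h s hs).deriv) ht
    ⟨by linarith, hT⟩

lemma eq_of_expNegInvGlue_eq {a b : ℝ} (ha : 0 < a) (h : expNegInvGlue a = expNegInvGlue b) :
    a = b := by
  have hb : 0 < b := by
    by_contra hb
    rw [expNegInvGlue.zero_of_nonpos (not_lt.1 hb)] at h
    exact (expNegInvGlue.pos_of_pos ha).ne' h
  simpa [expNegInvGlue, ha.not_ge, hb.not_ge] using h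

/-- Integral curves of the lifted field starting in the tube stay in the tube, and `f` rotates along
them at unit speed. The boundary sphere is not crossed because `‖γ‖²` is constant as long as it
exceeds `5 ε² / 8`; to see this, compose it with a smooth function that is flat below that level and
injective above it. -/
lemma curve_in_tube {E : Type*} [NormedAddCommGroup E] [InnerProductSpace ℂ E]
    {f : E → ℂ} {ε₁ ε η T : ℝ} (hε : 0 < ε) (hε₁ : ε < ε₁) (hT : 0 < T)
    (hC : ∀ x, ‖x‖ < ε₁ → DifferentiableAt ℂ f x) {V : E → E} {χ : E → ℝ}
    (hχ : ∀ x, ‖x‖ ≤ ε → ‖f x‖ = η → χ x = 1)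
    (hV : ∀ x, ‖x‖ < ε₁ → fderiv ℂ f x (V x) = χ x * Complex.I * f x)
    (hS : ∀ x, 5 * ε ^ 2 / 8 ≤ ‖x‖ ^ 2 → inner ℂ x (V x) = 0)
    {γ : ℝ → E} (hγ : ∀ t ∈ Set.Ioo (-T) T, HasDerivAt γ (V (γ t)) t)
    (h0 : ‖γ 0‖ ≤ ε) (h0' : ‖f (γ 0)‖ = η) {t : ℝ} (ht : t ∈ Set.Ioo (-T) T) :
    ‖γ t‖ ≤ ε ∧ ‖f (γ t)‖ = η ∧ f (γ t) = Complex.exp (t * Complex.I) * f (γ 0) := by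
  let _ : InnerProductSpace ℝ E := InnerProductSpace.rclikeToReal ℂ E
  have hball : ∀ t ∈ Set.Ioo (-T) T, ‖γ t‖ ≤ ε := by
    intro t ht
    have hd : ∀ s ∈ Set.Ioo (-T) T,
        HasDerivAt (fun s => expNegInvGlue (‖γ s‖ ^ 2 - 5 * ε ^ 2 / 8)) 0 s := by
      intro s hs
      have h1 : HasDerivAt (fun s => ‖γ s‖ ^ 2 - 5 * ε ^ 2 / 8) (2 * inner ℝ (γ s) (V (γ s))) s :=
        (hγ s hs).norm_sq.sub_const _
      rcases lt_or_ge (‖γ s‖ ^ 2) (5 * ε ^ 2 / 8) with h | h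
      · have : ∀ᶠ r in nhds s, ‖γ r‖ ^ 2 - 5 * ε ^ 2 / 8 < 0 :=
          h1.continuousAt.eventually_lt continuousAt_const (by linarith)
        refine (hasDerivAt_const s (0 : ℝ)).congr_of_eventuallyEq ?_
        filter_upwards [this] with r hr
        exact expNegInvGlue.zero_of_nonpos hr.le
      · have h2 : inner ℝ (γ s) (V (γ s)) = 0 := by
          rw [real_inner_eq_re_inner ℂ, hS _ h, map_zero]
        rw [h2, mul_zero] at h1
        have h3 : DifferentiableAt ℝ expNegInvGlue (‖γ s‖ ^ 2 - 5 * ε ^ 2 / 8) :=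
          (expNegInvGlue.contDiff (n := 1)).differentiable one_ne_zero _
        exact (h3.hasDerivAt.comp s h1).congr_deriv (mul_zero _)
    have h1 := eq_of_hasDerivAt_zero hT hd ht
    by_contra hlt
    have hlt : ε < ‖γ t‖ := not_le.1 hlt
    have h2 : ε ^ 2 < ‖γ t‖ ^ 2 := by gcongr
    have h3 := eq_of_expNegInvGlue_eq (by nlinarith) h1
    have h4 : ‖γ 0‖ ^ 2 ≤ ε ^ 2 := by gcongr
    linarith
  have hder : ∀ t ∈ Set.Ioo (-T) T,
      HasDerivAt (fun s => f (γ s)) (χ (γ t) * Complex.I * f (γ t)) t := by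
    intro t ht
    have h1 := lt_of_le_of_lt (hball t ht) hε₁
    have h2 := ((hC _ h1).hasFDerivAt.restrictScalars ℝ).comp_hasDerivAt t (hγ t ht)
    rw [← hV _ h1]
    exact h2
  have hnorm : ∀ t ∈ Set.Ioo (-T) T, ‖f (γ t)‖ = η := by
    intro t ht
    have h1 : ‖f (γ t)‖ ^ 2 = ‖f (γ 0)‖ ^ 2 := by
      refine eq_of_hasDerivAt_zero (g := fun s => ‖f (γ s)‖ ^ 2) hT (fun s hs => ?_) ht
      have h2 := (hder s hs).norm_sq
      have h3 : inner ℝ (f (γ s)) (χ (γ s) * Complex.I * f (γ s)) = 0 := by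
        rw [Complex.inner]
        simp
        ring
      rwa [h3, mul_zero] at h2
    rw [h0'] at h1
    have h0η : 0 ≤ η := h0' ▸ norm_nonneg _
    exact (pow_left_inj₀ (norm_nonneg _) h0η two_ne_zero).1 h1
  refine ⟨hball t ht, hnorm t ht, ?_⟩
  have h1 : Complex.exp (-(t * Complex.I)) * f (γ t) =
      Complex.exp (-((0 : ℝ) * Complex.I)) * f (γ 0) := by
    refine eq_of_hasDerivAt_zero (g := fun s : ℝ => Complex.exp (-(s * Complex.I)) * f (γ s)) hT
      (fun s hs => ?_) ht
    have h2 : HasDerivAt (fun s : ℝ => Complex.exp (-(s * Complex.I)))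
        (Complex.exp (-(s * Complex.I)) * -(1 * Complex.I)) s :=
      ((Complex.ofRealCLM.hasDerivAt (x := s)).mul_const Complex.I).neg.cexp
    have h3 := h2.mul (hder s hs)
    rw [hχ _ (hball s hs) (hnorm s hs)] at h3
    refine h3.congr_deriv ?_
    push_cast
    ring
  rw [Complex.exp_neg] at h1
  have h2 := Complex.exp_ne_zero (t * Complex.I)
  field_simp at h1
  simpa using h1

/-- The tube over a circle of radius `η` is locally trivial as soon as `f` has no critical points on
it and its fibres are transverse to the spheres of radius close to `ε`. -/
lemma isLocTrivFib_tube {E : Type} [NormedAddCommGroup E] [InnerProductSpace ℂ E]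
    [FiniteDimensional ℂ E] {f : E → ℂ} {ε₁ ε η : ℝ} (hε : 0 < ε) (hε₁ : ε < ε₁) (hη : 0 < η)
    (hf0 : f 0 = 0)
    (hC : ∀ x, ‖x‖ < ε₁ → ContDiffAt ℂ 2 f x)
    (hreg : ∀ x, ‖x‖ ≤ ε → ‖f x‖ = η → fderiv ℂ f x ≠ 0)
    (htrans : ∀ x, ‖x‖ ≤ ε → ε ^ 2 / 2 ≤ ‖x‖ ^ 2 → ‖f x‖ = η → ∀ μ : ℂ,
      ¬ ∀ v, fderiv ℂ f x v = μ * inner ℂ x v)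
    (p : ({x ∈ Metric.closedBall (0 : E) ε | ‖f x‖ = η} : Set E) → ({w : ℂ | ‖w‖ = η} : Set ℂ))
    (hp : ∀ x, (p x : ℂ) = f x.1) : IsLocTrivFib p := by
  have : CompleteSpace E := FiniteDimensional.complete ℂ E
  obtain ⟨V, ⟨K, hK⟩, ⟨C, hVC⟩, χ, hχ, hV, hS⟩ :=
    exists_lift_field hε hε₁ hη hf0 hC hreg htrans
  obtain ⟨Φ, hΦ0, hΦd, hΦc, hΦi⟩ := exists_flow hK hVC hε.le (show (0 : ℝ) < 7 by norm_num)
  have hdf : ∀ x, ‖x‖ < ε₁ → DifferentiableAt ℂ f x := fun x hx =>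
    (hC x hx).differentiableAt two_ne_zero
  have key : ∀ x ∈ {x ∈ Metric.closedBall (0 : E) ε | ‖f x‖ = η}, ∀ t ∈ Set.Ioo (-7 : ℝ) 7,
      Φ (x, t) ∈ {x ∈ Metric.closedBall (0 : E) ε | ‖f x‖ = η} ∧
        f (Φ (x, t)) = Complex.exp (t * Complex.I) * f x := by
    intro x hx t ht
    have h := curve_in_tube (γ := fun s => Φ (x, s)) hε hε₁ (by norm_num) hdf hχ hV hS (hΦd x hx.1)
      (by rw [hΦ0 x hx.1]; exact mem_closedBall_zero_iff.1 hx.1) (by rw [hΦ0 x hx.1]; exact hx.2) ht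
    simp only [hΦ0 x hx.1] at h
    exact ⟨⟨mem_closedBall_zero_iff.2 h.1, h.2.1⟩, h.2.2⟩
  refine isLocTrivFib_of_flow (Φ := Φ) hη (fun x hx => ?_)
    (fun x hx t ht => (key x hx t ht).1) (fun x hx t ht => (key x hx t ht).2)
    (fun x hx t ht => hΦi x hx.1 t ht (key x hx t ht).1.1) (hΦc.mono ?_) p hp
  · exact (hdf x (lt_of_le_of_lt (mem_closedBall_zero_iff.1 hx.1) hε₁)).continuousAt.continuousWithinAt
  · exact Set.prod_mono (fun x hx => hx.1) Set.Ioo_subset_Icc_self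

end auxiliary

/-! ### The fibration theorem -/

theorem stmt_4 (n : ℕ) (hn : 1 ≤ n)
    (U : Set (EuclideanSpace ℂ (Fin n))) (hU : IsOpen U)
    (h0U : (0 : EuclideanSpace ℂ (Fin n)) ∈ U)
    (f : EuclideanSpace ℂ (Fin n) → ℂ) (hf : DifferentiableOn ℂ f U) (hf0 : f 0 = 0)
    (hfnz : ∀ W ∈ nhds (0 : EuclideanSpace ℂ (Fin n)), ∃ x ∈ W ∩ U, f x ≠ 0) :
    ∃ ε₀ > (0 : ℝ), Metric.closedBall (0 : EuclideanSpace ℂ (Fin n)) ε₀ ⊆ U ∧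
      ∀ ε : ℝ, 0 < ε → ε ≤ ε₀ →
      ∃ η₀ > (0 : ℝ), ∀ η : ℝ, 0 < η → η ≤ η₀ →
        ∃ p : ({x ∈ Metric.closedBall (0 : EuclideanSpace ℂ (Fin n)) ε | ‖f x‖ = η} : Set _) →
            ({w : ℂ | ‖w‖ = η} : Set ℂ),
          (∀ x, (p x : ℂ) = f (x.1 : EuclideanSpace ℂ (Fin n))) ∧
          IsLocTrivFib p := by
  let e := (EuclideanSpace.equiv (Fin n) ℂ)
  -- `f` read in coordinates, on `Fin n → ℂ` with the supremum norm
  let g : (Fin n → ℂ) → ℂ := fun x => f (e.symm x)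
  have hfe : ∀ x, f x = g (e x) := fun x => by simp [g]
  have hfc : ContinuousAt f 0 := (hf.differentiableAt (hU.mem_nhds h0U)).continuousAt
  have hev : ∀ᶠ x in nhds (0 : Fin n → ℂ), e.symm x ∈ U ∧ ‖g x‖ < 1 := by
    have h1 : Filter.Tendsto e.symm (nhds 0) (nhds 0) := by
      simpa using e.symm.continuous.tendsto 0
    refine (h1.eventually (hU.mem_nhds h0U)).and (h1.eventually (p := fun y => ‖f y‖ < 1) ?_)
    exact hfc.norm.eventually_lt continuousAt_const (by simp [hf0])
  obtain ⟨R, hR, hRball⟩ := Metric.eventually_nhds_iff.1 hev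
  have hmem : ∀ x : Fin n → ℂ, (∀ j, ‖x j‖ < R) → e.symm x ∈ U ∧ ‖g x‖ < 1 := fun x hx =>
    hRball (by rw [dist_zero_right]; exact (pi_norm_lt_iff hR).2 hx)
  have hs : ∀ x : Fin n → ℂ, (∀ j, ‖x j‖ < R) → DifferentiableAt ℂ g x := fun x hx =>
    (hf.differentiableAt (hU.mem_nhds (hmem x hx).1)).comp x e.symm.differentiableAt
  have hb : ∀ x : Fin n → ℂ, (∀ j, ‖x j‖ < R) → ‖g x‖ ≤ 1 := fun x hx => (hmem x hx).2.le
  have hg0 : g 0 = 0 := by simp only [g, map_zero, hf0]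
  obtain ⟨r, hr, N, hrad⟩ := radial_estimate hR g hg0 hs hb
  have hcd : ContDiffAt ℂ 2 f 0 := by
    obtain ⟨P, r', hr', hP⟩ := exists_series hR g hs hb
    let L : (Fin n → ℂ) →L[ℂ] (Fin n ⊕ Fin n → ℂ) :=
      ContinuousLinearMap.pi (Sum.elim (fun i => ContinuousLinearMap.proj i) fun _ => 0)
    have h1 : ContDiffAt ℂ 2 (fun x => mev (L (e x)) P.1) 0 := by
      have h2 := contDiffAt_mev 2 P
      have h3 : ContDiffAt ℂ 2 (fun x => L (e x)) 0 := (L.contDiff.comp e.contDiff).contDiffAt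
      refine ContDiffAt.comp (g := fun z => mev z P.1) (f := fun x => L (e x)) 0 ?_ h3
      simpa using h2
    refine h1.congr_of_eventuallyEq ?_
    have h4 : Filter.Tendsto (fun x => L (e x)) (nhds 0) (nhds 0) := by
      have h5 := (L.continuous.comp e.continuous).tendsto 0
      rwa [Function.comp_apply, map_zero, map_zero] at h5
    filter_upwards [h4.eventually (Metric.ball_mem_nhds 0 hr')] with x hx
    rw [(hP _ (mem_ball_zero_iff.1 hx)).1, hfe]
    rfl
  have hcd' := hcd.eventually (by decide)
  obtain ⟨ρ, hρ, hρC⟩ := Metric.eventually_nhds_iff.1 (hcd'.and (hU.mem_nhds h0U))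
  have hnorm : ∀ x, ‖e x‖ ≤ ‖x‖ := fun x =>
    (pi_norm_le_iff_of_nonneg (norm_nonneg x)).2 fun i => PiLp.norm_apply_le x i
  -- The radial estimate in Euclidean terms: `conj (x i)` is `⟪x, e_i⟫`.
  have hest : ∀ x, ‖x‖ < min r ρ → f x ≠ 0 → ∀ μ : ℂ,
      (∀ v, fderiv ℂ f x v = μ * inner ℂ x v) → (‖x‖ ^ 2) ^ N ≤ ‖f x‖ ∧ μ ≠ 0 := by
    intro x hx hfx μ hμ
    have hx1 : ‖x‖ < r := lt_of_lt_of_le hx (min_le_left _ _)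
    have hx2 : ‖x‖ < ρ := lt_of_lt_of_le hx (min_le_right _ _)
    have hd : DifferentiableAt ℂ f x :=
      (hρC (by rwa [dist_zero_right])).1.differentiableAt two_ne_zero
    have hfd : ∀ v, fderiv ℂ g (e x) v = fderiv ℂ f x (e.symm v) := by
      intro v
      have h1 : HasFDerivAt f (fderiv ℂ f x) (e.symm (e x)) := by
        rw [e.symm_apply_apply]; exact hd.hasFDerivAt
      have h2 := h1.comp (e x) e.symm.hasFDerivAt
      have h3 : HasFDerivAt g _ (e x) := h2
      rw [h3.fderiv]
      rfl
    have h := hrad (e x) ((hnorm x).trans_lt hx1) (by rwa [← hfe]) μ fun i => by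
      rw [hfd, hμ]
      congr 1
      exact (EuclideanSpace.inner_single_right i (1 : ℂ) x).trans (one_mul _)
    rw [EuclideanSpace.norm_sq_eq, hfe]
    exact h
  have hε₁ : 0 < min r ρ := lt_min hr hρ
  refine ⟨min r ρ / 2, by linarith, fun x hx => ?_, fun ε hε hεle => ?_⟩
  · have h1 : ‖x‖ ≤ min r ρ / 2 := mem_closedBall_zero_iff.1 hx
    have h2 := min_le_right r ρ
    exact (hρC (by rw [dist_zero_right]; linarith)).2
  have hεlt : ε < min r ρ := by linarith
  have hpos : 0 < (ε ^ 2 / 2) ^ N := by positivity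
  -- On the tube, transversality fails only where `|f| ≥ (‖x‖²)^N`, which is excluded for
  -- `ε²/2 ≤ ‖x‖²` as soon as `η < (ε²/2)^N`.
  refine ⟨(ε ^ 2 / 2) ^ N / 2, by linarith, fun η hη hηle => ?_⟩
  refine ⟨fun x => ⟨f x.1, x.2.2⟩, fun x => rfl, ?_⟩
  have hne : ∀ x, ‖f x‖ = η → f x ≠ 0 := fun x hx h => by
    rw [h, norm_zero] at hx
    exact hη.ne hx
  refine isLocTrivFib_tube hε hεlt hη hf0
    (fun x hx => (hρC (by rw [dist_zero_right]; exact hx.trans_le (min_le_right _ _))).1)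
    (fun x hx hfx h => ?_) (fun x hx hx2 hfx μ hμ => ?_) _ fun x => rfl
  · exact (hest x (hx.trans_lt hεlt) (hne x hfx) 0 fun v => by simp [h]).2 rfl
  · have h1 := (hest x (hx.trans_lt hεlt) (hne x hfx) μ hμ).1
    have h2 : (ε ^ 2 / 2) ^ N ≤ (‖x‖ ^ 2) ^ N := by gcongr
    linarith
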